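/- arXiv:1012.5591 — 2 statements merged into one kernel-verified Lean document; each statement's English description precedes it below -/
import Mathlib

section
/- There exists a constant C > 0 such that for every u ∈ C_c^∞(B) with u not identically zero, (1/2)∫_B |∇u|² dx − (1/2)∫_B u(x)²/(1−|x|²)² dx − 8π·log(∫_B e^{u(x)} dx) ≥ −C. -/
/-!
The substitution `u = √(1-|x|²) v` (`ground_state`) turns the Hardy functional of `u` into the
quadratic form `bilQ v v = ∫_B (1-|x|²)|∇v|² + v²` of the operator `opA = -div((1-|x|²)∇) + 1`.
Replacing `v` by `√(v²+1) - 1` does not increase the form and changes `log ∫ e^u` by at most `1`,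
so `v ≥ 0` may be assumed (`hmt_signed`).

For `v ≥ 0` the inequality is obtained by duality (`hmt_nonneg`). Let `Z = ∫_B e^u` and let
`ρ = e^u / Z` be the Gibbs density, so that `log Z = ∫ ρ u - ∫ ρ log ρ`. An explicit kernel
`psi ε y`, close to Green's function of `opA` with pole `y`, satisfies
`bilQ v (psi ε y) ≥ u y - o(1)` as `ε → 0` (`bilQ_psi_ge`) and
`bilQ (psi ε z) (psi ε y) ≤ -(1/2π) log |y-z| + C` (`bilQ_psi_psi_le`). Young's inequality for
`bilQ`, applied to `v` and to `8π` times the `ρ`-average of the kernels (`bilQ_dual`), gives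
`½ bilQ v v ≥ 8π ∫ ρ u + 16π ∬ log |y-z| ρ(y) ρ(z) dy dz - C`. The logarithmic
Hardy–Littlewood–Sobolev inequality `-∬ log |y-z| ρ(y) ρ(z) dy dz ≤ ½ ∫ ρ log ρ + C` (`log_HLS`)
bounds the right-hand side below by `8π (∫ ρ u - ∫ ρ log ρ) - C = 8π log Z - C`.

The inequality `log_HLS` needs the sharp factor `½` but no sharp additive constant, and is proved on
randomly shifted dyadic squares. Up to an additive constant, `-log |y-z|` is at most `log 2` times
the expected number of generations in which `y` and `z` share a square (`log_kernel_le`,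
`le_integral_sameInd`). For a fixed grid, the expectation of this number under `ρ ⊗ ρ` is a sum of
squares of masses of cells. It is compared with the entropy by following `∑ lyap(mass)` down the
tree (`tree_estimate`): `lyap` differs from `-m log m` by bounded amounts of mass, and one binary
splitting of a cell of mass `m` increases it by at most `log 2 · (m - m²)` (`lyap_split`). Each
generation consists of two binary splittings, which is where the factor `½` comes from. Jensen's
inequality (`cell_entropy`) passes from cell masses to `ρ`.
-/

open MeasureTheory Real Filter

noncomputable section

/-- `ℝ²` as a Euclidean space. -/
abbrev E2 : Type := EuclideanSpace ℝ (Fin 2)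

/-- The open unit disc in `ℝ²`. -/
def B2 : Set E2 := Metric.ball 0 1

/-- `u ∈ C_c^∞(B)`: a smooth function with compact support contained in the open unit disc. -/
def IsTest (u : E2 → ℝ) : Prop :=
  ContDiff ℝ (⊤ : ℕ∞) u ∧ HasCompactSupport u ∧ tsupport u ⊆ B2

/-- The Hardy functional `H(u) = ∫_B |∇u|² − ∫_B u²/(1−|x|²)²`. -/
def H (u : E2 → ℝ) : ℝ :=
  (∫ x in B2, ‖gradient u x‖ ^ 2) - ∫ x in B2, (u x) ^ 2 / (1 - ‖x‖ ^ 2) ^ 2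

/-! ### A splitting inequality for entropy -/

/-- The function of the mass of a cell that is followed down the dyadic tree: the entropy `-m log m`
with corrections making it satisfy the splitting inequality `lyap_split`. -/
def lyap (m : ℝ) : ℝ := negMulLog m - negMulLog (1 - m) + 3 / 2 * m ^ 2

lemma log_one_add_le (x x0 : ℝ) (hx : 0 ≤ x) (hx0 : 0 ≤ x0) :
    Real.log (1 + x) ≤ Real.log (1 + x0) + (x - x0) / (1 + x0) := by
  have h := Real.log_le_sub_one_of_pos (x := (1 + x) / (1 + x0)) (by positivity)
  rw [Real.log_div (by positivity) (by positivity)] at h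
  have : (1 + x) / (1 + x0) - 1 = (x - x0) / (1 + x0) := by field_simp; ring
  linarith

lemma split_aux (β r : ℝ) (hβ : 0 < β) (hr : 0 ≤ r) (hr1 : r ≤ 1) :
    Real.log (1 + r * β) + β * Real.log (1 + r / β) ≤
      Real.log 2 * r * (1 + β) + β * (1 - r) := by
  have l1 := Real.log_two_gt_d9
  have l2 := Real.log_two_lt_d9
  rcases le_total (1 / 4) β with h | h
  · have h1 := log_one_add_le (r * β) 1 (by positivity) (by norm_num)
    have h2 := log_one_add_le (r / β) 1 (by positivity) (by norm_num)
    have h3 := mul_le_mul_of_nonneg_left h2 hβ.le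
    have h4 : β * (Real.log (1 + 1) + (r / β - 1) / (1 + 1)) = β * Real.log 2 + (r - β) / 2 := by
      norm_num; field_simp
    rw [h4] at h3
    norm_num at h1
    have h5 : (1 + β) * (Real.log 2 - 1 / 2) ≤ β := by nlinarith
    have h6 := mul_le_mul_of_nonneg_right h5 (sub_nonneg.2 hr1)
    nlinarith
  · have h1 := log_one_add_le (r * β) 0 (by positivity) (by norm_num)
    have h2 := log_one_add_le (r / β) 3 (by positivity) (by norm_num)
    have h3 := mul_le_mul_of_nonneg_left h2 hβ.le
    have e : Real.log (1 + 3) = 2 * Real.log 2 := by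
      rw [show (1 + 3 : ℝ) = 2 ^ 2 by norm_num, Real.log_pow]; norm_num
    have h4 : β * (Real.log (1 + 3) + (r / β - 3) / (1 + 3)) =
        β * (2 * Real.log 2) + (r - 3 * β) / 4 := by
      rw [e]; field_simp; ring
    rw [h4] at h3
    norm_num at h1
    nlinarith [mul_nonneg hr (sub_nonneg.2 h), mul_nonneg hr hβ.le,
      mul_nonneg hβ.le (sub_nonneg.2 hr1), mul_nonneg hr (sub_nonneg.2 l1.le), mul_nonneg (mul_nonneg hr hβ.le) (sub_nonneg.2 l1.le), mul_nonneg hβ.le (sub_nonneg.2 l2.le)]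

/-- The splitting inequality in the ordered case. -/
lemma lyap_split_aux (a b : ℝ) (hb : 0 < b) (hba : b ≤ a) (h : a + b ≤ 1) :
    lyap a + lyap b ≤ lyap (a + b) + Real.log 2 * ((a + b) - (a + b) ^ 2) := by
  have ha : 0 < a := by linarith
  obtain ⟨r, hr⟩ : ∃ r, r = 1 - (a + b) := ⟨_, rfl⟩
  have hr0 : 0 ≤ r := by linarith
  have hr1 : r ≤ 1 := by linarith
  have e1 : 1 - a = b + r := by linarith
  have e2 : 1 - b = a + r := by linarith
  have e3 : 1 - (a + b) = r := by linarith
  have key := split_aux (b / a) r (by positivity) hr0 hr1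
  have key2 := mul_le_mul_of_nonneg_left key ha.le
  have i1 : 1 + r * (b / a) = (a + b) * (a + r) / a := by
    field_simp; nlinarith
  have i2 : 1 + r / (b / a) = (a + b) * (b + r) / b := by
    field_simp; nlinarith
  rw [i1, i2, Real.log_div (by positivity) (by positivity), Real.log_div (by positivity) (by positivity),
    Real.log_mul (by positivity) (by positivity), Real.log_mul (by positivity) (by positivity)] at key2
  have i3 : a * (Real.log (a + b) + Real.log (a + r) - Real.log a
      + b / a * (Real.log (a + b) + Real.log (b + r) - Real.log b)) =
      a * (Real.log (a + b) + Real.log (a + r) - Real.log a)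
      + b * (Real.log (a + b) + Real.log (b + r) - Real.log b) := by field_simp
  have i4 : a * (Real.log 2 * r * (1 + b / a) + b / a * (1 - r)) =
      Real.log 2 * r * (a + b) + b * (a + b) := by
    field_simp; rw [hr]; ring
  rw [i3, i4] at key2
  have hthird : r * (Real.log (a + r) + Real.log (b + r) - Real.log r) ≤ a * b := by
    rcases hr0.eq_or_lt with h0 | h0
    · rw [← h0]; simp; positivity
    · have := Real.log_le_sub_one_of_pos (x := (a + r) * (b + r) / r) (by positivity)
      rw [Real.log_div (by positivity) (by positivity), Real.log_mul (by positivity) (by positivity)] at this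
      have h2 := mul_le_mul_of_nonneg_left this h0.le
      have : r * ((a + r) * (b + r) / r - 1) = a * b := by
        have : (a + r) * (b + r) = a * b + r := by rw [hr]; ring
        rw [this]; field_simp; ring
      linarith
  unfold lyap negMulLog
  rw [e1, e2, e3]
  have : b * (a + b) ≤ 2 * a * b := by nlinarith
  have e4 : (a + b) - (a + b) ^ 2 = r * (a + b) := by rw [hr]; ring
  rw [e4]
  nlinarith

/-- Splitting a cell of mass `a + b` into cells of masses `a` and `b` increases `lyap` by at most
`log 2 · ((a+b) - (a+b)²)`. The first term is the largest possible gain of entropy in a binary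
splitting; the saving `(a+b)²` is what later pays for the collisions of two independent points. -/
lemma lyap_split (a b : ℝ) (ha : 0 ≤ a) (hb : 0 ≤ b) (h : a + b ≤ 1) :
    lyap a + lyap b ≤ lyap (a + b) + Real.log 2 * ((a + b) - (a + b) ^ 2) := by
  have hl : 0 ≤ Real.log 2 := Real.log_nonneg (by norm_num)
  have l0 : lyap 0 = 0 := by simp [lyap]
  rcases ha.eq_or_lt with h0 | h0
  · subst h0; rw [l0, zero_add, zero_add]
    have := mul_nonneg hl (show 0 ≤ b - b ^ 2 by nlinarith)
    linarith
  rcases hb.eq_or_lt with h1 | h1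
  · subst h1; rw [l0, add_zero, add_zero]
    have := mul_nonneg hl (show 0 ≤ a - a ^ 2 by nlinarith)
    linarith
  rcases le_total a b with h2 | h2
  · have := lyap_split_aux b a h0 h2 (by linarith)
    rw [add_comm b a] at this
    linarith
  · exact lyap_split_aux a b h1 h2 h

lemma lyap_le (m : ℝ) (h0 : 0 ≤ m) (h1 : m ≤ 1) : lyap m ≤ 5 / 2 := by
  have a1 : negMulLog m ≤ 1 := by
    rcases h0.eq_or_lt with h | h
    · simp [← h]
    · have := mul_le_mul_of_nonneg_left (Real.one_sub_inv_le_log_of_pos h) h.le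
      have e : m * (1 - m⁻¹) = m - 1 := by field_simp
      unfold negMulLog; nlinarith
  have a2 := Real.negMulLog_nonneg (x := 1 - m) (by linarith) (by linarith)
  unfold lyap; nlinarith

lemma le_lyap (m : ℝ) (h1 : m ≤ 1) : negMulLog m - m ≤ lyap m := by
  have a1 : negMulLog (1 - m) ≤ m := by
    rcases h1.eq_or_lt with h | h
    · simp [h]
    · have h' : 0 < 1 - m := by linarith
      have := mul_le_mul_of_nonneg_left (Real.one_sub_inv_le_log_of_pos h') h'.le
      have e : (1 - m) * (1 - (1 - m)⁻¹) = -m := by field_simp; ring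
      unfold negMulLog; nlinarith
  unfold lyap; nlinarith [sq_nonneg m]

lemma sum_range_double (N : ℕ) (f : ℕ → ℝ) :
    ∑ i ∈ Finset.range (2 * N), f i = ∑ i ∈ Finset.range N, (f (2 * i) + f (2 * i + 1)) := by
  induction N with
  | zero => simp
  | succ n ih => rw [show 2 * (n + 1) = 2 * n + 1 + 1 by ring, Finset.sum_range_succ,
      Finset.sum_range_succ, ih, Finset.sum_range_succ]; ring

/-! ### Partitions along a dyadic tree -/

/-- Mass of the cell of index `(i, j)` of the partition given by the labels `f`, `g`. -/
def cellMass (ν : Measure E2) (f g : E2 → ℕ) (i j : ℕ) : ℝ := ν.real {x | f x = i ∧ g x = j}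

lemma cellMass_swap (ν : Measure E2) (f g : E2 → ℕ) (i j : ℕ) :
    cellMass ν f g i j = cellMass ν g f j i := by
  unfold cellMass; congr 1; ext x; simp [and_comm]

lemma measurableSet_cell {f g : E2 → ℕ} (hf : Measurable f) (hg : Measurable g) (i j : ℕ) :
    MeasurableSet {x | f x = i ∧ g x = j} :=
  (hf (measurableSet_singleton i)).inter (hg (measurableSet_singleton j))

lemma cellMass_half (ν : Measure E2) [IsProbabilityMeasure ν] {f f' g : E2 → ℕ}
    (hf' : Measurable f') (hg : Measurable g) (h : ∀ x, f x = f' x / 2) (i j : ℕ) :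
    cellMass ν f g i j = cellMass ν f' g (2 * i) j + cellMass ν f' g (2 * i + 1) j := by
  unfold cellMass
  rw [← measureReal_union _ (measurableSet_cell hf' hg _ _)]
  · congr 1; ext x; simp only [Set.mem_ofPred_eq, Set.mem_union, h]; omega
  · rw [Set.disjoint_left]; rintro x ⟨h1, _⟩ ⟨h2, _⟩; omega

/-- `lyap_split` summed over the cells when the first label is refined dyadically. -/
lemma sum_lyap_refine (ν : Measure E2) [IsProbabilityMeasure ν] {f f' g : E2 → ℕ}
    (hf' : Measurable f') (hg : Measurable g) (h : ∀ x, f x = f' x / 2) (N K : ℕ) :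
    ∑ i ∈ Finset.range (2 * N), ∑ j ∈ Finset.range K, lyap (cellMass ν f' g i j) ≤
      ∑ i ∈ Finset.range N, ∑ j ∈ Finset.range K, (lyap (cellMass ν f g i j)
        + Real.log 2 * (cellMass ν f g i j - cellMass ν f g i j ^ 2)) := by
  rw [sum_range_double]
  refine Finset.sum_le_sum fun i _ => ?_
  rw [← Finset.sum_add_distrib]
  refine Finset.sum_le_sum fun j _ => ?_
  have e := cellMass_half ν hf' hg h i j
  have := lyap_split (cellMass ν f' g (2 * i) j) (cellMass ν f' g (2 * i + 1) j)
    measureReal_nonneg measureReal_nonneg (by rw [← e]; exact measureReal_le_one)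
  rwa [← e] at this

lemma sum_sq_refine (ν : Measure E2) [IsProbabilityMeasure ν] {f f' g : E2 → ℕ}
    (hf' : Measurable f') (hg : Measurable g) (h : ∀ x, f x = f' x / 2) (N K : ℕ) :
    ∑ i ∈ Finset.range (2 * N), ∑ j ∈ Finset.range K, (cellMass ν f' g i j) ^ 2 ≤
      ∑ i ∈ Finset.range N, ∑ j ∈ Finset.range K, (cellMass ν f g i j) ^ 2 := by
  rw [sum_range_double]
  refine Finset.sum_le_sum fun i _ => ?_
  rw [← Finset.sum_add_distrib]
  refine Finset.sum_le_sum fun j _ => ?_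
  rw [cellMass_half ν hf' hg h i j]
  have h1 : 0 ≤ cellMass ν f' g (2 * i) j := measureReal_nonneg
  have h2 : 0 ≤ cellMass ν f' g (2 * i + 1) j := measureReal_nonneg
  nlinarith [mul_nonneg h1 h2]

lemma integral_eq_sum_cells (μ : Measure E2) {f g : E2 → ℕ} (hf : Measurable f) (hg : Measurable g)
    (N K : ℕ) (hN : ∀ᵐ x ∂μ, f x < N) (hK : ∀ᵐ x ∂μ, g x < K) (F : E2 → ℝ)
    (hF : Integrable F μ) :
    ∫ x, F x ∂μ = ∑ i ∈ Finset.range N, ∑ j ∈ Finset.range K,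
      ∫ x in {x | f x = i ∧ g x = j}, F x ∂μ := by
  have : ∀ᵐ x ∂μ, F x = ∑ i ∈ Finset.range N, ∑ j ∈ Finset.range K,
      ({x | f x = i ∧ g x = j} : Set E2).indicator F x := by
    filter_upwards [hN, hK] with x h1 h2
    rw [Finset.sum_eq_single (f x), Finset.sum_eq_single (g x)]
    · simp
    · intro b _ hb; exact Set.indicator_of_notMem (by simp [hb.symm]) _
    · intro hb; simp at hb; omega
    · intro b _ hb; exact Finset.sum_eq_zero fun j _ => Set.indicator_of_notMem (by simp [hb.symm]) _
    · intro hb; simp at hb; omega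
  rw [integral_congr_ae this, integral_finsetSum]
  · refine Finset.sum_congr rfl fun i _ => ?_
    rw [integral_finsetSum]
    · exact Finset.sum_congr rfl fun j _ => integral_indicator (measurableSet_cell hf hg i j)
    · exact fun j _ => hF.indicator (measurableSet_cell hf hg i j)
  · exact fun i _ => integrable_finsetSum _ fun j _ => hF.indicator (measurableSet_cell hf hg i j)

lemma sum_cellMass (ν : Measure E2) [IsProbabilityMeasure ν] {f g : E2 → ℕ} (hf : Measurable f)
    (hg : Measurable g) (N K : ℕ) (hN : ∀ᵐ x ∂ν, f x < N) (hK : ∀ᵐ x ∂ν, g x < K) :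
    ∑ i ∈ Finset.range N, ∑ j ∈ Finset.range K, cellMass ν f g i j = 1 := by
  have := integral_eq_sum_cells ν hf hg N K hN hK (fun _ => 1) (integrable_const _)
  simp only [integral_const, smul_eq_mul, mul_one, measureReal_restrict_apply_univ] at this
  rw [← show ν.real Set.univ = 1 by simp, this]; rfl

open Classical in
/-- The sum of the squared cell masses is the probability that two independent points share a cell. -/
lemma sum_sq_cellMass (ν : Measure E2) [IsProbabilityMeasure ν] {f g : E2 → ℕ} (hf : Measurable f)
    (hg : Measurable g) (N K : ℕ) (hN : ∀ᵐ x ∂ν, f x < N) (hK : ∀ᵐ x ∂ν, g x < K) :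
    ∑ i ∈ Finset.range N, ∑ j ∈ Finset.range K, cellMass ν f g i j ^ 2 =
      ∫ x, ∫ y, (if f y = f x ∧ g y = g x then (1 : ℝ) else 0) ∂ν ∂ν := by
  have e : ∀ x, ∫ y, (if f y = f x ∧ g y = g x then (1 : ℝ) else 0) ∂ν
      = cellMass ν f g (f x) (g x) := by
    intro x
    have := integral_indicator_one (μ := ν) (measurableSet_cell hf hg (f x) (g x))
    rw [cellMass, ← this]
    refine integral_congr_ae (Eventually.of_forall fun y => ?_)
    simp [Set.indicator_apply]
  simp_rw [e]
  have hm : Measurable fun x => cellMass ν f g (f x) (g x) :=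
    (measurable_from_prod_countable_left (f := fun p : ℕ × ℕ => cellMass ν f g p.1 p.2)
      (fun _ => measurable_of_countable _)).comp (hf.prodMk hg)
  have hi : Integrable (fun x => cellMass ν f g (f x) (g x)) ν := by
    refine Integrable.of_bound hm.aestronglyMeasurable 1 (Eventually.of_forall fun x => ?_)
    rw [cellMass, Real.norm_of_nonneg measureReal_nonneg]; exact measureReal_le_one
  rw [integral_eq_sum_cells ν hf hg N K hN hK _ hi]
  refine Finset.sum_congr rfl fun i _ => Finset.sum_congr rfl fun j _ => ?_
  rw [setIntegral_congr_fun (g := fun _ => cellMass ν f g i j) (measurableSet_cell hf hg i j)]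
  · simp [sq, cellMass]
  · rintro x ⟨h1, h2⟩; simp [h1, h2]

/-- Sum of `lyap_split` over the tree, with two splittings (one per coordinate) in each generation:
the sum of `lyap` in generation `n`, plus `2 log 2` times the total collision probability, is
bounded by the maximal entropy `2n log 2`, up to a constant. -/
lemma tree_estimate (ν : Measure E2) [IsProbabilityMeasure ν] (f g : ℕ → E2 → ℕ)
    (hf : ∀ k, Measurable (f k)) (hg : ∀ k, Measurable (g k))
    (hff : ∀ k x, f k x = f (k + 1) x / 2) (hgg : ∀ k x, g k x = g (k + 1) x / 2)
    (hfN : ∀ k, ∀ᵐ x ∂ν, f k x < 4 * 2 ^ k) (hgN : ∀ k, ∀ᵐ x ∂ν, g k x < 4 * 2 ^ k) (n : ℕ) :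
    (∑ i ∈ Finset.range (4 * 2 ^ n), ∑ j ∈ Finset.range (4 * 2 ^ n),
        lyap (cellMass ν (f n) (g n) i j))
      + 2 * Real.log 2 * ∑ k ∈ Finset.range n, ∑ i ∈ Finset.range (4 * 2 ^ (k + 1)),
          ∑ j ∈ Finset.range (4 * 2 ^ (k + 1)), cellMass ν (f (k + 1)) (g (k + 1)) i j ^ 2
      ≤ 40 + 2 * n * Real.log 2 := by
  induction n with
  | zero =>
    simp only [pow_zero, mul_one, Finset.range_zero, Finset.sum_empty, mul_zero, add_zero,
      Nat.cast_zero, zero_mul]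
    calc _ ≤ ∑ i ∈ Finset.range 4, ∑ j ∈ Finset.range 4, (5 / 2 : ℝ) :=
          Finset.sum_le_sum fun i _ => Finset.sum_le_sum fun j _ =>
            lyap_le _ measureReal_nonneg measureReal_le_one
      _ = 40 := by norm_num
  | succ k ih =>
    have hl : 0 ≤ Real.log 2 := Real.log_nonneg (by norm_num)
    rw [Finset.sum_range_succ]
    have e : 4 * 2 ^ (k + 1) = 2 * (4 * 2 ^ k) := by ring
    have s1 := sum_lyap_refine ν (hf (k + 1)) (hg k) (hff k) (4 * 2 ^ k) (4 * 2 ^ k)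
    have s2 := sum_lyap_refine ν (hg (k + 1)) (hf (k + 1)) (hgg k) (4 * 2 ^ k) (4 * 2 ^ (k + 1))
    have q1 := sum_sq_refine ν (hf (k + 1)) (hg k) (hff k) (4 * 2 ^ k) (4 * 2 ^ k)
    have q2 := sum_sq_refine ν (hg (k + 1)) (hf (k + 1)) (hgg k) (4 * 2 ^ k) (4 * 2 ^ (k + 1))
    rw [← e] at s1 s2 q1 q2
    rw [Finset.sum_comm] at s2 q2
    simp_rw [fun i j => cellMass_swap ν (g (k + 1)) (f (k + 1)) j i] at s2 q2
    rw [Finset.sum_comm (s := Finset.range (4 * 2 ^ k))] at s2 q2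
    simp_rw [fun i j => cellMass_swap ν (g k) (f (k + 1)) j i] at s2 q2
    simp_rw [Finset.sum_add_distrib, mul_sub, Finset.sum_sub_distrib, ← Finset.mul_sum] at s1 s2
    rw [sum_cellMass ν (hf k) (hg k) _ _ (hfN k) (hgN k)] at s1
    rw [sum_cellMass ν (hf (k + 1)) (hg k) _ _ (hfN (k + 1)) (hgN k)] at s2
    have q2' := mul_le_mul_of_nonneg_left q2 hl
    have q1' := mul_le_mul_of_nonneg_left q1 hl
    push_cast
    linarith

/-! ### Randomly shifted dyadic grids -/

/-- Label of the dyadic interval of length `2⁻ᵏ`, in the grid shifted by `θ`, containing `t`. -/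
def dyLabel (θ : ℝ) (k : ℕ) (t : ℝ) : ℕ := ⌊(2 : ℝ) ^ k * (t + 1 + θ)⌋₊

lemma dyLabel_half (θ : ℝ) (k : ℕ) (t : ℝ) : dyLabel θ k t = dyLabel θ (k + 1) t / 2 := by
  unfold dyLabel
  have := Nat.floor_div_natCast ((2 : ℝ) ^ (k + 1) * (t + 1 + θ)) 2
  rw [← this]; congr 1; push_cast; rw [pow_succ]; ring

lemma measurable_dyLabel (k : ℕ) : Measurable fun p : ℝ × ℝ => dyLabel p.1 k p.2 := by
  unfold dyLabel
  exact Nat.measurable_floor.comp (by fun_prop)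

lemma dyLabel_lt (θ : ℝ) (hθ1 : θ ≤ 1) (k : ℕ) (t : ℝ) (ht : |t| ≤ 1) :
    dyLabel θ k t < 4 * 2 ^ k := by
  unfold dyLabel
  have h2 : (0 : ℝ) < 2 ^ k := by positivity
  have := (abs_le.1 ht).2
  rw [Nat.floor_lt' (by positivity)]
  push_cast; nlinarith

lemma coord_le (x : E2) (i : Fin 2) : |x i| ≤ ‖x‖ := PiLp.norm_apply_le x i

lemma intervalIntegrable_of_bdd (f : ℝ → ℝ) (hf : Measurable f) (C : ℝ)
    (hC : ∀ θ ∈ Set.Icc (0 : ℝ) 1, |f θ| ≤ C) : IntervalIntegrable f volume 0 1 := by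
  rw [intervalIntegrable_iff_integrableOn_Ioc_of_le zero_le_one]
  refine Measure.integrableOn_of_bounded (M := C) (by simp) hf.aestronglyMeasurable ?_
  exact (ae_restrict_iff' measurableSet_Ioc).2
    (Eventually.of_forall fun θ hθ => hC θ ⟨hθ.1.le, hθ.2⟩)

lemma integral_fract_shift (k : ℕ) (t : ℝ) :
    ∫ θ in (0 : ℝ)..1, Int.fract ((2 : ℝ) ^ k * (t + 1 + θ)) =
      ∫ θ in (0 : ℝ)..1, Int.fract ((2 : ℝ) ^ k * θ) := by
  have hp : Function.Periodic (fun θ : ℝ => Int.fract ((2 : ℝ) ^ k * θ)) 1 := by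
    intro θ
    have : (2 : ℝ) ^ k * (θ + 1) = 2 ^ k * θ + ((2 ^ k : ℕ) : ℝ) := by push_cast; ring
    simp only [this, Int.fract_add_natCast]
  have := hp.intervalIntegral_add_eq (t + 1) 0
  rw [zero_add] at this
  rw [← this]
  have h := intervalIntegral.integral_comp_add_left (a := 0) (b := 1)
    (fun θ : ℝ => Int.fract ((2 : ℝ) ^ k * θ)) (t + 1)
  rw [h]; simp

lemma integral_floor_sub (k : ℕ) (a b : ℝ) :
    ∫ θ in (0 : ℝ)..1, ((⌊(2 : ℝ) ^ k * (b + 1 + θ)⌋ : ℝ) - ⌊(2 : ℝ) ^ k * (a + 1 + θ)⌋) =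
      2 ^ k * (b - a) := by
  have hi : ∀ t : ℝ, IntervalIntegrable (fun θ => Int.fract ((2 : ℝ) ^ k * (t + 1 + θ)))
      volume 0 1 := by
    intro t
    refine intervalIntegrable_of_bdd _ (measurable_fract.comp (by fun_prop)) 1 fun θ _ => ?_
    rw [abs_of_nonneg (Int.fract_nonneg _)]; exact (Int.fract_lt_one _).le
  have e : ∀ θ : ℝ, ((⌊(2 : ℝ) ^ k * (b + 1 + θ)⌋ : ℝ) - ⌊(2 : ℝ) ^ k * (a + 1 + θ)⌋) =
      2 ^ k * (b - a) - (Int.fract ((2 : ℝ) ^ k * (b + 1 + θ))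
        - Int.fract ((2 : ℝ) ^ k * (a + 1 + θ))) := by
    intro θ; unfold Int.fract; ring
  simp_rw [e]
  rw [intervalIntegral.integral_sub (by simp) ((hi b).sub (hi a)),
    intervalIntegral.integral_sub (hi b) (hi a), integral_fract_shift, integral_fract_shift]
  simp

/-- Separation indicator of `a` and `b` at level `k`. -/
def sepInd (θ : ℝ) (k : ℕ) (a b : ℝ) : ℝ := if dyLabel θ k a = dyLabel θ k b then 0 else 1

lemma measurable_sepInd (k : ℕ) : Measurable fun p : ℝ × ℝ × ℝ => sepInd p.1 k p.2.1 p.2.2 := by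
  unfold sepInd
  refine Measurable.ite (measurableSet_eq_fun ?_ ?_) measurable_const measurable_const
  · exact (measurable_dyLabel k).comp (measurable_fst.prodMk measurable_snd.fst)
  · exact (measurable_dyLabel k).comp (measurable_fst.prodMk measurable_snd.snd)

lemma sepInd_mem (θ : ℝ) (k : ℕ) (a b : ℝ) : 0 ≤ sepInd θ k a b ∧ sepInd θ k a b ≤ 1 := by
  unfold sepInd; split_ifs <;> norm_num

lemma sepInd_comm (θ : ℝ) (k : ℕ) (a b : ℝ) : sepInd θ k a b = sepInd θ k b a := by
  unfold sepInd; simp [eq_comm]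

lemma intervalIntegrable_sepInd (k : ℕ) (a b : ℝ) :
    IntervalIntegrable (fun θ => sepInd θ k a b) volume 0 1 := by
  refine intervalIntegrable_of_bdd _
    ((measurable_sepInd k).comp (measurable_id.prodMk (measurable_const (a := (a, b))))) 1
    fun θ _ => ?_
  rw [abs_of_nonneg (sepInd_mem ..).1]; exact (sepInd_mem ..).2

lemma integral_sepInd_le_aux (k : ℕ) (a b : ℝ) (ha : |a| ≤ 1) (hb : |b| ≤ 1) (hab : a ≤ b) :
    ∫ θ in (0 : ℝ)..1, sepInd θ k a b ≤ 2 ^ k * (b - a) := by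
  rw [← integral_floor_sub k a b]
  have hfl : ∀ θ : ℝ, 0 ≤ θ → ∀ t : ℝ, |t| ≤ 1 →
      (⌊(2 : ℝ) ^ k * (t + 1 + θ)⌋ : ℤ) = (dyLabel θ k t : ℤ) := by
    intro θ hθ t ht
    have := (abs_le.1 ht).1
    exact (Int.natCast_floor_eq_floor (mul_nonneg (by positivity) (by linarith))).symm
  refine intervalIntegral.integral_mono_on zero_le_one (intervalIntegrable_sepInd k a b) ?_ ?_
  · refine intervalIntegrable_of_bdd _ ?_ (8 * 2 ^ k) fun θ hθ => ?_
    · have m : ∀ t : ℝ, Measurable fun θ : ℝ => (⌊(2 : ℝ) ^ k * (t + 1 + θ)⌋ : ℝ) := fun t =>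
        (measurable_of_countable (fun n : ℤ => (n : ℝ))).comp (Int.measurable_floor.comp (by fun_prop))
      exact (m b).sub (m a)
    · rw [hfl θ hθ.1 a ha, hfl θ hθ.1 b hb]
      have h1 : (dyLabel θ k a : ℝ) < 4 * 2 ^ k := by exact_mod_cast dyLabel_lt θ hθ.2 k a ha
      have h2 : (dyLabel θ k b : ℝ) < 4 * 2 ^ k := by exact_mod_cast dyLabel_lt θ hθ.2 k b hb
      have h3 : (0 : ℝ) ≤ dyLabel θ k a := by positivity
      have h4 : (0 : ℝ) ≤ dyLabel θ k b := by positivity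
      rw [abs_le]; push_cast; constructor <;> linarith
  · intro θ hθ
    rw [hfl θ hθ.1 a ha, hfl θ hθ.1 b hb]
    have hmono : dyLabel θ k a ≤ dyLabel θ k b := by
      unfold dyLabel; gcongr
    unfold sepInd
    split_ifs with h
    · simp [h]
    · have : dyLabel θ k a + 1 ≤ dyLabel θ k b := by omega
      have : (dyLabel θ k a : ℝ) + 1 ≤ dyLabel θ k b := by exact_mod_cast this
      push_cast; linarith

/-- Over a uniform random shift, two points are separated at scale `2⁻ᵏ` with probability at most
their distance measured in that scale. -/
lemma integral_sepInd_le (k : ℕ) (a b : ℝ) (ha : |a| ≤ 1) (hb : |b| ≤ 1) :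
    ∫ θ in (0 : ℝ)..1, sepInd θ k a b ≤ 2 ^ k * |a - b| := by
  rcases le_total a b with h | h
  · rw [abs_sub_comm, abs_of_nonneg (sub_nonneg.2 h)]; exact integral_sepInd_le_aux k a b ha hb h
  · rw [abs_of_nonneg (sub_nonneg.2 h)]; simp_rw [sepInd_comm _ k a b]
    exact integral_sepInd_le_aux k b a hb ha h

/-- Indicator of lying in a common dyadic square at level `k`. -/
def sameInd (θ : ℝ) (k : ℕ) (x y : E2) : ℝ :=
  if dyLabel θ k (y 0) = dyLabel θ k (x 0) ∧ dyLabel θ k (y 1) = dyLabel θ k (x 1) then 1 else 0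

lemma sameInd_mem (θ : ℝ) (k : ℕ) (x y : E2) : 0 ≤ sameInd θ k x y ∧ sameInd θ k x y ≤ 1 := by
  unfold sameInd; split_ifs <;> norm_num

lemma measurable_coord (i : Fin 2) : Measurable fun x : E2 => x i := by fun_prop

lemma measurable_sameInd (k : ℕ) :
    Measurable fun p : ℝ × E2 × E2 => sameInd p.1 k p.2.1 p.2.2 := by
  unfold sameInd
  have h : ∀ i : Fin 2, MeasurableSet {p : ℝ × E2 × E2 |
      dyLabel p.1 k (p.2.2 i) = dyLabel p.1 k (p.2.1 i)} := fun i =>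
    measurableSet_eq_fun
      ((measurable_dyLabel k).comp (measurable_fst.prodMk
        ((measurable_coord i).comp measurable_snd.snd)))
      ((measurable_dyLabel k).comp (measurable_fst.prodMk
        ((measurable_coord i).comp measurable_snd.fst)))
  exact Measurable.ite ((h 0).inter (h 1)) measurable_const measurable_const

/-- Under a uniform random diagonal shift, two points share a cell of side `2⁻ᵏ` unless one of the two
coordinates separates them. -/
lemma le_integral_sameInd (k : ℕ) (x y : E2) (hx : ‖x‖ ≤ 1) (hy : ‖y‖ ≤ 1) :
    max 0 (1 - 2 ^ k * (|x 0 - y 0| + |x 1 - y 1|)) ≤ ∫ θ in (0 : ℝ)..1, sameInd θ k x y := by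
  refine max_le (intervalIntegral.integral_nonneg zero_le_one fun θ _ => (sameInd_mem ..).1) ?_
  have h0 := integral_sepInd_le k (x 0) (y 0) ((coord_le x 0).trans hx) ((coord_le y 0).trans hy)
  have h1 := integral_sepInd_le k (x 1) (y 1) ((coord_le x 1).trans hx) ((coord_le y 1).trans hy)
  have i0 := intervalIntegrable_sepInd k (x 0) (y 0)
  have i1 := intervalIntegrable_sepInd k (x 1) (y 1)
  have key : ∫ θ in (0 : ℝ)..1, (1 - sepInd θ k (x 0) (y 0) - sepInd θ k (x 1) (y 1)) ≤
      ∫ θ in (0 : ℝ)..1, sameInd θ k x y := by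
    refine intervalIntegral.integral_mono_on zero_le_one ((by simp : IntervalIntegrable
      (fun _ => (1 : ℝ)) volume 0 1).sub i0 |>.sub i1) ?_ ?_
    · refine intervalIntegrable_of_bdd _ ((measurable_sameInd k).comp
        (measurable_id.prodMk (measurable_const (a := (x, y))))) 1 fun θ _ => ?_
      rw [abs_of_nonneg (sameInd_mem ..).1]; exact (sameInd_mem ..).2
    · intro θ _
      have := (sepInd_mem θ k (x 0) (y 0)).1
      have := (sepInd_mem θ k (x 1) (y 1)).1
      unfold sameInd
      split_ifs with h
      · linarith
      · rw [not_and_or] at h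
        rcases h with h | h
        · have : sepInd θ k (x 0) (y 0) = 1 := by unfold sepInd; rw [if_neg (Ne.symm h)]
          linarith
        · have : sepInd θ k (x 1) (y 1) = 1 := by unfold sepInd; rw [if_neg (Ne.symm h)]
          linarith
  rw [intervalIntegral.integral_sub ((by simp : IntervalIntegrable
      (fun _ => (1 : ℝ)) volume 0 1).sub i0) i1, intervalIntegral.integral_sub (by simp) i0] at key
  simp at key
  linarith

/-- Up to constants, the truncated logarithmic kernel is at most `log 2` times the sum of the lower bounds
of `le_integral_sameInd` for the probabilities of sharing a cell. -/
lemma log_kernel_le (n : ℕ) (x y : E2) :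
    -Real.log (max ‖x - y‖ ((1 / 2) ^ n)) ≤ 4 + Real.log 2 * ∑ k ∈ Finset.range n,
      max 0 (1 - 2 ^ (k + 1) * (|x 0 - y 0| + |x 1 - y 1|)) := by
  obtain ⟨L, hL⟩ : ∃ L, L = max ‖x - y‖ ((1 / 2 : ℝ) ^ n) := ⟨_, rfl⟩
  rw [← hL]
  have hl : 0 ≤ Real.log 2 := Real.log_nonneg (by norm_num)
  have hl2 := Real.log_two_lt_d9
  have hsum : ∀ N : ℕ, 0 ≤ ∑ k ∈ Finset.range N,
      max 0 (1 - 2 ^ (k + 1) * (|x 0 - y 0| + |x 1 - y 1|)) := fun N =>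
    Finset.sum_nonneg fun k _ => le_max_left _ _
  have hL0 : 0 < L := by rw [hL]; exact lt_max_of_lt_right (by positivity)
  rcases le_total 1 L with h1 | h1
  · have := Real.log_nonneg h1
    have := mul_nonneg hl (hsum n)
    linarith
  · obtain ⟨J, hJ1, hJ2⟩ := exists_nat_pow_near_of_lt_one hL0 h1 (y := (1 / 2 : ℝ)) (by norm_num)
      (by norm_num)
    have hJn : J ≤ n := by
      by_contra hc
      have h2 : (1 / 2 : ℝ) ^ n ≤ L := by rw [hL]; exact le_max_right _ _
      have h3 : (1 / 2 : ℝ) ^ J < (1 / 2) ^ n :=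
        pow_lt_pow_right_of_lt_one₀ (by norm_num) (by norm_num) (by omega)
      linarith
    have hlog : -Real.log L ≤ (J + 1) * Real.log 2 := by
      have := Real.log_le_log (by positivity) hJ1.le
      rw [Real.log_pow, one_div, Real.log_inv] at this
      push_cast at this; linarith
    have hd : |x 0 - y 0| + |x 1 - y 1| ≤ 2 * (1 / 2 : ℝ) ^ J := by
      have a0 := coord_le (x - y) 0
      have a1 := coord_le (x - y) 1
      have : ‖x - y‖ ≤ L := by rw [hL]; exact le_max_left _ _
      simp only [PiLp.sub_apply] at a0 a1
      linarith
    have hgeo : ∀ j : ℕ, (j : ℝ) - 2 * 2 ^ j * (2 * (1 / 2 : ℝ) ^ J) ≤ ∑ k ∈ Finset.range j,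
        max 0 (1 - 2 ^ (k + 1) * (|x 0 - y 0| + |x 1 - y 1|)) := by
      intro j
      induction j with
      | zero => simp
      | succ j ih =>
        rw [Finset.sum_range_succ]
        have h2 := le_max_right (0 : ℝ) (1 - 2 ^ (j + 1) * (|x 0 - y 0| + |x 1 - y 1|))
        have h3 := mul_le_mul_of_nonneg_left hd (show (0 : ℝ) ≤ 2 ^ (j + 1) by positivity)
        rw [pow_succ] at h2 h3 ⊢
        push_cast
        linarith
    have h4 := hgeo J
    have h5 : 2 * (2 : ℝ) ^ J * (2 * (1 / 2 : ℝ) ^ J) = 4 := by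
      rw [one_div, inv_pow]; field_simp; norm_num
    rw [h5] at h4
    have h6 : ∑ k ∈ Finset.range J, max 0 (1 - 2 ^ (k + 1) * (|x 0 - y 0| + |x 1 - y 1|)) ≤
        ∑ k ∈ Finset.range n, max 0 (1 - 2 ^ (k + 1) * (|x 0 - y 0| + |x 1 - y 1|)) :=
      Finset.sum_le_sum_of_subset_of_nonneg (by simpa using hJn) fun k _ _ => le_max_left _ _
    have := mul_le_mul_of_nonneg_left (h4.trans h6) hl
    linarith

/-! ### The logarithmic Hardy–Littlewood–Sobolev inequality -/

/-- The measure on the disc with density `ρ`. -/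
def densMeasure (ρ : E2 → ℝ) : Measure E2 :=
  (volume.restrict B2).withDensity fun x => ENNReal.ofReal (ρ x)

lemma measurableSet_B2 : MeasurableSet B2 := Metric.isOpen_ball.measurableSet

lemma integrableOn_B2 {f : E2 → ℝ} (hf : Continuous f) : IntegrableOn f B2 :=
  (hf.continuousOn.integrableOn_compact (isCompact_closedBall 0 1)).mono_set
    Metric.ball_subset_closedBall

lemma integral_densMeasure (ρ : E2 → ℝ) (hc : Continuous ρ) (hpos : ∀ x, 0 < ρ x) (f : E2 → ℝ) :
    ∫ x, f x ∂(densMeasure ρ) = ∫ x in B2, ρ x * f x := by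
  unfold densMeasure
  rw [integral_withDensity_eq_integral_toReal_smul (hc.measurable.ennreal_ofReal)
    (Eventually.of_forall fun x => ENNReal.ofReal_lt_top)]
  simp [ENNReal.toReal_ofReal (hpos _).le]

lemma isProbabilityMeasure_densMeasure (ρ : E2 → ℝ) (hc : Continuous ρ) (hpos : ∀ x, 0 < ρ x)
    (h1 : ∫ x in B2, ρ x = 1) : IsProbabilityMeasure (densMeasure ρ) := by
  constructor
  unfold densMeasure
  rw [withDensity_apply _ MeasurableSet.univ, Measure.restrict_univ,
    ← ofReal_integral_eq_lintegral_ofReal (integrableOn_B2 hc)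
      (Eventually.of_forall fun x => (hpos x).le), h1, ENNReal.ofReal_one]

lemma ae_mem_densMeasure (ρ : E2 → ℝ) : ∀ᵐ x ∂(densMeasure ρ), x ∈ B2 :=
  (withDensity_absolutelyContinuous _ _).ae_le (ae_restrict_mem measurableSet_B2)

lemma densMeasure_real (ρ : E2 → ℝ) (hc : Continuous ρ) (hpos : ∀ x, 0 < ρ x) {s : Set E2}
    (hs : MeasurableSet s) : (densMeasure ρ).real s = ∫ x in s, ρ x ∂(volume.restrict B2) := by
  have h := integral_densMeasure ρ hc hpos (s.indicator 1)
  rw [integral_indicator_one hs] at h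
  rw [h, ← integral_indicator hs]
  refine integral_congr_ae (Eventually.of_forall fun x => ?_)
  by_cases hx : x ∈ s <;> simp [hx]

lemma volume_cell_le (θ : ℝ) (hθ : 0 ≤ θ) (n i j : ℕ) :
    (volume.restrict B2).real {x : E2 | dyLabel θ n (x 0) = i ∧ dyLabel θ n (x 1) = j} ≤
      (1 / 4) ^ n := by
  set c : Fin 2 → ℝ := ![i, j] with hcdef
  set S : Set (Fin 2 → ℝ) := Set.univ.pi fun l =>
    Set.Ico (c l / 2 ^ n - 1 - θ) ((c l + 1) / 2 ^ n - 1 - θ) with hS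
  have hsub : {x : E2 | dyLabel θ n (x 0) = i ∧ dyLabel θ n (x 1) = j} ∩ B2 ⊆
      (MeasurableEquiv.toLp 2 (Fin 2 → ℝ)).symm ⁻¹' S := by
    rintro x ⟨⟨h0, h1⟩, hB⟩
    have hx : ‖x‖ < 1 := by simpa [B2] using hB
    have key : ∀ (t : ℝ) (m : ℕ), |t| ≤ 1 → dyLabel θ n t = m →
        t ∈ Set.Ico ((m : ℝ) / 2 ^ n - 1 - θ) ((m + 1) / 2 ^ n - 1 - θ) := by
      intro t m ht hm
      have := (abs_le.1 ht).1
      have h2 : (0 : ℝ) < 2 ^ n := by positivity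
      rw [dyLabel, Nat.floor_eq_iff (mul_nonneg h2.le (by linarith))] at hm
      constructor
      · have : (m : ℝ) / 2 ^ n ≤ t + 1 + θ := by rw [div_le_iff₀ h2]; linarith
        linarith
      · have : t + 1 + θ < (m + 1 : ℝ) / 2 ^ n := by rw [lt_div_iff₀ h2]; linarith
        linarith
    have k0 := key (x 0) i ((coord_le x 0).trans hx.le) h0
    have k1 := key (x 1) j ((coord_le x 1).trans hx.le) h1
    simp only [Set.mem_preimage, hS, Set.mem_univ_pi]
    intro l
    fin_cases l
    · simpa [hcdef] using k0
    · simpa [hcdef] using k1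
  have hmeas : MeasurableSet S := MeasurableSet.univ_pi fun l => measurableSet_Ico
  have hvol : volume ((MeasurableEquiv.toLp 2 (Fin 2 → ℝ)).symm ⁻¹' S) =
      ENNReal.ofReal ((1 / 4) ^ n) := by
    rw [(EuclideanSpace.volume_preserving_symm_measurableEquiv_toLp (Fin 2)).measure_preimage
      hmeas.nullMeasurableSet, hS, Real.volume_pi_Ico]
    simp only [Fin.prod_univ_two]
    rw [← ENNReal.ofReal_mul]
    · congr 1
      have : (4 : ℝ) ^ n = 2 ^ n * 2 ^ n := by rw [← mul_pow]; norm_num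
      rw [one_div, inv_pow, this]; field_simp; ring
    · have : (c 0 + 1) / 2 ^ n - 1 - θ - (c 0 / 2 ^ n - 1 - θ) = 1 / 2 ^ n := by ring
      rw [this]; positivity
  rw [measureReal_def, Measure.restrict_apply' measurableSet_B2]
  refine ENNReal.toReal_le_of_le_ofReal (by positivity) ?_
  exact (measure_mono hsub).trans hvol.le

/-- Jensen's inequality for `t log t` on a set of volume at most `v`. -/
lemma cell_entropy (ρ : E2 → ℝ) (hc : Continuous ρ) (hpos : ∀ x, 0 < ρ x) {s : Set E2}
    (hs : MeasurableSet s) (v : ℝ) (hv0 : 0 < v) (hv : (volume.restrict B2).real s ≤ v) :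
    (densMeasure ρ).real s * (Real.log ((densMeasure ρ).real s) - Real.log v) ≤
      ∫ x in s, ρ x * Real.log (ρ x) ∂(volume.restrict B2) := by
  have hi : Integrable ρ ((volume.restrict B2).restrict s) := (integrableOn_B2 hc).integrable.restrict
  have hcl : Continuous fun x => ρ x * Real.log (ρ x) :=
    hc.mul (hc.log fun x => (hpos x).ne')
  have hi2 : Integrable (fun x => ρ x * Real.log (ρ x)) ((volume.restrict B2).restrict s) :=
    (integrableOn_B2 hcl).integrable.restrict
  have : IsFiniteMeasure (volume.restrict B2) := ⟨by
    rw [Measure.restrict_apply_univ]; exact measure_ball_lt_top⟩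
  have hm := densMeasure_real ρ hc hpos hs
  have hm0 : 0 ≤ (densMeasure ρ).real s := measureReal_nonneg
  rcases hm0.eq_or_lt with h0 | h0
  · rw [← h0, zero_mul]
    rw [← h0] at hm
    have := (integral_eq_zero_iff_of_nonneg (fun x => (hpos x).le) hi).1 hm.symm
    rw [integral_eq_zero_of_ae]
    filter_upwards [this] with x hx
    exact absurd hx (hpos x).ne'
  · set m := (densMeasure ρ).real s
    have ha : 0 < m / v := by positivity
    have hpt : ∀ x, ρ x * Real.log (m / v) + ρ x - m / v ≤ ρ x * Real.log (ρ x) := by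
      intro x
      have h1 := Real.log_le_sub_one_of_pos (x := (m / v) / ρ x) (div_pos ha (hpos x))
      rw [Real.log_div ha.ne' (hpos x).ne'] at h1
      have h2 := mul_le_mul_of_nonneg_left h1 (hpos x).le
      have h3 : ρ x * ((m / v) / ρ x - 1) = m / v - ρ x := by
        have := (hpos x).ne'; field_simp
      linarith
    have hmono := integral_mono (μ := (volume.restrict B2).restrict s)
      (((hi.mul_const _).add hi).sub (integrable_const (m / v))) hi2 hpt
    simp only [Pi.sub_apply, Pi.add_apply] at hmono
    rw [integral_sub (f := fun x => ρ x * Real.log (m / v) + ρ x)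
        ((hi.mul_const _).add hi) (integrable_const _),
      integral_add (hi.mul_const _) hi, integral_mul_const, ← hm] at hmono
    simp only [integral_const, smul_eq_mul, measureReal_restrict_apply_univ] at hmono
    rw [← Real.log_div h0.ne' hv0.ne']
    have : (volume.restrict B2).real s * (m / v) ≤ m := by
      calc _ ≤ v * (m / v) := by gcongr
        _ = m := by field_simp
    linarith

/-- For a fixed shift, the number of common dyadic cells is controlled by the entropy. -/
lemma dyadic_HLS_shift (ρ : E2 → ℝ) (hc : Continuous ρ) (hpos : ∀ x, 0 < ρ x)
    (h1 : ∫ x in B2, ρ x = 1) (n : ℕ) (θ : ℝ) (hθ0 : 0 ≤ θ) (hθ1 : θ ≤ 1) :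
    2 * Real.log 2 * ∑ k ∈ Finset.range n,
      ∫ x, ∫ y, sameInd θ (k + 1) x y ∂(densMeasure ρ) ∂(densMeasure ρ) ≤
      (∫ x in B2, ρ x * Real.log (ρ x)) + 41 := by
  have hP := isProbabilityMeasure_densMeasure ρ hc hpos h1
  set ν := densMeasure ρ with hν
  have hlab : ∀ (i : Fin 2) (k : ℕ), Measurable fun x : E2 => dyLabel θ k (x i) := fun i k =>
    (measurable_dyLabel k).comp (measurable_const.prodMk (measurable_coord i))
  have hltB : ∀ (i : Fin 2) (k : ℕ) (x : E2), x ∈ B2 → dyLabel θ k (x i) < 4 * 2 ^ k := by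
    intro i k x hx
    have hx : ‖x‖ < 1 := by simpa [B2] using hx
    exact dyLabel_lt θ hθ1 k _ ((coord_le x i).trans hx.le)
  have hlt : ∀ (i : Fin 2) (k : ℕ), ∀ᵐ x ∂ν, dyLabel θ k (x i) < 4 * 2 ^ k := fun i k => by
    filter_upwards [ae_mem_densMeasure ρ] with x hx using hltB i k x hx
  have tree := tree_estimate ν (fun k x => dyLabel θ k (x 0)) (fun k x => dyLabel θ k (x 1))
    (hlab 0) (hlab 1) (fun k x => dyLabel_half _ _ _) (fun k x => dyLabel_half _ _ _)
    (hlt 0) (hlt 1) n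
  have e : ∀ k, ∑ i ∈ Finset.range (4 * 2 ^ (k + 1)), ∑ j ∈ Finset.range (4 * 2 ^ (k + 1)),
      cellMass ν (fun x => dyLabel θ (k + 1) (x 0)) (fun x => dyLabel θ (k + 1) (x 1)) i j ^ 2 =
      ∫ x, ∫ y, sameInd θ (k + 1) x y ∂ν ∂ν := by
    intro k
    rw [sum_sq_cellMass ν (hlab 0 (k + 1)) (hlab 1 (k + 1)) _ _ (hlt 0 _) (hlt 1 _)]
    simp only [sameInd]
  simp_rw [e] at tree
  have hent : ∑ i ∈ Finset.range (4 * 2 ^ n), ∑ j ∈ Finset.range (4 * 2 ^ n),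
      (-lyap (cellMass ν (fun x => dyLabel θ n (x 0)) (fun x => dyLabel θ n (x 1)) i j)
        - cellMass ν (fun x => dyLabel θ n (x 0)) (fun x => dyLabel θ n (x 1)) i j
        + 2 * n * Real.log 2 *
          cellMass ν (fun x => dyLabel θ n (x 0)) (fun x => dyLabel θ n (x 1)) i j)
      ≤ ∫ x in B2, ρ x * Real.log (ρ x) := by
    have hcl : Continuous fun x => ρ x * Real.log (ρ x) :=
      hc.mul (hc.log fun x => (hpos x).ne')
    rw [integral_eq_sum_cells (volume.restrict B2) (hlab 0 n) (hlab 1 n) (4 * 2 ^ n) (4 * 2 ^ n)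
      ((ae_restrict_iff' measurableSet_B2).2 (Eventually.of_forall (hltB 0 n)))
      ((ae_restrict_iff' measurableSet_B2).2 (Eventually.of_forall (hltB 1 n))) _
      (integrableOn_B2 hcl)]
    refine Finset.sum_le_sum fun i _ => Finset.sum_le_sum fun j _ => ?_
    refine le_trans ?_ (cell_entropy ρ hc hpos (measurableSet_cell (hlab 0 n) (hlab 1 n) i j)
      ((1 / 4) ^ n) (by positivity) (volume_cell_le θ hθ0 n i j))
    have h3 := le_lyap (cellMass ν (fun x => dyLabel θ n (x 0)) (fun x => dyLabel θ n (x 1)) i j)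
      measureReal_le_one
    have h4 : Real.log ((1 / 4 : ℝ) ^ n) = -(2 * n * Real.log 2) := by
      rw [Real.log_pow, show (1 / 4 : ℝ) = (2 ^ 2)⁻¹ by norm_num, Real.log_inv, Real.log_pow]
      push_cast; ring
    rw [h4]
    unfold negMulLog at h3
    unfold cellMass at h3 ⊢
    rw [← hν]
    linarith
  simp_rw [Finset.sum_add_distrib, Finset.sum_sub_distrib, Finset.sum_neg_distrib,
    ← Finset.mul_sum] at hent
  rw [sum_cellMass ν (hlab 0 n) (hlab 1 n) _ _ (hlt 0 _) (hlt 1 _)] at hent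
  linarith

/-- The logarithmic Hardy–Littlewood–Sobolev inequality on the disc, with the sharp factor in
front of the entropy and a non-optimal additive constant. -/
lemma log_HLS (ρ : E2 → ℝ) (hc : Continuous ρ) (hpos : ∀ x, 0 < ρ x)
    (h1 : ∫ x in B2, ρ x = 1) (n : ℕ) :
    ∫ x, ∫ y, -Real.log (max ‖x - y‖ ((1 / 2) ^ n)) ∂(densMeasure ρ) ∂(densMeasure ρ) ≤
      1 / 2 * (∫ x in B2, ρ x * Real.log (ρ x)) + 25 := by
  have hP := isProbabilityMeasure_densMeasure ρ hc hpos h1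
  have hl : 0 ≤ Real.log 2 := Real.log_nonneg (by norm_num)
  set ν := densMeasure ρ with hν
  set τ := volume.restrict (Set.Ioc (0 : ℝ) 1) with hτ
  have hτP : IsProbabilityMeasure τ := ⟨by simp [hτ]⟩
  have hsi : ∀ k, Integrable (fun p : ℝ × E2 × E2 => sameInd p.1 k p.2.1 p.2.2)
      (τ.prod (ν.prod ν)) := fun k =>
    Integrable.of_bound (measurable_sameInd k).aestronglyMeasurable 1
      (Eventually.of_forall fun p => by
        rw [Real.norm_of_nonneg (sameInd_mem ..).1]; exact (sameInd_mem ..).2)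
  have hsθ : ∀ k θ, Integrable (fun p : E2 × E2 => sameInd θ k p.1 p.2) (ν.prod ν) := fun k θ =>
    Integrable.of_bound ((measurable_sameInd k).comp
      (measurable_const.prodMk measurable_id)).aestronglyMeasurable 1
      (Eventually.of_forall fun p => by
        show ‖sameInd θ k p.1 p.2‖ ≤ 1
        rw [Real.norm_of_nonneg (sameInd_mem ..).1]; exact (sameInd_mem ..).2)
  have havg : 2 * Real.log 2 * ∑ k ∈ Finset.range n,
      ∫ p : E2 × E2, ∫ θ, sameInd θ (k + 1) p.1 p.2 ∂τ ∂(ν.prod ν) ≤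
      (∫ x in B2, ρ x * Real.log (ρ x)) + 41 := by
    have e : ∀ k, ∫ p : E2 × E2, ∫ θ, sameInd θ (k + 1) p.1 p.2 ∂τ ∂(ν.prod ν) =
        ∫ θ, ∫ p : E2 × E2, sameInd θ (k + 1) p.1 p.2 ∂(ν.prod ν) ∂τ := fun k =>
      (integral_integral_swap (f := fun θ (p : E2 × E2) => sameInd θ (k + 1) p.1 p.2)
        (hsi (k + 1))).symm
    simp_rw [e]
    rw [← integral_finsetSum _ fun k _ => (hsi (k + 1)).integral_prod_left, ← integral_const_mul]
    calc _ ≤ ∫ θ, ((∫ x in B2, ρ x * Real.log (ρ x)) + 41) ∂τ := by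
          refine integral_mono_ae ?_ (integrable_const _) ?_
          · exact (integrable_finsetSum _ fun k _ => (hsi (k + 1)).integral_prod_left).const_mul _
          · filter_upwards [ae_restrict_mem measurableSet_Ioc] with θ hθ
            have := dyadic_HLS_shift ρ hc hpos h1 n θ hθ.1.le hθ.2
            refine le_trans (le_of_eq ?_) this
            congr 1
            refine Finset.sum_congr rfl fun k _ => ?_
            exact integral_prod _ (hsθ (k + 1) θ)
      _ = _ := by simp
  have hker : ∀ᵐ p ∂(ν.prod ν), -Real.log (max ‖p.1 - p.2‖ ((1 / 2) ^ n)) ≤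
      4 + Real.log 2 * ∑ k ∈ Finset.range n, ∫ θ, sameInd θ (k + 1) p.1 p.2 ∂τ := by
    have a1 : ∀ᵐ p : E2 × E2 ∂(ν.prod ν), p.1 ∈ B2 :=
      Measure.quasiMeasurePreserving_fst.ae (ae_mem_densMeasure ρ)
    have a2 : ∀ᵐ p : E2 × E2 ∂(ν.prod ν), p.2 ∈ B2 :=
      Measure.quasiMeasurePreserving_snd.ae (ae_mem_densMeasure ρ)
    filter_upwards [a1, a2] with p hp1 hp2
    have hp1 : ‖p.1‖ < 1 := by simpa [B2] using hp1
    have hp2 : ‖p.2‖ < 1 := by simpa [B2] using hp2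
    refine (log_kernel_le n p.1 p.2).trans ?_
    gcongr with k _
    have := le_integral_sameInd (k + 1) p.1 p.2 hp1.le hp2.le
    rwa [intervalIntegral.integral_of_le zero_le_one] at this
  have hkc : Continuous fun p : E2 × E2 => -Real.log (max ‖p.1 - p.2‖ ((1 / 2 : ℝ) ^ n)) := by
    refine (Continuous.log (by fun_prop) fun p => ?_).neg
    exact (lt_max_of_lt_right (by positivity)).ne'
  have hki : Integrable (fun p : E2 × E2 => -Real.log (max ‖p.1 - p.2‖ ((1 / 2 : ℝ) ^ n)))
      (ν.prod ν) := by
    have hK : IsCompact (Metric.closedBall (0 : E2) 1 ×ˢ Metric.closedBall (0 : E2) 1) :=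
      (isCompact_closedBall _ _).prod (isCompact_closedBall _ _)
    have hi := hkc.continuousOn.integrableOn_compact (μ := ν.prod ν) hK
    rw [← Measure.restrict_eq_self_of_ae_mem (μ := ν.prod ν)
      (s := Metric.closedBall (0 : E2) 1 ×ˢ Metric.closedBall (0 : E2) 1)]
    · exact hi
    · have a1 : ∀ᵐ p : E2 × E2 ∂(ν.prod ν), p.1 ∈ B2 :=
        Measure.quasiMeasurePreserving_fst.ae (ae_mem_densMeasure ρ)
      have a2 : ∀ᵐ p : E2 × E2 ∂(ν.prod ν), p.2 ∈ B2 :=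
        Measure.quasiMeasurePreserving_snd.ae (ae_mem_densMeasure ρ)
      filter_upwards [a1, a2] with p hp1 hp2
      exact ⟨Metric.ball_subset_closedBall hp1, Metric.ball_subset_closedBall hp2⟩
  have hint : Integrable (fun p : E2 × E2 => Real.log 2 * ∑ k ∈ Finset.range n,
      ∫ θ, sameInd θ (k + 1) p.1 p.2 ∂τ) (ν.prod ν) :=
    (integrable_finsetSum _ fun k _ => (hsi (k + 1)).integral_prod_right).const_mul _
  have := integral_mono_ae hki ((integrable_const 4).add hint) hker
  rw [integral_prod _ hki] at this
  refine this.trans ?_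
  simp only [Pi.add_apply]
  rw [integral_add (integrable_const 4) hint, integral_const_mul,
    integral_finsetSum _ fun k _ => (hsi (k + 1)).integral_prod_right]
  simp only [integral_const, smul_eq_mul, probReal_univ, one_mul]
  linarith

/-! ### Two radial kernels -/

/-- An approximate identity on the plane of width `γ`. -/
def concK (γ : ℝ) (x : E2) : ℝ := 1 / π * (γ ^ 2 / (‖x‖ ^ 2 + γ ^ 2) ^ 2)

/-- A radial function, singular at the origin, whose integral does not depend on `b > 0`. -/
def singJ (b : ℝ) (x : E2) : ℝ := b / (‖x‖ * (b ^ 2 + ‖x‖ ^ 2))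

lemma volume_real_unit_ball : volume.real (Metric.ball (0 : E2) 1) = π := by
  rw [measureReal_def, EuclideanSpace.volume_ball_fin_two]; simp [pi_pos.le]

lemma concK_radial (γ : ℝ) (hγ : 0 < γ) :
    IntegrableOn (fun r : ℝ => r * (1 / π * (γ ^ 2 / (r ^ 2 + γ ^ 2) ^ 2))) (Set.Ioi 0) ∧
    ∫ r in Set.Ioi (0 : ℝ), r * (1 / π * (γ ^ 2 / (r ^ 2 + γ ^ 2) ^ 2)) = 1 / (2 * π) := by
  have hd : ∀ r ∈ Set.Ici (0 : ℝ), HasDerivAt (fun r : ℝ => -(γ ^ 2 / (2 * π)) * (r ^ 2 + γ ^ 2)⁻¹)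
      (r * (1 / π * (γ ^ 2 / (r ^ 2 + γ ^ 2) ^ 2))) r := by
    intro r _
    have h0 : r ^ 2 + γ ^ 2 ≠ 0 := by positivity
    have h1 : HasDerivAt (fun r : ℝ => r ^ 2 + γ ^ 2) (2 * r) r := by
      simpa using (hasDerivAt_pow 2 r).add_const (γ ^ 2)
    refine ((h1.inv h0).const_mul (-(γ ^ 2 / (2 * π)))).congr_deriv ?_
    field_simp
  have hp : ∀ r ∈ Set.Ioi (0 : ℝ), 0 ≤ r * (1 / π * (γ ^ 2 / (r ^ 2 + γ ^ 2) ^ 2)) := by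
    intro r hr
    have : 0 < r := hr
    positivity
  have ht : Tendsto (fun r : ℝ => -(γ ^ 2 / (2 * π)) * (r ^ 2 + γ ^ 2)⁻¹) atTop (nhds 0) := by
    have : Tendsto (fun r : ℝ => r ^ 2 + γ ^ 2) atTop atTop :=
      tendsto_atTop_add_const_right _ _ (tendsto_pow_atTop (by norm_num))
    simpa using (this.inv_tendsto_atTop).const_mul (-(γ ^ 2 / (2 * π)))
  refine ⟨integrableOn_Ioi_deriv_of_nonneg' hd hp ht, ?_⟩
  rw [integral_Ioi_of_hasDerivAt_of_nonneg' hd hp ht]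
  field_simp
  ring

lemma singJ_radial (b : ℝ) (hb : 0 < b) :
    IntegrableOn (fun r : ℝ => r * (b / (r * (b ^ 2 + r ^ 2)))) (Set.Ioi 0) ∧
    ∫ r in Set.Ioi (0 : ℝ), r * (b / (r * (b ^ 2 + r ^ 2))) = π / 2 := by
  have he : Set.EqOn (fun r : ℝ => r * (b / (r * (b ^ 2 + r ^ 2)))) (fun r => b / (b ^ 2 + r ^ 2))
      (Set.Ioi 0) := by
    intro r hr
    have : 0 < r := hr
    simp only
    field_simp
  have hd : ∀ r ∈ Set.Ici (0 : ℝ), HasDerivAt (fun r : ℝ => Real.arctan (r / b))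
      (b / (b ^ 2 + r ^ 2)) r := by
    intro r _
    refine (((hasDerivAt_id' r).div_const b).arctan).congr_deriv ?_
    field_simp
  have hp : ∀ r ∈ Set.Ioi (0 : ℝ), 0 ≤ b / (b ^ 2 + r ^ 2) := fun r hr => by positivity
  have ht : Tendsto (fun r : ℝ => Real.arctan (r / b)) atTop (nhds (π / 2)) :=
    (tendsto_nhds_of_tendsto_nhdsWithin Real.tendsto_arctan_atTop).comp
      (tendsto_id.atTop_div_const hb)
  rw [integrableOn_congr_fun he measurableSet_Ioi, setIntegral_congr_fun measurableSet_Ioi he]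
  refine ⟨integrableOn_Ioi_deriv_of_nonneg' hd hp ht, ?_⟩
  rw [integral_Ioi_of_hasDerivAt_of_nonneg' hd hp ht]
  simp

lemma integrable_concK (γ : ℝ) (hγ : 0 < γ) : Integrable (concK γ) := by
  have := (integrable_fun_norm_addHaar (volume : Measure E2)
    (f := fun r : ℝ => 1 / π * (γ ^ 2 / (r ^ 2 + γ ^ 2) ^ 2))).2
    (by simpa using (concK_radial γ hγ).1)
  exact this

lemma integral_concK (γ : ℝ) (hγ : 0 < γ) : ∫ x, concK γ x = 1 := by
  have := integral_fun_norm_addHaar (volume : Measure E2)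
    (fun r : ℝ => 1 / π * (γ ^ 2 / (r ^ 2 + γ ^ 2) ^ 2))
  rw [volume_real_unit_ball] at this
  simp only [finrank_euclideanSpace, Fintype.card_fin, Nat.add_one_sub_one, pow_one,
    smul_eq_mul, nsmul_eq_mul, (concK_radial γ hγ).2] at this
  unfold concK
  rw [this]
  push_cast
  field_simp

lemma integrable_singJ (b : ℝ) (hb : 0 < b) : Integrable (singJ b) := by
  have := (integrable_fun_norm_addHaar (volume : Measure E2)
    (f := fun r : ℝ => b / (r * (b ^ 2 + r ^ 2)))).2
    (by simpa using (singJ_radial b hb).1)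
  exact this

lemma integral_singJ (b : ℝ) (hb : 0 < b) : ∫ x, singJ b x = π ^ 2 := by
  have := integral_fun_norm_addHaar (volume : Measure E2)
    (fun r : ℝ => b / (r * (b ^ 2 + r ^ 2)))
  rw [volume_real_unit_ball] at this
  simp only [finrank_euclideanSpace, Fintype.card_fin, Nat.add_one_sub_one, pow_one,
    smul_eq_mul, nsmul_eq_mul, (singJ_radial b hb).2] at this
  unfold singJ
  rw [this]
  push_cast
  ring

lemma concK_nonneg (γ : ℝ) (x : E2) : 0 ≤ concK γ x := by unfold concK; positivity

lemma singJ_nonneg (b : ℝ) (hb : 0 < b) (x : E2) : 0 ≤ singJ b x := by unfold singJ; positivity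

lemma concK_mul_norm_le (γ : ℝ) (hγ : 0 < γ) (x : E2) :
    concK γ x * ‖x‖ ≤ γ / π * singJ γ x := by
  unfold concK singJ
  rcases (norm_nonneg x).eq_or_lt with h | h
  · simp [← h]
  · set r := ‖x‖
    have e : γ / π * (γ / (r * (γ ^ 2 + r ^ 2))) - 1 / π * (γ ^ 2 / (r ^ 2 + γ ^ 2) ^ 2) * r =
        1 / π * (γ ^ 2 * γ ^ 2 / (r * (r ^ 2 + γ ^ 2) ^ 2)) := by
      field_simp; ring
    have : 0 ≤ 1 / π * (γ ^ 2 * γ ^ 2 / (r * (r ^ 2 + γ ^ 2) ^ 2)) := by positivity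
    linarith

lemma continuous_concK (γ : ℝ) (hγ : 0 < γ) : Continuous (concK γ) := by
  unfold concK
  refine continuous_const.mul (continuous_const.div (by fun_prop) fun x => ?_)
  positivity

lemma measurable_singJ (b : ℝ) : Measurable (singJ b) := by
  unfold singJ; fun_prop

/-! ### The divergence theorem with weight `1 - |x|²` -/

lemma lipschitz_posPart_sq : LipschitzWith 2 fun x : E2 => max (1 - ‖x‖ ^ 2) 0 := by
  have e : (fun x : E2 => max (1 - ‖x‖ ^ 2) 0) = fun x => 1 - (min ‖x‖ 1) ^ 2 := by
    funext x
    rcases le_total ‖x‖ 1 with h | h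
    · rw [min_eq_left h, max_eq_left]
      nlinarith [norm_nonneg x]
    · rw [min_eq_right h, max_eq_right]
      · norm_num
      · nlinarith [norm_nonneg x]
  rw [e]
  refine LipschitzWith.of_dist_le_mul fun x y => ?_
  rw [Real.dist_eq]
  have h1 : |min ‖x‖ 1 - min ‖y‖ 1| ≤ dist x y := by
    refine (abs_min_sub_min_le_max _ _ _ _).trans ?_
    rw [sub_self, abs_zero, dist_eq_norm, max_eq_left (abs_nonneg _)]
    exact abs_norm_sub_norm_le x y
  have e2 : 1 - (min ‖x‖ 1) ^ 2 - (1 - (min ‖y‖ 1) ^ 2) =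
      -((min ‖x‖ 1 + min ‖y‖ 1) * (min ‖x‖ 1 - min ‖y‖ 1)) := by ring
  rw [e2, abs_neg, abs_mul]
  have h2 : |min ‖x‖ 1 + min ‖y‖ 1| ≤ 2 := by
    rw [abs_of_nonneg (by positivity)]
    linarith [min_le_right ‖x‖ 1, min_le_right ‖y‖ 1]
  push_cast
  gcongr

/-- The divergence theorem for the weight `1 - |x|²`, which vanishes on the boundary of the disc. -/
lemma integral_weight_fderiv (F : E2 → ℝ) (r : ℝ) (hr : 1 < r)
    (hF : ContDiffOn ℝ 1 F (Metric.ball 0 r)) (e : E2) :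
    ∫ x in B2, (1 - ‖x‖ ^ 2) * fderiv ℝ F x e = ∫ x in B2, 2 * inner ℝ x e * F x := by
  let χ : ContDiffBump (0 : E2) := ⟨(2 + r) / 3, (1 + 2 * r) / 3, by linarith, by linarith⟩
  set G : E2 → ℝ := fun x => χ x * F x with hG
  have hGc : HasCompactSupport G := χ.hasCompactSupport.mul_right
  have hGd : ContDiff ℝ 1 G := by
    rw [contDiff_iff_contDiffAt]
    intro x
    by_cases hx : x ∈ Metric.ball (0 : E2) r
    · exact χ.contDiffAt.mul (hF.contDiffAt (Metric.isOpen_ball.mem_nhds hx))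
    · have hx' : x ∉ tsupport G := by
        intro h
        have h1 := tsupport_mul_subset_left (f := χ) (g := F) h
        rw [χ.tsupport_eq] at h1
        simp only [Metric.mem_closedBall, Metric.mem_ball, not_lt] at h1 hx
        have : χ.rOut = (1 + 2 * r) / 3 := rfl
        linarith
      have h0 : G =ᶠ[nhds x] fun _ => 0 := notMem_tsupport_iff_eventuallyEq.1 hx'
      exact contDiffAt_const.congr_of_eventuallyEq h0
  obtain ⟨C, hC⟩ := hGd.lipschitzWith_of_hasCompactSupport hGc one_ne_zero
  set h : E2 → ℝ := fun x => max (1 - ‖x‖ ^ 2) 0 with hh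
  have h0 : ∀ x : E2, 1 ≤ ‖x‖ → h x = 0 := fun x hx => by
    simp only [hh]; rw [max_eq_right]; nlinarith
  have h1 : ∀ x : E2, ‖x‖ < 1 → h x = 1 - ‖x‖ ^ 2 := fun x hx => by
    simp only [hh]; rw [max_eq_left]; nlinarith [norm_nonneg x]
  have hhc : HasCompactSupport h :=
    HasCompactSupport.intro (isCompact_closedBall (0 : E2) 1) fun x hx => by
      refine h0 x ?_
      simp only [Metric.mem_closedBall, dist_zero_right, not_le] at hx
      exact hx.le
  have key := hC.integral_lineDeriv_mul_eq (μ := volume) lipschitz_posPart_sq hhc e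
  have hGF : ∀ x ∈ B2, G =ᶠ[nhds x] F := by
    intro x hx
    filter_upwards [Metric.isOpen_ball.mem_nhds hx] with y hy
    have : χ y = 1 := χ.one_of_mem_closedBall (by
      simp only [Metric.mem_ball, Metric.mem_closedBall] at hy ⊢
      have : χ.rIn = (2 + r) / 3 := rfl
      linarith)
    simp [hG, this]
  have hL : ∫ x, lineDeriv ℝ G x e * h x = ∫ x in B2, (1 - ‖x‖ ^ 2) * fderiv ℝ F x e := by
    rw [← integral_indicator measurableSet_B2]
    refine integral_congr_ae (Eventually.of_forall fun x => ?_)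
    by_cases hx : x ∈ B2
    · simp only [Set.indicator_of_mem hx]
      have hx1 : ‖x‖ < 1 := by simpa [B2] using hx
      rw [h1 x hx1, (hGd.differentiable one_ne_zero x).lineDeriv_eq_fderiv, (hGF x hx).fderiv_eq]
      ring
    · simp only [Set.indicator_of_notMem hx]
      rw [h0 x (by simpa [B2] using hx), mul_zero]
  have hR : ∫ x, lineDeriv ℝ h x (-e) * G x = ∫ x in B2, 2 * inner ℝ x e * F x := by
    rw [← integral_indicator measurableSet_B2]
    have hs : ∀ᵐ x : E2, x ∉ Metric.sphere (0 : E2) 1 :=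
      measure_eq_zero_iff_ae_notMem.1 (Measure.addHaar_sphere volume 0 1)
    refine integral_congr_ae ?_
    filter_upwards [hs] with x hxs
    by_cases hx : x ∈ B2
    · simp only [Set.indicator_of_mem hx]
      have hx1 : ‖x‖ < 1 := by simpa [B2] using hx
      have hev : h =ᶠ[nhds x] fun x => 1 - ‖x‖ ^ 2 := by
        filter_upwards [Metric.isOpen_ball.mem_nhds hx] with y hy
        exact h1 y (by simpa using hy)
      have hd : HasFDerivAt h (-(2 • (innerSL ℝ x))) x :=
        ((hasStrictFDerivAt_norm_sq x).hasFDerivAt.const_sub 1).congr_of_eventuallyEq hev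
      rw [hd.hasLineDerivAt (-e) |>.lineDeriv, (hGF x hx).eq_of_nhds]
      simp
    · simp only [Set.indicator_of_notMem hx]
      have hx1 : 1 < ‖x‖ := by
        simp only [B2, Metric.mem_ball, Metric.mem_sphere, dist_zero_right] at hx hxs
        exact lt_of_le_of_ne (not_lt.1 hx) (Ne.symm hxs)
      have hev : h =ᶠ[nhds x] fun _ => 0 := by
        filter_upwards [(isOpen_lt continuous_const continuous_norm).mem_nhds hx1] with y hy
        exact h0 y (le_of_lt hy)
      rw [((hasFDerivAt_const (0 : ℝ) x).congr_of_eventuallyEq hev).hasLineDerivAt (-e)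
        |>.lineDeriv]
      simp
  rw [← hL, ← hR, key]

/-! ### The operator `opA` and its bilinear form -/

/-- The partial derivative in the `i`-th coordinate. -/
def pd (i : Fin 2) (f : E2 → ℝ) (x : E2) : ℝ := fderiv ℝ f x (EuclideanSpace.single i 1)

/-- The operator `-div((1-|x|²)∇ψ) + ψ`. -/
def opA (ψ : E2 → ℝ) (x : E2) : ℝ :=
  ψ x + ∑ i, (-((1 - ‖x‖ ^ 2) * pd i (pd i ψ) x) + 2 * x i * pd i ψ x)

/-- The bilinear form attached to `opA`. -/
def bilQ (f g : E2 → ℝ) : ℝ :=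
  ∫ x in B2, ((1 - ‖x‖ ^ 2) * ∑ i, pd i f x * pd i g x + f x * g x)

lemma contDiffOn_pd {f : E2 → ℝ} {r : ℝ} {m n : ℕ∞} (h : m + 1 ≤ n)
    (hf : ContDiffOn ℝ n f (Metric.ball 0 r)) (i : Fin 2) :
    ContDiffOn ℝ m (pd i f) (Metric.ball 0 r) :=
  (hf.fderiv_of_isOpen Metric.isOpen_ball (by exact_mod_cast h)).clm_apply contDiffOn_const

lemma integrableOn_B2_of_ball {f : E2 → ℝ} {r : ℝ} (hr : 1 < r)
    (hf : ContinuousOn f (Metric.ball 0 r)) : IntegrableOn f B2 :=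
  ((hf.mono (Metric.closedBall_subset_ball hr)).integrableOn_compact
    (isCompact_closedBall 0 1)).mono_set Metric.ball_subset_closedBall

/-- `opA` represents `bilQ`. Neither function has to vanish on the circle: the weight `1 - |x|²` kills
the boundary term (`integral_weight_fderiv`). -/
lemma bilQ_eq (f ψ : E2 → ℝ) (r : ℝ) (hr : 1 < r) (hf : ContDiffOn ℝ 1 f (Metric.ball 0 r))
    (hψ : ContDiffOn ℝ 2 ψ (Metric.ball 0 r)) :
    bilQ f ψ = ∫ x in B2, f x * opA ψ x := by
  have hB : ∀ x ∈ B2, x ∈ Metric.ball (0 : E2) r := fun x hx =>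
    Metric.ball_subset_ball hr.le hx
  have d1 : ∀ i, ContDiffOn ℝ 1 (pd i ψ) (Metric.ball 0 r) := fun i =>
    contDiffOn_pd (m := 1) (n := 2) (by norm_num) hψ i
  have d2 : ∀ i, ContDiffOn ℝ 0 (pd i (pd i ψ)) (Metric.ball 0 r) := fun i =>
    contDiffOn_pd (m := 0) (n := 1) (by norm_num) (d1 i) i
  have df : ∀ i, ContDiffOn ℝ 0 (pd i f) (Metric.ball 0 r) := fun i =>
    contDiffOn_pd (m := 0) (n := 1) (by norm_num) hf i
  have cf := hf.continuousOn
  have cψ := hψ.continuousOn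
  have key : ∀ i : Fin 2, ∫ x in B2, ((1 - ‖x‖ ^ 2) * (pd i f x * pd i ψ x) -
      f x * (-((1 - ‖x‖ ^ 2) * pd i (pd i ψ) x) + 2 * x i * pd i ψ x)) = 0 := by
    intro i
    have h := integral_weight_fderiv (fun x => f x * pd i ψ x) r hr (hf.mul (d1 i))
      (EuclideanSpace.single i 1)
    have e : ∀ x ∈ B2, fderiv ℝ (fun x => f x * pd i ψ x) x (EuclideanSpace.single i 1) =
        pd i f x * pd i ψ x + f x * pd i (pd i ψ) x := by
      intro x hx
      have hx' := Metric.isOpen_ball.mem_nhds (hB x hx)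
      rw [fderiv_fun_mul ((hf.contDiffAt hx').differentiableAt one_ne_zero)
        (((d1 i).contDiffAt hx').differentiableAt one_ne_zero)]
      simp only [pd, add_apply, smul_apply, smul_eq_mul]
      ring
    rw [setIntegral_congr_fun measurableSet_B2 (g := fun x => (1 - ‖x‖ ^ 2) *
      (pd i f x * pd i ψ x + f x * pd i (pd i ψ) x)) fun x hx => by simp only [e x hx]] at h
    rw [← sub_eq_zero, ← integral_sub] at h
    · rw [← h]
      refine setIntegral_congr_fun measurableSet_B2 fun x _ => ?_
      simp only [EuclideanSpace.inner_single_right, one_mul, starRingEnd_apply, star_trivial]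
      ring
    · refine integrableOn_B2_of_ball hr ?_
      have := (df i).continuousOn
      have := (d1 i).continuousOn
      have := (d2 i).continuousOn
      fun_prop
    · refine integrableOn_B2_of_ball hr ?_
      have := (d1 i).continuousOn
      fun_prop
  have hint : ∀ i : Fin 2, IntegrableOn (fun x => (1 - ‖x‖ ^ 2) * (pd i f x * pd i ψ x) -
      f x * (-((1 - ‖x‖ ^ 2) * pd i (pd i ψ) x) + 2 * x i * pd i ψ x)) B2 := fun i => by
    refine integrableOn_B2_of_ball hr ?_
    have := (df i).continuousOn
    have := (d1 i).continuousOn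
    have := (d2 i).continuousOn
    fun_prop
  unfold bilQ opA
  rw [← sub_eq_zero, ← integral_sub]
  · rw [← Finset.sum_eq_zero (s := Finset.univ) fun i _ => key i, ← integral_finsetSum _ fun i _ => hint i]
    refine setIntegral_congr_fun measurableSet_B2 fun x _ => ?_
    simp only [Fin.sum_univ_two]
    ring
  · refine integrableOn_B2_of_ball hr ?_
    have := fun i => (df i).continuousOn
    have := fun i => (d1 i).continuousOn
    simp only [Fin.sum_univ_two]
    fun_prop
  · refine integrableOn_B2_of_ball hr ?_
    have := fun i => (d1 i).continuousOn
    have := fun i => (d2 i).continuousOn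
    simp only [Fin.sum_univ_two]
    fun_prop

/-! ### The kernel `psi` -/

/-- `1 - 2x·y + |x|²|y|²`, the square of `|y||x - y*|` with `y*` the reflection of `y` in the
unit circle. -/
def kq (y x : E2) : ℝ := 1 - 2 * inner ℝ x y + ‖x‖ ^ 2 * ‖y‖ ^ 2

/-- The regularised squared distance `|x-y|² + ε(1-|y|²)²`. -/
def kp (ε : ℝ) (y x : E2) : ℝ := ‖x - y‖ ^ 2 + ε * (1 - ‖y‖ ^ 2) ^ 2

/-- `kq ^ (-1/2)`. -/
def kw (y x : E2) : ℝ := (√(kq y x))⁻¹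

/-- The shifted logarithmic factor of the kernel `psi`. -/
def kN (ε : ℝ) (y x : E2) : ℝ := Real.log (kq y x) - Real.log (kp ε y x) + 5

/-- A regularised and slightly enlarged version of Green's function with pole `y` of the operator
`opA`. -/
def psi (ε : ℝ) (y x : E2) : ℝ := 1 / (4 * π) * √(1 - ‖y‖ ^ 2) * (kw y x * kN ε y x)

/-- The partial derivatives of `psi`. -/
def psiD (ε : ℝ) (i : Fin 2) (y x : E2) : ℝ :=
  1 / (4 * π) * √(1 - ‖y‖ ^ 2) *
    (-(‖y‖ ^ 2 * x i - y i) * kw y x ^ 3 * kN ε y x + 2 * (‖y‖ ^ 2 * x i - y i) * kw y x ^ 3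
      - 2 * (x i - y i) * kw y x * (kp ε y x)⁻¹)

lemma kq_lower (y x : E2) : (1 - ‖x‖ * ‖y‖) ^ 2 ≤ kq y x := by
  have := real_inner_le_norm x y
  unfold kq
  nlinarith

lemma kq_pos {y x : E2} (h : ‖x‖ * ‖y‖ < 1) : 0 < kq y x :=
  lt_of_lt_of_le (by have : 0 < 1 - ‖x‖ * ‖y‖ := by linarith
                     positivity) (kq_lower y x)

lemma kp_pos {ε : ℝ} (hε : 0 < ε) {y : E2} (hy : ‖y‖ < 1) (x : E2) : 0 < kp ε y x := by
  have : 0 < 1 - ‖y‖ ^ 2 := by nlinarith [norm_nonneg y]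
  unfold kp; positivity

lemma mul_norm_lt {y x : E2} {r : ℝ} (hry : r * ‖y‖ < 1) (hx : x ∈ Metric.ball (0 : E2) r) :
    ‖x‖ * ‖y‖ < 1 := by
  simp only [Metric.mem_ball, dist_zero_right] at hx
  nlinarith [norm_nonneg y]

lemma contDiffOn_kw {y : E2} {r : ℝ} (hry : r * ‖y‖ < 1) {n : ℕ∞} :
    ContDiffOn ℝ n (kw y) (Metric.ball 0 r) := by
  have hq : ∀ x ∈ Metric.ball (0 : E2) r, kq y x ≠ 0 := fun x hx => (kq_pos (mul_norm_lt hry hx)).ne'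
  have h1 : ContDiffOn ℝ n (kq y) (Metric.ball 0 r) := by
    apply ContDiff.contDiffOn
    have := contDiff_norm_sq ℝ (E := E2) (n := n)
    exact (contDiff_const.sub (contDiff_const.mul (contDiff_id.inner ℝ contDiff_const))).add
      (this.mul contDiff_const)
  exact (h1.sqrt hq).inv fun x hx => (Real.sqrt_pos.2 (kq_pos (mul_norm_lt hry hx))).ne'

lemma contDiffOn_kN {ε : ℝ} (hε : 0 < ε) {y : E2} (hy : ‖y‖ < 1) {r : ℝ} (hry : r * ‖y‖ < 1)
    {n : ℕ∞} : ContDiffOn ℝ n (kN ε y) (Metric.ball 0 r) := by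
  have hq : ∀ x ∈ Metric.ball (0 : E2) r, kq y x ≠ 0 := fun x hx => (kq_pos (mul_norm_lt hry hx)).ne'
  have hn := contDiff_norm_sq ℝ (E := E2) (n := n)
  have h1 : ContDiffOn ℝ n (kq y) (Metric.ball 0 r) := by
    apply ContDiff.contDiffOn
    exact (contDiff_const.sub (contDiff_const.mul (contDiff_id.inner ℝ contDiff_const))).add
      (hn.mul contDiff_const)
  have h2 : ContDiffOn ℝ n (kp ε y) (Metric.ball 0 r) := by
    apply ContDiff.contDiffOn
    unfold kp
    exact (hn.comp (contDiff_id.sub contDiff_const)).add contDiff_const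
  exact ((h1.log hq).sub (h2.log fun x _ => (kp_pos hε hy x).ne')).add contDiffOn_const

lemma contDiffOn_psi {ε : ℝ} (hε : 0 < ε) {y : E2} (hy : ‖y‖ < 1) {r : ℝ} (hry : r * ‖y‖ < 1)
    {n : ℕ∞} : ContDiffOn ℝ n (psi ε y) (Metric.ball 0 r) :=
  contDiffOn_const.mul ((contDiffOn_kw hry).mul (contDiffOn_kN hε hy hry))

lemma hasFDerivAt_kq (y x : E2) :
    HasFDerivAt (kq y) ((2 * ‖y‖ ^ 2) • innerSL ℝ x - (2 : ℝ) • innerSL ℝ y) x := by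
  have h1 : HasFDerivAt (fun x : E2 => ‖x‖ ^ 2) (2 • innerSL ℝ x) x :=
    (hasStrictFDerivAt_norm_sq x).hasFDerivAt
  have h2 : HasFDerivAt (fun x : E2 => inner ℝ x y) (innerSL ℝ y) x := by
    have := (innerSL ℝ y).hasFDerivAt (x := x)
    refine this.congr_of_eventuallyEq (Eventually.of_forall fun z => ?_)
    simp [real_inner_comm]
  have := ((h2.const_mul 2).const_sub 1).add (h1.mul_const (‖y‖ ^ 2))
  refine this.congr_fderiv ?_
  ext e
  simp
  ring

lemma hasFDerivAt_kp (ε : ℝ) (y x : E2) :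
    HasFDerivAt (kp ε y) ((2 : ℝ) • innerSL ℝ (x - y)) x := by
  have h1 := ((hasStrictFDerivAt_norm_sq (x - y)).hasFDerivAt).comp x
    ((hasFDerivAt_id (𝕜 := ℝ) x).sub_const y)
  refine (h1.add_const (ε * (1 - ‖y‖ ^ 2) ^ 2)).congr_fderiv ?_
  ext e
  simp

lemma hasFDerivAt_kw {y x : E2} (h : ‖x‖ * ‖y‖ < 1) :
    HasFDerivAt (kw y) ((-(1 / 2) * kw y x ^ 3) •
      ((2 * ‖y‖ ^ 2) • innerSL ℝ x - (2 : ℝ) • innerSL ℝ y)) x := by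
  have hq := kq_pos h
  have hs : 0 < √(kq y x) := Real.sqrt_pos.2 hq
  have h1 : HasDerivAt (fun t : ℝ => (√t)⁻¹) (-(1 / 2) * kw y x ^ 3) (kq y x) := by
    refine ((Real.hasDerivAt_sqrt hq.ne').inv hs.ne').congr_deriv ?_
    unfold kw
    field_simp
  exact h1.comp_hasFDerivAt x (hasFDerivAt_kq y x)

lemma kw_sq {y x : E2} (h : ‖x‖ * ‖y‖ < 1) : kw y x ^ 2 = (kq y x)⁻¹ := by
  unfold kw; rw [inv_pow, Real.sq_sqrt (kq_pos h).le]

lemma hasFDerivAt_kN {ε : ℝ} (hε : 0 < ε) {y x : E2} (hy : ‖y‖ < 1) (h : ‖x‖ * ‖y‖ < 1) :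
    HasFDerivAt (kN ε y) (kw y x ^ 2 • ((2 * ‖y‖ ^ 2) • innerSL ℝ x - (2 : ℝ) • innerSL ℝ y) -
      (kp ε y x)⁻¹ • ((2 : ℝ) • innerSL ℝ (x - y))) x := by
  rw [kw_sq h]
  exact (((hasFDerivAt_kq y x).log (kq_pos h).ne').sub
    ((hasFDerivAt_kp ε y x).log (kp_pos hε hy x).ne')).add_const 5

lemma pd_psi {ε : ℝ} (hε : 0 < ε) {y x : E2} (hy : ‖y‖ < 1) (h : ‖x‖ * ‖y‖ < 1) (i : Fin 2) :
    pd i (psi ε y) x = psiD ε i y x := by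
  have := ((hasFDerivAt_kw h).mul (hasFDerivAt_kN hε hy h)).const_mul
    (1 / (4 * π) * √(1 - ‖y‖ ^ 2))
  unfold pd
  rw [HasFDerivAt.fderiv (f := psi ε y) this]
  simp [psiD, EuclideanSpace.inner_single_right]
  ring

lemma pd_psiD {ε : ℝ} (hε : 0 < ε) {y x : E2} (hy : ‖y‖ < 1) (h : ‖x‖ * ‖y‖ < 1) (i : Fin 2) :
    pd i (psiD ε i y) x = 1 / (4 * π) * √(1 - ‖y‖ ^ 2) *
      (-‖y‖ ^ 2 * kw y x ^ 3 * kN ε y x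
        + 3 * (‖y‖ ^ 2 * x i - y i) ^ 2 * kw y x ^ 5 * kN ε y x
        - 2 * (‖y‖ ^ 2 * x i - y i) * kw y x ^ 3 *
          ((‖y‖ ^ 2 * x i - y i) * kw y x ^ 2 - (x i - y i) * (kp ε y x)⁻¹)
        + 2 * ‖y‖ ^ 2 * kw y x ^ 3 - 6 * (‖y‖ ^ 2 * x i - y i) ^ 2 * kw y x ^ 5
        - 2 * kw y x * (kp ε y x)⁻¹
        + 2 * (x i - y i) * (‖y‖ ^ 2 * x i - y i) * kw y x ^ 3 * (kp ε y x)⁻¹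
        + 4 * (x i - y i) ^ 2 * kw y x * ((kp ε y x)⁻¹) ^ 2) := by
  have hx : HasFDerivAt (fun x : E2 => x i) (EuclideanSpace.proj i : E2 →L[ℝ] ℝ) x :=
    (EuclideanSpace.proj i : E2 →L[ℝ] ℝ).hasFDerivAt
  have ha : HasFDerivAt (fun x : E2 => ‖y‖ ^ 2 * x i - y i)
      (‖y‖ ^ 2 • (EuclideanSpace.proj i : E2 →L[ℝ] ℝ)) x := (hx.const_mul _).sub_const _
  have hb : HasFDerivAt (fun x : E2 => x i - y i) (EuclideanSpace.proj i : E2 →L[ℝ] ℝ) x :=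
    hx.sub_const _
  have hw := hasFDerivAt_kw h
  have hN := hasFDerivAt_kN hε hy h
  have hP := (hasDerivAt_inv (kp_pos hε hy x).ne').comp_hasFDerivAt x (hasFDerivAt_kp ε y x)
  have := (((((ha.neg).mul (hw.pow 3)).mul hN).add ((ha.const_mul 2).mul (hw.pow 3))).sub
    (((hb.const_mul 2).mul hw).mul hP)).const_mul (1 / (4 * π) * √(1 - ‖y‖ ^ 2))
  unfold pd
  rw [HasFDerivAt.fderiv (f := psiD ε i y) this]
  simp [EuclideanSpace.inner_single_right]
  left
  ring

/-! ### Bounds on `opA (psi ε y)` -/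

/-- The width at which the kernel with pole `y` is regularised. -/
def gam (ε : ℝ) (y : E2) : ℝ := √ε * (1 - ‖y‖ ^ 2)

/-- The factor `√(1-|y|²) kq^(-1/2)` of `psi`. -/
def kg (y x : E2) : ℝ := √(1 - ‖y‖ ^ 2) * kw y x

lemma one_sub_sq_pos {y : E2} (hy : ‖y‖ < 1) : 0 < 1 - ‖y‖ ^ 2 := by nlinarith [norm_nonneg y]

lemma norm_mul_norm_lt_one {y x : E2} (hy : ‖y‖ < 1) (hx : ‖x‖ < 1) : ‖x‖ * ‖y‖ < 1 := by
  nlinarith [norm_nonneg y, norm_nonneg x]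

lemma gam_pos {ε : ℝ} (hε : 0 < ε) {y : E2} (hy : ‖y‖ < 1) : 0 < gam ε y :=
  mul_pos (Real.sqrt_pos.2 hε) (one_sub_sq_pos hy)

lemma gam_sq {ε : ℝ} (hε : 0 < ε) (y : E2) : gam ε y ^ 2 = ε * (1 - ‖y‖ ^ 2) ^ 2 := by
  unfold gam; rw [mul_pow, Real.sq_sqrt hε.le]

lemma kp_eq {ε : ℝ} (hε : 0 < ε) (y x : E2) : kp ε y x = ‖x - y‖ ^ 2 + gam ε y ^ 2 := by
  rw [gam_sq hε]; rfl

/-- The exact value of `opA (psi ε y)`: an approximate identity at `y`, a term that is nonnegative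
because of the logarithm, and a remainder. -/
lemma opA_psi {ε : ℝ} (hε : 0 < ε) {y x : E2} (hy : ‖y‖ < 1) (hx : ‖x‖ < 1) :
    opA (psi ε y) x = 1 / (4 * π) * kg y x *
      (4 * (1 - ‖x‖ ^ 2) * gam ε y ^ 2 * ((kp ε y x)⁻¹) ^ 2 +
        (1 - ‖y‖ ^ 2) * kw y x ^ 2 * kN ε y x +
        4 * kw y x ^ 2 * (-(1 - ‖y‖ ^ 2) + (1 - inner ℝ x y) * gam ε y ^ 2 * (kp ε y x)⁻¹)) := by
  have h := norm_mul_norm_lt_one hy hx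
  have e2 : ∀ i, pd i (pd i (psi ε y)) x = pd i (psiD ε i y) x := by
    intro i
    have : pd i (psi ε y) =ᶠ[nhds x] psiD ε i y := by
      filter_upwards [(isOpen_lt continuous_norm continuous_const).mem_nhds hx] with z hz
      exact pd_psi hε hy (norm_mul_norm_lt_one hy hz) i
    unfold pd at this ⊢
    rw [this.fderiv_eq]
  have h1 : kw y x ^ 2 * kq y x = 1 := by rw [kw_sq h]; exact inv_mul_cancel₀ (kq_pos h).ne'
  have h2 : (kp ε y x)⁻¹ * kp ε y x = 1 := inv_mul_cancel₀ (kp_pos hε hy x).ne'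
  have nx : ‖x‖ ^ 2 = x 0 ^ 2 + x 1 ^ 2 := by simp [EuclideanSpace.norm_sq_eq]
  have ny : ‖y‖ ^ 2 = y 0 ^ 2 + y 1 ^ 2 := by simp [EuclideanSpace.norm_sq_eq]
  have nxy : ‖x - y‖ ^ 2 = (x 0 - y 0) ^ 2 + (x 1 - y 1) ^ 2 := by simp [EuclideanSpace.norm_sq_eq]
  have nin : inner ℝ x y = x 0 * y 0 + x 1 * y 1 := by
    simp [PiLp.inner_apply, Fin.sum_univ_two]; ring
  have h1' : kw y x ^ 2 * (1 - 2 * (x 0 * y 0 + x 1 * y 1) +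
      (x 0 ^ 2 + x 1 ^ 2) * (y 0 ^ 2 + y 1 ^ 2)) = 1 := by
    rw [← nin, ← nx, ← ny]; exact h1
  have h2' : (kp ε y x)⁻¹ * ((x 0 - y 0) ^ 2 + (x 1 - y 1) ^ 2 + gam ε y ^ 2) = 1 := by
    rw [← nxy, ← kp_eq hε]; exact h2
  unfold opA
  simp only [e2, pd_psi hε hy h, pd_psiD hε hy h, Fin.sum_univ_two]
  unfold psi psiD kg
  rw [nin, nx, ny]
  generalize (kp ε y x)⁻¹ = P at *
  generalize kw y x = w at *
  generalize kN ε y x = N at *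
  generalize gam ε y = G at *
  generalize √(1 - (y 0 ^ 2 + y 1 ^ 2)) = κ at *
  generalize 1 / (4 * π) = c at *
  clear h1 h2 e2
  linear_combination c * κ * ((-3 * (1 - (x 0 ^ 2 + x 1 ^ 2)) * (y 0 ^ 2 + y 1 ^ 2) * w ^ 3 * N - w * N
      + 8 * (1 - (x 0 ^ 2 + x 1 ^ 2)) * (y 0 ^ 2 + y 1 ^ 2) * w ^ 3
      + 4 * (x 0 ^ 2 + x 1 ^ 2 - (x 0 * y 0 + x 1 * y 1)) * w * P) * h1'
    + (-4 * (1 - (x 0 ^ 2 + x 1 ^ 2)) * w * P - 4 * (1 - (x 0 * y 0 + x 1 * y 1)) * w ^ 3) * h2')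

lemma kw_pos {y x : E2} (hy : ‖y‖ < 1) (hx : ‖x‖ < 1) : 0 < kw y x :=
  inv_pos.2 (Real.sqrt_pos.2 (kq_pos (norm_mul_norm_lt_one hy hx)))

lemma kg_pos {y x : E2} (hy : ‖y‖ < 1) (hx : ‖x‖ < 1) : 0 < kg y x :=
  mul_pos (Real.sqrt_pos.2 (one_sub_sq_pos hy)) (kw_pos hy hx)

lemma kq_eq (y x : E2) : kq y x = ‖x - y‖ ^ 2 + (1 - ‖x‖ ^ 2) * (1 - ‖y‖ ^ 2) := by
  unfold kq; rw [norm_sub_sq_real]; ring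

/-- The constant `5` in `kN` is chosen for this bound, which makes the part of `opA (psi ε y)` away
from the pole nonnegative, see `opA_psi_ge`. -/
lemma kN_ge {ε : ℝ} (hε : 0 < ε) (hε1 : ε ≤ 1 / 4) {y x : E2} (hy : ‖y‖ < 1) (hx : ‖x‖ < 1) :
    4 ≤ kN ε y x := by
  have hq := kq_pos (norm_mul_norm_lt_one hy hx)
  have hp := kp_pos hε hy x
  have hpq : kp ε y x ≤ 2 * kq y x := by
    have h1 := kq_eq y x
    have h2 := kq_lower y x
    have hX := one_sub_sq_pos hx
    have hY := one_sub_sq_pos hy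
    have h3 : (1 - ‖y‖ ^ 2) ^ 2 ≤ 4 * kq y x := by
      have a1 : 1 - ‖y‖ ≤ 1 - ‖x‖ * ‖y‖ := by nlinarith [norm_nonneg y]
      have a2 : (1 - ‖y‖) ^ 2 ≤ (1 - ‖x‖ * ‖y‖) ^ 2 := pow_le_pow_left₀ (by linarith) a1 2
      have a3 : 1 - ‖y‖ ^ 2 ≤ 2 * (1 - ‖y‖) := by nlinarith [norm_nonneg y]
      nlinarith
    have h4 : ε * (1 - ‖y‖ ^ 2) ^ 2 ≤ kq y x := by nlinarith [sq_nonneg (1 - ‖y‖ ^ 2)]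
    have h5 : 0 < (1 - ‖x‖ ^ 2) * (1 - ‖y‖ ^ 2) := mul_pos hX hY
    unfold kp
    linarith
  have := Real.log_le_log hp hpq
  rw [Real.log_mul two_ne_zero hq.ne'] at this
  have := Real.log_two_lt_d9
  unfold kN
  linarith

lemma concK_sub {ε : ℝ} (hε : 0 < ε) (y x : E2) :
    concK (gam ε y) (x - y) = 1 / π * (gam ε y ^ 2 * ((kp ε y x)⁻¹) ^ 2) := by
  unfold concK; rw [kp_eq hε, div_eq_mul_inv (gam ε y ^ 2), inv_pow]

lemma inner_bound {y x : E2} (hy : ‖y‖ < 1) : 1 - inner ℝ x y ≤ (1 - ‖y‖ ^ 2) + ‖x - y‖ := by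
  have h := real_inner_le_norm (y - x) y
  rw [inner_sub_left, real_inner_self_eq_norm_sq, norm_sub_rev] at h
  nlinarith [norm_nonneg (x - y)]

lemma inner_lt_one {y x : E2} (hy : ‖y‖ < 1) (hx : ‖x‖ < 1) : inner ℝ x y < 1 :=
  (real_inner_le_norm x y).trans_lt (norm_mul_norm_lt_one hy hx)

/-- `opA (psi ε y)` dominates an approximate identity at `y`; since the functions tested against it are
nonnegative, the rest may be dropped. -/
lemma opA_psi_ge {ε : ℝ} (hε : 0 < ε) (hε1 : ε ≤ 1 / 4) {y x : E2} (hy : ‖y‖ < 1) (hx : ‖x‖ < 1) :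
    concK (gam ε y) (x - y) * ((1 - ‖x‖ ^ 2) * kg y x) ≤ opA (psi ε y) x := by
  rw [opA_psi hε hy hx, concK_sub hε]
  have hN := kN_ge hε hε1 hy hx
  have hg := kg_pos hy hx
  have hP := inv_pos.2 (kp_pos hε hy x)
  have hd := inner_lt_one hy hx
  have hY := one_sub_sq_pos hy
  have r : 0 ≤ 1 / (4 * π) * kg y x * ((1 - ‖y‖ ^ 2) * kw y x ^ 2 * (kN ε y x - 4) +
      4 * kw y x ^ 2 * ((1 - inner ℝ x y) * gam ε y ^ 2 * (kp ε y x)⁻¹)) := by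
    have : 0 ≤ kN ε y x - 4 := by linarith
    have : 0 ≤ 1 - inner ℝ x y := by linarith
    positivity
  have e : 1 / π * (gam ε y ^ 2 * (kp ε y x)⁻¹ ^ 2) * ((1 - ‖x‖ ^ 2) * kg y x) =
      1 / (4 * π) * kg y x * (4 * (1 - ‖x‖ ^ 2) * gam ε y ^ 2 * ((kp ε y x)⁻¹) ^ 2) := by
    field_simp
  rw [e]
  linarith

lemma kg_cube {y x : E2} (hy : ‖y‖ < 1) :
    kg y x ^ 3 = kg y x * ((1 - ‖y‖ ^ 2) * kw y x ^ 2) := by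
  have : √(1 - ‖y‖ ^ 2) ^ 2 = 1 - ‖y‖ ^ 2 := Real.sq_sqrt (one_sub_sq_pos hy).le
  unfold kg
  linear_combination √(1 - ‖y‖ ^ 2) * kw y x ^ 3 * this

/-- `opA (psi ε y)` exceeds the approximate identity at `y` by at most a remainder whose pairing with
`psi ε z` is bounded uniformly in `y`, `z` and `ε`, by `kg_pow_four_le`. -/
lemma opA_psi_le {ε : ℝ} (hε : 0 < ε) (hε1 : ε ≤ 1 / 4) {y x : E2} (hy : ‖y‖ < 1) (hx : ‖x‖ < 1) :
    opA (psi ε y) x ≤ concK (gam ε y) (x - y) * ((1 - ‖x‖ ^ 2) * kg y x) +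
      1 / (4 * π) * kg y x ^ 3 * (kN ε y x + 2) := by
  rw [opA_psi hε hy hx, concK_sub hε]
  have hg := kg_pos hy hx
  have hP := inv_pos.2 (kp_pos hε hy x)
  have hY := one_sub_sq_pos hy
  have hG := gam_pos hε hy
  have e : 1 / π * (gam ε y ^ 2 * (kp ε y x)⁻¹ ^ 2) * ((1 - ‖x‖ ^ 2) * kg y x) =
      1 / (4 * π) * kg y x * (4 * (1 - ‖x‖ ^ 2) * gam ε y ^ 2 * ((kp ε y x)⁻¹) ^ 2) := by
    field_simp
  have b1 : gam ε y ^ 2 * (kp ε y x)⁻¹ ≤ 1 := by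
    rw [← div_eq_mul_inv, div_le_one (kp_pos hε hy x), kp_eq hε]
    nlinarith [sq_nonneg ‖x - y‖]
  have b2 : ‖x - y‖ * (gam ε y ^ 2 * (kp ε y x)⁻¹) ≤ gam ε y := by
    rw [← div_eq_mul_inv, ← mul_div_assoc, div_le_iff₀ (kp_pos hε hy x), kp_eq hε]
    nlinarith [sq_nonneg (‖x - y‖ - gam ε y), norm_nonneg (x - y), mul_pos hG hG]
  have b3 : gam ε y ≤ 1 / 2 * (1 - ‖y‖ ^ 2) := by
    unfold gam
    have : √ε ≤ 1 / 2 := by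
      rw [Real.sqrt_le_left (by norm_num)]; linarith
    gcongr
  have b0 : 0 ≤ gam ε y ^ 2 * (kp ε y x)⁻¹ := by positivity
  have b4 : (1 - inner ℝ x y) * gam ε y ^ 2 * (kp ε y x)⁻¹ ≤ 3 / 2 * (1 - ‖y‖ ^ 2) := by
    have := mul_le_mul_of_nonneg_right (inner_bound (x := x) hy) b0
    nlinarith
  have r : 0 ≤ 1 / (4 * π) * kg y x * (4 * kw y x ^ 2) * (3 / 2 * (1 - ‖y‖ ^ 2) -
      (1 - inner ℝ x y) * gam ε y ^ 2 * (kp ε y x)⁻¹) :=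
    mul_nonneg (by positivity) (by linarith)
  rw [e, kg_cube hy]
  linarith

lemma weight_kg_sq {y x : E2} (hy : ‖y‖ < 1) (hx : ‖x‖ < 1) :
    (1 - ‖x‖ ^ 2) * kg y x ^ 2 = 1 - (‖x - y‖ * kw y x) ^ 2 := by
  have h1 : √(1 - ‖y‖ ^ 2) ^ 2 = 1 - ‖y‖ ^ 2 := Real.sq_sqrt (one_sub_sq_pos hy).le
  have h2 : kw y x ^ 2 * kq y x = 1 := by
    rw [kw_sq (norm_mul_norm_lt_one hy hx)]; exact inv_mul_cancel₀ (kq_pos (norm_mul_norm_lt_one hy hx)).ne'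
  unfold kg
  rw [mul_pow, mul_pow, h1]
  rw [kq_eq] at h2
  linear_combination h2

lemma kw_le {y x : E2} (hy : ‖y‖ < 1) (hx : ‖x‖ < 1) : kw y x ≤ (1 - ‖y‖)⁻¹ := by
  unfold kw
  have : 1 - ‖y‖ ≤ 1 - ‖x‖ * ‖y‖ := by nlinarith [norm_nonneg y]
  refine inv_anti₀ (by linarith) ?_
  refine Real.le_sqrt_of_sq_le (le_trans ?_ (kq_lower y x))
  exact pow_le_pow_left₀ (by linarith) this 2

/-- The factor multiplying the approximate identity in `opA_psi_ge` is `1` at the pole, with a Lipschitz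
lower bound nearby, once the weight `√(1-|x|²)` relating `v` to `u` is taken out. -/
lemma one_sub_le_kg {y x : E2} (hy : ‖y‖ < 1) (hx : ‖x‖ < 1) :
    1 - ‖x - y‖ * (1 - ‖y‖)⁻¹ ≤ √(1 - ‖x‖ ^ 2) * kg y x := by
  have h := weight_kg_sq hy hx
  have hX := one_sub_sq_pos hx
  have h1 : √(1 - ‖x‖ ^ 2) ^ 2 = 1 - ‖x‖ ^ 2 := Real.sq_sqrt hX.le
  have hg := kg_pos hy hx
  set t := √(1 - ‖x‖ ^ 2) * kg y x
  set s := ‖x - y‖ * kw y x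
  have ht0 : 0 ≤ t := by positivity
  have hs0 : 0 ≤ s := mul_nonneg (norm_nonneg _) (kw_pos hy hx).le
  have hts : t ^ 2 = 1 - s ^ 2 := by rw [← h, ← h1]; simp only [t]; ring
  have hs : s ≤ ‖x - y‖ * (1 - ‖y‖)⁻¹ := by
    have := kw_le hy hx
    simp only [s]; gcongr
  have : 1 - s ≤ t := by
    by_contra hc
    push Not at hc
    have : s ≤ 1 := by nlinarith
    nlinarith
  linarith

lemma weight_kg_mul_le {y z x : E2} (hy : ‖y‖ < 1) (hz : ‖z‖ < 1) (hx : ‖x‖ < 1) :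
    (1 - ‖x‖ ^ 2) * kg y x * kg z x ≤ 1 := by
  have h1 := weight_kg_sq hy hx
  have h2 := weight_kg_sq hz hx
  have hX := one_sub_sq_pos hx
  nlinarith [sq_nonneg (‖x - y‖ * kw y x), sq_nonneg (‖x - z‖ * kw z x),
    mul_nonneg hX.le (sq_nonneg (kg y x - kg z x))]

/-! ### Pairings with the kernel `psi` -/

/-- A radius larger than `1` on which the kernel with pole `y` is smooth. -/
lemma exists_radius {y : E2} (hy : ‖y‖ < 1) : ∃ r : ℝ, 1 < r ∧ r * ‖y‖ < 1 := by
  have := norm_nonneg y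
  refine ⟨2 / (1 + ‖y‖), ?_, ?_⟩
  · rw [lt_div_iff₀ (by linarith)]; linarith
  · rw [div_mul_eq_mul_div, div_lt_one (by linarith)]; linarith

lemma integrableOn_mul_opA {f : E2 → ℝ} {r : ℝ} (hr : 1 < r)
    (hf : ContinuousOn f (Metric.ball 0 r)) {ψ : E2 → ℝ}
    (hψ : ContDiffOn ℝ 2 ψ (Metric.ball 0 r)) : IntegrableOn (fun x => f x * opA ψ x) B2 := by
  have d1 : ∀ i, ContDiffOn ℝ 1 (pd i ψ) (Metric.ball 0 r) := fun i =>
    contDiffOn_pd (m := 1) (n := 2) (by norm_num) hψ i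
  have d2 : ∀ i, ContDiffOn ℝ 0 (pd i (pd i ψ)) (Metric.ball 0 r) := fun i =>
    contDiffOn_pd (m := 0) (n := 1) (by norm_num) (d1 i) i
  refine integrableOn_B2_of_ball hr ?_
  unfold opA
  have := fun i => (d1 i).continuousOn
  have := fun i => (d2 i).continuousOn
  have := hψ.continuousOn
  simp only [Fin.sum_univ_two]
  fun_prop

lemma integrable_concK_norm (γ : ℝ) (hγ : 0 < γ) : Integrable fun x : E2 => concK γ x * ‖x‖ := by
  refine Integrable.mono' ((integrable_singJ γ hγ).const_mul (γ / π))
    ((continuous_concK γ hγ).mul continuous_norm).aestronglyMeasurable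
    (Eventually.of_forall fun x => ?_)
  rw [Real.norm_of_nonneg (mul_nonneg (concK_nonneg _ _) (norm_nonneg _))]
  exact concK_mul_norm_le γ hγ x

lemma integral_concK_norm_le (γ : ℝ) (hγ : 0 < γ) : ∫ x : E2, concK γ x * ‖x‖ ≤ π * γ := by
  calc _ ≤ ∫ x, γ / π * singJ γ x :=
        integral_mono (integrable_concK_norm γ hγ) ((integrable_singJ γ hγ).const_mul _)
          (concK_mul_norm_le γ hγ)
    _ = π * γ := by rw [integral_const_mul, integral_singJ γ hγ]; field_simp

/-- Testing with the kernel of pole `y` almost evaluates `u = √(1-|x|²) v` at `y`. -/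
lemma bilQ_psi_ge {v u : E2 → ℝ} (hv : ContDiff ℝ 1 v) (hv0 : ∀ x, 0 ≤ v x)
    (hu : ∀ x ∈ B2, u x = √(1 - ‖x‖ ^ 2) * v x) (hu0 : ∀ x, x ∉ B2 → u x = 0) {L M : ℝ}
    (hM0 : 0 ≤ M) (hL : ∀ x y, u y - u x ≤ L * ‖x - y‖) (hM : ∀ x, u x ≤ M) {R : ℝ} (hR : R < 1)
    {ε : ℝ} (hε : 0 < ε) (hε1 : ε ≤ 1 / 4) {y : E2} (hy : ‖y‖ ≤ R) :
    u y - (L + M * (1 - R)⁻¹) * (π * gam ε y) ≤ bilQ v (psi ε y) := by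
  have hy1 : ‖y‖ < 1 := hy.trans_lt hR
  obtain ⟨r, hr, hry⟩ := exists_radius hy1
  have hγ := gam_pos hε hy1
  rw [bilQ_eq v (psi ε y) r hr hv.contDiffOn (contDiffOn_psi (n := 2) hε hy1 hry)]
  set Λ := L + M * (1 - R)⁻¹ with hΛ
  have hMR : 0 ≤ M * (1 - R)⁻¹ := mul_nonneg hM0 (inv_nonneg.2 (by linarith))
  have hpt : ∀ x, concK (gam ε y) (x - y) * u y - Λ * (concK (gam ε y) (x - y) * ‖x - y‖) ≤
      B2.indicator (fun x => v x * opA (psi ε y) x) x := by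
    intro x
    have hK := concK_nonneg (gam ε y) (x - y)
    have hd := hL x y
    have hn := norm_nonneg (x - y)
    have e : concK (gam ε y) (x - y) * u y - Λ * (concK (gam ε y) (x - y) * ‖x - y‖) =
      concK (gam ε y) (x - y) * (u y - Λ * ‖x - y‖) := by ring
    rw [e]
    by_cases hx : x ∈ B2
    · rw [Set.indicator_of_mem hx]
      have hx1 : ‖x‖ < 1 := by simpa [B2] using hx
      have hX := one_sub_sq_pos hx1
      have hux : 0 ≤ u x := by rw [hu x hx]; exact mul_nonneg (Real.sqrt_nonneg _) (hv0 x)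
      refine le_trans ?_ (mul_le_mul_of_nonneg_left (opA_psi_ge hε hε1 hy1 hx1) (hv0 x))
      have e2 : v x * (concK (gam ε y) (x - y) * ((1 - ‖x‖ ^ 2) * kg y x)) =
          concK (gam ε y) (x - y) * (u x * (√(1 - ‖x‖ ^ 2) * kg y x)) := by
        rw [hu x hx]
        linear_combination (-v x * concK (gam ε y) (x - y) * kg y x) * Real.sq_sqrt hX.le
      rw [e2]
      refine mul_le_mul_of_nonneg_left ?_ hK
      have h1 := mul_le_mul_of_nonneg_left (one_sub_le_kg hy1 hx1) hux
      have h2 : ‖x - y‖ * (1 - ‖y‖)⁻¹ ≤ ‖x - y‖ * (1 - R)⁻¹ := by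
        have : 0 < 1 - R := by linarith
        gcongr
      have h3 : u x * (‖x - y‖ * (1 - ‖y‖)⁻¹) ≤ M * (‖x - y‖ * (1 - R)⁻¹) := by
        refine mul_le_mul (hM x) h2 ?_ hM0
        have : 0 < 1 - ‖y‖ := by linarith
        positivity
      rw [hΛ]
      linarith
    · rw [Set.indicator_of_notMem hx]
      rw [hu0 x hx] at hd
      refine mul_nonpos_of_nonneg_of_nonpos hK ?_
      have := mul_nonneg hMR hn
      rw [hΛ]
      linarith
  have i1 : Integrable fun x => concK (gam ε y) (x - y) := (integrable_concK _ hγ).comp_sub_right y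
  have i2 : Integrable fun x => concK (gam ε y) (x - y) * ‖x - y‖ :=
    (integrable_concK_norm _ hγ).comp_sub_right y
  have i3 := integrableOn_mul_opA hr hv.continuous.continuousOn
    (contDiffOn_psi (n := 2) hε hy1 hry)
  have := integral_mono ((i1.mul_const (u y)).sub (i2.const_mul Λ))
    ((integrable_indicator_iff measurableSet_B2).2 i3) hpt
  rw [integral_indicator measurableSet_B2] at this
  refine le_trans ?_ this
  simp only [Pi.sub_apply]
  rw [integral_sub (i1.mul_const (u y)) (i2.const_mul Λ), integral_mul_const, integral_const_mul,
    integral_sub_right_eq_self (fun x => concK (gam ε y) x) y,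
    integral_sub_right_eq_self (fun x => concK (gam ε y) x * ‖x‖) y, integral_concK _ hγ, one_mul]
  have hL0 : 0 ≤ L := by
    by_contra hc
    push Not at hc
    have a := hL (EuclideanSpace.single 0 1) 0
    have b := hL 0 (EuclideanSpace.single 0 1)
    simp at a b
    linarith
  have := mul_le_mul_of_nonneg_left (integral_concK_norm_le _ hγ) (add_nonneg hL0 hMR)
  linarith

lemma log_pow_four_le {t : ℝ} (ht : 1 ≤ t) :
    (7 + Real.log t) ^ 4 ≤ 384 * Real.exp (7 / 2) * √t := by
  have h0 := Real.log_nonneg ht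
  have h := Real.pow_div_factorial_le_exp ((7 + Real.log t) / 2) (by linarith) 4
  have e : Real.exp ((7 + Real.log t) / 2) = Real.exp (7 / 2) * √t := by
    rw [add_div, Real.exp_add, Real.exp_half, Real.exp_half, Real.exp_log (by linarith)]
  rw [e] at h
  norm_num [Nat.factorial] at h
  rw [div_le_iff₀ (by norm_num)] at h
  nlinarith

/-- A quartic bound, by a function of integral independent of `y`, for the logarithmic factors in the
remainder of `opA_psi_le`. -/
lemma kg_pow_four_le {ε : ℝ} (hε : 0 < ε) (hε1 : ε ≤ 1 / 4) {y x : E2} (hy : ‖y‖ < 1)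
    (hx : ‖x‖ < 1) (hxy : x ≠ y) :
    (kg y x * (kN ε y x + 2)) ^ 4 ≤
      3072 * Real.exp (7 / 2) * singJ ((1 - ‖y‖ ^ 2) / 2) (x - y) := by
  have hq := kq_pos (norm_mul_norm_lt_one hy hx)
  have hY := one_sub_sq_pos hy
  have hX := one_sub_sq_pos hx
  have hr : 0 < ‖x - y‖ := norm_pos_iff.2 (sub_ne_zero.2 hxy)
  have hw := kw_pos hy hx
  have hqp : ‖x - y‖ ^ 2 ≤ kq y x := by
    rw [kq_eq]; have := mul_pos hX hY; linarith
  have hN : kN ε y x + 2 ≤ 7 + Real.log (kq y x / ‖x - y‖ ^ 2) := by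
    rw [Real.log_div hq.ne' (by positivity)]
    have : Real.log (‖x - y‖ ^ 2) ≤ Real.log (kp ε y x) := by
      refine Real.log_le_log (by positivity) ?_
      unfold kp
      have : 0 < ε * (1 - ‖y‖ ^ 2) ^ 2 := by positivity
      linarith
    unfold kN
    linarith
  have hN0 : 0 ≤ kN ε y x + 2 := by have := kN_ge hε hε1 hy hx; linarith
  have h1 : (kN ε y x + 2) ^ 4 ≤ 384 * Real.exp (7 / 2) * (kw y x * ‖x - y‖)⁻¹ := by
    refine (pow_le_pow_left₀ hN0 hN 4).trans
      ((log_pow_four_le ((one_le_div (by positivity)).2 hqp)).trans (le_of_eq ?_))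
    rw [Real.sqrt_div hq.le, Real.sqrt_sq hr.le]
    unfold kw
    rw [mul_inv, inv_inv, div_eq_mul_inv (√(kq y x))]
  have hkg : kg y x ^ 4 = (1 - ‖y‖ ^ 2) ^ 2 * kw y x ^ 4 := by
    have : √(1 - ‖y‖ ^ 2) ^ 2 = 1 - ‖y‖ ^ 2 := Real.sq_sqrt hY.le
    unfold kg
    rw [mul_pow, show √(1 - ‖y‖ ^ 2) ^ 4 = (√(1 - ‖y‖ ^ 2) ^ 2) ^ 2 by ring, this]
  have hw2 : (1 - ‖y‖ ^ 2) * kw y x ≤ 2 := by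
    have h2 := kw_le hy hx
    have h3 : 0 < 1 - ‖y‖ := by linarith
    calc (1 - ‖y‖ ^ 2) * kw y x ≤ (1 - ‖y‖ ^ 2) * (1 - ‖y‖)⁻¹ := by gcongr
      _ = 1 + ‖y‖ := by field_simp; ring
      _ ≤ 2 := by linarith
  set b := (1 - ‖y‖ ^ 2) / 2 with hb
  have hb0 : 0 < b := by positivity
  have hb2 : b ^ 2 * kw y x ^ 2 ≤ 1 := by
    have : b * kw y x ≤ 1 := by rw [hb]; linarith
    rw [← mul_pow]
    exact pow_le_one₀ (by positivity) this
  have hp2 : ‖x - y‖ ^ 2 * kw y x ^ 2 ≤ 1 := by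
    have := weight_kg_sq hy hx
    have h3 : 0 ≤ (1 - ‖x‖ ^ 2) * kg y x ^ 2 := by positivity
    nlinarith
  have hw3 : kw y x ^ 2 ≤ 2 / (b ^ 2 + ‖x - y‖ ^ 2) := by
    rw [le_div_iff₀ (by positivity)]; linarith
  rw [mul_pow, hkg]
  calc (1 - ‖y‖ ^ 2) ^ 2 * kw y x ^ 4 * (kN ε y x + 2) ^ 4
      ≤ (1 - ‖y‖ ^ 2) ^ 2 * kw y x ^ 4 * (384 * Real.exp (7 / 2) * (kw y x * ‖x - y‖)⁻¹) := by
        gcongr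
    _ = 384 * Real.exp (7 / 2) * ((1 - ‖y‖ ^ 2) / ‖x - y‖) * ((1 - ‖y‖ ^ 2) * kw y x) *
        kw y x ^ 2 := by field_simp
    _ ≤ 384 * Real.exp (7 / 2) * ((1 - ‖y‖ ^ 2) / ‖x - y‖) * 2 *
        (2 / (b ^ 2 + ‖x - y‖ ^ 2)) := by
        gcongr
    _ = 3072 * Real.exp (7 / 2) * singJ b (x - y) := by
        unfold singJ
        rw [show 1 - ‖y‖ ^ 2 = 2 * b by rw [hb]; ring]
        field_simp
        norm_num

/-- Averaging the logarithmic factor of the kernel with pole `z` against the approximate identity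
around `y`: pointwise form. -/
lemma concK_mul_kN_le {ε : ℝ} (hε : 0 < ε) {y z x : E2} (hy : ‖y‖ < 1)
    (hz : ‖z‖ < 1) (hx : ‖x‖ < 1) (hxz : x ≠ z) {δ : ℝ} (hδ : 0 < δ) (hδz : δ ≤ gam ε z) :
    concK (gam ε y) (x - y) * kN ε z x ≤
      concK (gam ε y) (x - y) * (9 - 2 * Real.log (max ‖y - z‖ δ)) +
        1 / π * singJ (max ‖y - z‖ δ / 2) (x - z) := by
  set m := max ‖y - z‖ δ with hm
  have hm0 : 0 < m := lt_max_of_lt_right hδ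
  set η := m / 2 with hη
  have hη0 : 0 < η := by positivity
  have hq := kq_pos (norm_mul_norm_lt_one hz hx)
  have hp := kp_pos hε hz x
  have hr : 0 < ‖x - z‖ := norm_pos_iff.2 (sub_ne_zero.2 hxz)
  have hK := concK_nonneg (gam ε y) (x - y)
  have hJ := singJ_nonneg η hη0 (x - z)
  have hl2 := Real.log_two_lt_d9
  have hlq : Real.log (kq z x) ≤ 2 * Real.log 2 := by
    rw [← Real.log_rpow two_pos]
    refine Real.log_le_log hq ?_
    have := abs_real_inner_le_norm x z
    have h3 := norm_mul_norm_lt_one hz hx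
    have h4 : -(‖x‖ * ‖z‖) ≤ inner ℝ x z := by have := neg_abs_le (inner ℝ x z); linarith
    unfold kq
    norm_num
    nlinarith [mul_nonneg (norm_nonneg x) (norm_nonneg z)]
  have hlη : Real.log η = Real.log m - Real.log 2 := by rw [hη, Real.log_div hm0.ne' two_ne_zero]
  by_cases hc : η ^ 2 ≤ kp ε z x
  · have h1 : 2 * Real.log η ≤ Real.log (kp ε z x) := by
      have := Real.log_le_log (by positivity) hc
      rwa [Real.log_pow] at this
    have h2 : kN ε z x ≤ 9 - 2 * Real.log m := by unfold kN; linarith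
    have := mul_le_mul_of_nonneg_left h2 hK
    have : 0 ≤ 1 / π * singJ η (x - z) := by positivity
    linarith
  · push Not at hc
    have hkpz : ‖x - z‖ ^ 2 ≤ kp ε z x := by
      unfold kp; have : 0 < ε * (1 - ‖z‖ ^ 2) ^ 2 := by have := one_sub_sq_pos hz; positivity
      linarith
    have hrη : ‖x - z‖ < η := lt_of_pow_lt_pow_left₀ 2 hη0.le (by linarith)
    have hmyz : m = ‖y - z‖ := by
      rcases max_choice ‖y - z‖ δ with h | h
      · rw [hm, h]
      · exfalso
        have hmd : m = δ := h
        have h5 : δ ^ 2 ≤ kp ε z x := by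
          rw [kp_eq hε]
          have : δ ^ 2 ≤ gam ε z ^ 2 := pow_le_pow_left₀ hδ.le hδz 2
          nlinarith [sq_nonneg ‖x - z‖]
        rw [hη, hmd] at hc
        nlinarith
    have hxy : η ≤ ‖x - y‖ := by
      have : ‖y - z‖ ≤ ‖x - z‖ + ‖x - y‖ := by
        have := norm_sub_le (x - z) (x - y)
        rwa [sub_sub_sub_cancel_left] at this
      rw [← hmyz] at this
      have : m = 2 * η := by rw [hη]; ring
      linarith
    have hKle : concK (gam ε y) (x - y) ≤ 1 / π * (1 / (4 * η ^ 2)) := by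
      unfold concK
      have hG := gam_pos hε hy
      gcongr 1 / π * ?_
      rw [div_le_div_iff₀ (by positivity) (by positivity)]
      have : η ^ 2 ≤ ‖x - y‖ ^ 2 := pow_le_pow_left₀ hη0.le hxy 2
      nlinarith [sq_nonneg (‖x - y‖ ^ 2 - gam ε y ^ 2), sq_nonneg (gam ε y)]
    have h1 : 2 * Real.log ‖x - z‖ ≤ Real.log (kp ε z x) := by
      have := Real.log_le_log (by positivity) hkpz
      rwa [Real.log_pow] at this
    have h2 : Real.log η - Real.log ‖x - z‖ ≤ η / ‖x - z‖ := by
      rw [← Real.log_div hη0.ne' hr.ne']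
      have := Real.log_le_sub_one_of_pos (div_pos hη0 hr)
      linarith
    have h3 : kN ε z x ≤ (9 - 2 * Real.log m) + 2 * (η / ‖x - z‖) := by unfold kN; linarith
    have h4 := mul_le_mul_of_nonneg_left h3 hK
    have h5 : concK (gam ε y) (x - y) * (2 * (η / ‖x - z‖)) ≤ 1 / π * singJ η (x - z) := by
      calc _ ≤ 1 / π * (1 / (4 * η ^ 2)) * (2 * (η / ‖x - z‖)) := by gcongr
        _ = 1 / π * (η / (‖x - z‖ * (2 * η ^ 2))) := by field_simp; norm_num
        _ ≤ 1 / π * singJ η (x - z) := by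
          unfold singJ
          gcongr
          nlinarith
    linarith

lemma mul_pow_three_le {a b : ℝ} (ha : 0 ≤ a) (hb : 0 ≤ b) : a * b ^ 3 ≤ a ^ 4 + b ^ 4 := by
  rcases le_total a b with h | h
  · have := mul_le_mul_of_nonneg_right h (pow_nonneg hb 3)
    have := pow_nonneg ha 4
    nlinarith
  · have := mul_le_mul_of_nonneg_left (pow_le_pow_left₀ hb h 3) ha
    have := pow_nonneg hb 4
    nlinarith

/-- The energy of two kernels is bounded by the logarithmic kernel. -/
lemma bilQ_psi_psi_le {ε : ℝ} (hε : 0 < ε) (hε1 : ε ≤ 1 / 4) {y z : E2} (hy : ‖y‖ < 1)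
    (hz : ‖z‖ < 1) {δ : ℝ} (hδ : 0 < δ) (hδz : δ ≤ gam ε z) :
    bilQ (psi ε z) (psi ε y) ≤
      -(1 / (2 * π)) * Real.log (max ‖y - z‖ δ) + (2 + 384 * Real.exp (7 / 2)) := by
  obtain ⟨r1, hr1, hr1y⟩ := exists_radius hy
  obtain ⟨r2, hr2, hr2z⟩ := exists_radius hz
  set r := min r1 r2
  have hr : 1 < r := lt_min hr1 hr2
  have hry : r * ‖y‖ < 1 := lt_of_le_of_lt (by gcongr; exact min_le_left _ _) hr1y
  have hrz : r * ‖z‖ < 1 := lt_of_le_of_lt (by gcongr; exact min_le_right _ _) hr2z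
  have hcy := contDiffOn_psi (n := 2) hε hy hry
  have hcz := contDiffOn_psi (n := 1) hε hz hrz
  have hγ := gam_pos hε hy
  rw [bilQ_eq _ _ r hr hcz hcy]
  set m := max ‖y - z‖ δ with hm
  have hm0 : 0 < m := lt_max_of_lt_right hδ
  have hγz : gam ε z ≤ 1 := by
    unfold gam
    have : √ε ≤ 1 := by rw [Real.sqrt_le_left (by norm_num)]; linarith
    nlinarith [Real.sqrt_nonneg ε, sq_nonneg ‖z‖]
  have hm2 : m ≤ 2 := by
    refine max_le ?_ (by linarith)
    have := norm_sub_le y z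
    linarith
  have hlogm : Real.log m ≤ Real.log 2 := Real.log_le_log hm0 hm2
  have hl2 := Real.log_two_lt_d9
  have hc0 : 0 ≤ 9 - 2 * Real.log m := by linarith
  set A := 3072 * Real.exp (7 / 2) with hA
  have hA0 : 0 < A := by positivity
  have by0 : 0 < (1 - ‖y‖ ^ 2) / 2 := by have := one_sub_sq_pos hy; positivity
  have bz0 : 0 < (1 - ‖z‖ ^ 2) / 2 := by have := one_sub_sq_pos hz; positivity
  set T : E2 → ℝ := fun x => 1 / (4 * π) * (concK (gam ε y) (x - y) * (9 - 2 * Real.log m) +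
      1 / π * singJ (m / 2) (x - z)) + 1 / (16 * π ^ 2) *
      (A * singJ ((1 - ‖z‖ ^ 2) / 2) (x - z) + A * singJ ((1 - ‖y‖ ^ 2) / 2) (x - y)) with hT
  have hT0 : ∀ x, 0 ≤ T x := fun x => by
    have := concK_nonneg (gam ε y) (x - y)
    have := singJ_nonneg (m / 2) (by positivity) (x - z)
    have := singJ_nonneg _ bz0 (x - z)
    have := singJ_nonneg _ by0 (x - y)
    simp only [hT]
    positivity
  have j1 := ((integrable_concK _ hγ).comp_sub_right y).mul_const (9 - 2 * Real.log m)
  have j2 := ((integrable_singJ (m / 2) (by positivity)).comp_sub_right z).const_mul (1 / π)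
  have j3 := ((integrable_singJ _ bz0).comp_sub_right z).const_mul A
  have j4 := ((integrable_singJ _ by0).comp_sub_right y).const_mul A
  have hTi : Integrable T := ((j1.add j2).const_mul _).add ((j3.add j4).const_mul _)
  have hpt : ∀ᵐ x, B2.indicator (fun x => psi ε z x * opA (psi ε y) x) x ≤ T x := by
    have a1 : ∀ᵐ x : E2, x ≠ y := by simp [ae_iff]
    have a2 : ∀ᵐ x : E2, x ≠ z := by simp [ae_iff]
    filter_upwards [a1, a2] with x hxy hxz
    by_cases hx : x ∈ B2
    swap
    · rw [Set.indicator_of_notMem hx]; exact hT0 x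
    rw [Set.indicator_of_mem hx]
    have hx1 : ‖x‖ < 1 := by simpa [B2] using hx
    have hNz := kN_ge hε hε1 hz hx1
    have hNy := kN_ge hε hε1 hy hx1
    have hgz := kg_pos hz hx1
    have hgy := kg_pos hy hx1
    have hK := concK_nonneg (gam ε y) (x - y)
    have ez : psi ε z x = 1 / (4 * π) * (kg z x * kN ε z x) := by unfold psi kg; ring
    have hψ0 : 0 ≤ psi ε z x := by rw [ez]; positivity
    refine (mul_le_mul_of_nonneg_left (opA_psi_le hε hε1 hy hx1) hψ0).trans ?_
    have p1 : psi ε z x * (concK (gam ε y) (x - y) * ((1 - ‖x‖ ^ 2) * kg y x)) ≤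
        1 / (4 * π) * (concK (gam ε y) (x - y) * kN ε z x) := by
      have := weight_kg_mul_le hy hz hx1
      calc _ = 1 / (4 * π) * (concK (gam ε y) (x - y) * kN ε z x) *
          ((1 - ‖x‖ ^ 2) * kg y x * kg z x) := by rw [ez]; ring
        _ ≤ 1 / (4 * π) * (concK (gam ε y) (x - y) * kN ε z x) * 1 := by gcongr
        _ = _ := mul_one _
    have p2 := concK_mul_kN_le hε hy hz hx1 hxz hδ hδz
    have p3 : psi ε z x * (1 / (4 * π) * kg y x ^ 3 * (kN ε y x + 2)) ≤
        1 / (16 * π ^ 2) * ((kg z x * (kN ε z x + 2)) ^ 4 + (kg y x * (kN ε y x + 2)) ^ 4) := by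
      have b1 : kg z x * kN ε z x ≤ kg z x * (kN ε z x + 2) := by gcongr; linarith
      have b2 : kg y x ^ 3 * (kN ε y x + 2) ≤ (kg y x * (kN ε y x + 2)) ^ 3 := by
        rw [mul_pow]
        gcongr
        exact le_self_pow₀ (by linarith) (by norm_num)
      calc _ = 1 / (16 * π ^ 2) * ((kg z x * kN ε z x) * (kg y x ^ 3 * (kN ε y x + 2))) := by
            rw [ez]; field_simp; norm_num
        _ ≤ 1 / (16 * π ^ 2) * ((kg z x * (kN ε z x + 2)) * (kg y x * (kN ε y x + 2)) ^ 3) := by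
            gcongr
        _ ≤ _ := by
            gcongr
            exact mul_pow_three_le (by positivity) (by positivity)
    have p4 := kg_pow_four_le hε hε1 hz hx1 hxz
    have p5 := kg_pow_four_le hε hε1 hy hx1 hxy
    rw [mul_add]
    simp only [hT]
    refine add_le_add (p1.trans ?_) (p3.trans ?_)
    · gcongr
    · gcongr
  have i3 := integrableOn_mul_opA hr hcz.continuousOn hcy
  have hmono := integral_mono_ae ((integrable_indicator_iff measurableSet_B2).2 i3) hTi hpt
  rw [integral_indicator measurableSet_B2] at hmono
  refine hmono.trans ?_
  have hTint : ∫ x, T x = 1 / (4 * π) * (1 * (9 - 2 * Real.log m) + 1 / π * π ^ 2) +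
      1 / (16 * π ^ 2) * (A * π ^ 2 + A * π ^ 2) := by
    have k1 : ∫ x, T x = ∫ x, (1 / (4 * π) * (concK (gam ε y) (x - y) * (9 - 2 * Real.log m) +
      1 / π * singJ (m / 2) (x - z))) + (1 / (16 * π ^ 2) *
      (A * singJ ((1 - ‖z‖ ^ 2) / 2) (x - z) + A * singJ ((1 - ‖y‖ ^ 2) / 2) (x - y))) := rfl
    have j12 : Integrable (fun x => concK (gam ε y) (x - y) * (9 - 2 * Real.log m) +
      1 / π * singJ (m / 2) (x - z)) := j1.add j2
    have j34 : Integrable (fun x => A * singJ ((1 - ‖z‖ ^ 2) / 2) (x - z) +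
      A * singJ ((1 - ‖y‖ ^ 2) / 2) (x - y)) := j3.add j4
    rw [k1, integral_add (j12.const_mul _) (j34.const_mul _),
      integral_const_mul, integral_const_mul, integral_add j1 j2, integral_add j3 j4,
      integral_mul_const, integral_const_mul, integral_const_mul, integral_const_mul,
      integral_sub_right_eq_self (fun x => concK (gam ε y) x) y,
      integral_sub_right_eq_self (fun x => singJ (m / 2) x) z,
      integral_sub_right_eq_self (fun x => singJ ((1 - ‖z‖ ^ 2) / 2) x) z,
      integral_sub_right_eq_self (fun x => singJ ((1 - ‖y‖ ^ 2) / 2) x) y,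
      integral_concK _ hγ, integral_singJ _ (by positivity), integral_singJ _ bz0,
      integral_singJ _ by0]
  rw [hTint]
  have e1 : 1 / (4 * π) * (1 * (9 - 2 * Real.log m) + 1 / π * π ^ 2) +
      1 / (16 * π ^ 2) * (A * π ^ 2 + A * π ^ 2) =
      -(1 / (2 * π)) * Real.log m + (9 / (4 * π) + 1 / 4) + 384 * Real.exp (7 / 2) := by
    rw [hA]; field_simp; ring
  have e2 : 9 / (4 * π) ≤ 1 := by
    rw [div_le_one (by positivity)]; linarith [pi_gt_three]
  rw [e1]
  linarith

/-! ### Duality -/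

lemma integrable_of_ae_mem_compact {X : Type*} [TopologicalSpace X] [T2Space X]
    [TopologicalSpace.PseudoMetrizableSpace X] [MeasurableSpace X] [BorelSpace X]
    {μ : Measure X} [IsFiniteMeasure μ] {K : Set X} (hK : IsCompact K) (hμ : ∀ᵐ x ∂μ, x ∈ K)
    {f : X → ℝ} (hf : ContinuousOn f K) : Integrable f μ := by
  have h := hf.integrableOn_compact (μ := μ) hK
  rwa [IntegrableOn, Measure.restrict_eq_self_of_ae_mem hμ] at h

/-- Young's inequality `2 t ⟪a, b̄⟫ ≤ ‖a‖² + t² ‖b̄‖²` for the average `b̄ = ∫ b(·, y) dν(y)` of a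
family of vector fields, written out as iterated integrals. -/
lemma young_average {ι : Type*} [Fintype ι] (μ ν : Measure E2) [IsFiniteMeasure μ]
    [IsFiniteMeasure ν] {K₁ K₂ : Set E2} (hK₁ : IsCompact K₁) (hK₂ : IsCompact K₂)
    (hμ : ∀ᵐ x ∂μ, x ∈ K₁) (hν : ∀ᵐ y ∂ν, y ∈ K₂) {a : ι → E2 → ℝ} {b : ι → E2 → E2 → ℝ}
    (ha : ∀ i, ContinuousOn (a i) K₁)
    (hb : ∀ i, ContinuousOn (fun p : E2 × E2 => b i p.1 p.2) (K₁ ×ˢ K₂)) (t : ℝ) :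
    Integrable (fun y => ∫ x, ∑ i, a i x * b i x y ∂μ) ν ∧
    Integrable (fun q : E2 × E2 => ∫ x, ∑ i, b i x q.1 * b i x q.2 ∂μ) (ν.prod ν) ∧
    2 * t * ∫ y, ∫ x, ∑ i, a i x * b i x y ∂μ ∂ν ≤
      (∫ x, ∑ i, a i x * a i x ∂μ) +
        t ^ 2 * ∫ q : E2 × E2, ∫ x, ∑ i, b i x q.1 * b i x q.2 ∂μ ∂(ν.prod ν) := by
  have m1 : ∀ᵐ p ∂(μ.prod ν), p ∈ K₁ ×ˢ K₂ := by
    have a1 : ∀ᵐ p : E2 × E2 ∂(μ.prod ν), p.1 ∈ K₁ := Measure.quasiMeasurePreserving_fst.ae hμ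
    have a2 : ∀ᵐ p : E2 × E2 ∂(μ.prod ν), p.2 ∈ K₂ := Measure.quasiMeasurePreserving_snd.ae hν
    filter_upwards [a1, a2] with p h1 h2 using ⟨h1, h2⟩
  have m2 : ∀ᵐ q ∂(ν.prod ν), q ∈ K₂ ×ˢ K₂ := by
    have a1 : ∀ᵐ p : E2 × E2 ∂(ν.prod ν), p.1 ∈ K₂ := Measure.quasiMeasurePreserving_fst.ae hν
    have a2 : ∀ᵐ p : E2 × E2 ∂(ν.prod ν), p.2 ∈ K₂ := Measure.quasiMeasurePreserving_snd.ae hν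
    filter_upwards [a1, a2] with p h1 h2 using ⟨h1, h2⟩
  have m3 : ∀ᵐ p ∂(μ.prod (ν.prod ν)), p ∈ K₁ ×ˢ (K₂ ×ˢ K₂) := by
    have a1 : ∀ᵐ p : E2 × E2 × E2 ∂(μ.prod (ν.prod ν)), p.1 ∈ K₁ :=
      Measure.quasiMeasurePreserving_fst.ae hμ
    have a2 : ∀ᵐ p : E2 × E2 × E2 ∂(μ.prod (ν.prod ν)), p.2 ∈ K₂ ×ˢ K₂ :=
      Measure.quasiMeasurePreserving_snd.ae m2
    filter_upwards [a1, a2] with p h1 h2 using ⟨h1, h2⟩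
  have i1 : Integrable (fun p : E2 × E2 => ∑ i, a i p.1 * b i p.1 p.2) (μ.prod ν) := by
    refine integrable_of_ae_mem_compact (hK₁.prod hK₂) m1 ?_
    refine continuousOn_finsetSum _ fun i _ => ?_
    exact ((ha i).comp continuousOn_fst fun p hp => hp.1).mul (hb i)
  have i2 : Integrable (fun p : E2 × E2 × E2 => ∑ i, b i p.1 p.2.1 * b i p.1 p.2.2)
      (μ.prod (ν.prod ν)) := by
    refine integrable_of_ae_mem_compact (hK₁.prod (hK₂.prod hK₂)) m3 ?_
    refine continuousOn_finsetSum _ fun i _ => ?_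
    refine ContinuousOn.mul ?_ ?_
    · exact (hb i).comp (f := fun p : E2 × E2 × E2 => (p.1, p.2.1)) (by fun_prop)
        fun p hp => ⟨hp.1, hp.2.1⟩
    · exact (hb i).comp (f := fun p : E2 × E2 × E2 => (p.1, p.2.2)) (by fun_prop)
        fun p hp => ⟨hp.1, hp.2.2⟩
  have i0 : Integrable (fun x => ∑ i, a i x * a i x) μ :=
    integrable_of_ae_mem_compact hK₁ hμ
      (continuousOn_finsetSum _ fun i _ => (ha i).mul (ha i))
  refine ⟨i1.integral_prod_right, i2.integral_prod_right, ?_⟩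
  have s1 : ∫ y, ∫ x, ∑ i, a i x * b i x y ∂μ ∂ν = ∫ x, ∫ y, ∑ i, a i x * b i x y ∂ν ∂μ :=
    (integral_integral_swap (f := fun x y => ∑ i, a i x * b i x y) i1).symm
  have s2 : ∫ q : E2 × E2, ∫ x, ∑ i, b i x q.1 * b i x q.2 ∂μ ∂(ν.prod ν) =
      ∫ x, ∫ q : E2 × E2, ∑ i, b i x q.1 * b i x q.2 ∂(ν.prod ν) ∂μ :=
    (integral_integral_swap
      (f := fun x (q : E2 × E2) => ∑ i, b i x q.1 * b i x q.2) i2).symm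
  have j1 := i1.integral_prod_left
  have j2 := i2.integral_prod_left
  rw [s1, s2, ← integral_const_mul, ← integral_const_mul, ← integral_add i0 (j2.const_mul _)]
  refine integral_mono_ae (j1.const_mul _) (i0.add (j2.const_mul _)) ?_
  filter_upwards [hμ] with x hx
  have hbx : ∀ i, Integrable (b i x) ν := fun i =>
    integrable_of_ae_mem_compact hK₂ hν
      ((hb i).comp (f := fun y => (x, y)) (by fun_prop) fun y hy => ⟨hx, hy⟩)
  have e1 : ∫ y, ∑ i, a i x * b i x y ∂ν = ∑ i, a i x * ∫ y, b i x y ∂ν := by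
    rw [integral_finsetSum _ fun i _ => (hbx i).const_mul _]
    simp_rw [integral_const_mul]
  have e2 : ∫ q : E2 × E2, ∑ i, b i x q.1 * b i x q.2 ∂(ν.prod ν) =
      ∑ i, (∫ y, b i x y ∂ν) * ∫ y, b i x y ∂ν := by
    rw [integral_finsetSum _ fun i _ => (hbx i).mul_prod (hbx i)]
    exact Finset.sum_congr rfl fun i _ => integral_prod_mul _ _
  show 2 * t * ∫ y, ∑ i, a i x * b i x y ∂ν ≤ ∑ i, a i x * a i x +
    t ^ 2 * ∫ q : E2 × E2, ∑ i, b i x q.1 * b i x q.2 ∂(ν.prod ν)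
  rw [e1, e2, Finset.mul_sum, Finset.mul_sum, ← Finset.sum_add_distrib]
  refine Finset.sum_le_sum fun i _ => ?_
  nlinarith [sq_nonneg (a i x - t * ∫ y, b i x y ∂ν)]

lemma continuousOn_psi (ε : ℝ) (hε : 0 < ε) {R : ℝ} (hR : R < 1) :
    ContinuousOn (fun p : E2 × E2 => psi ε p.2 p.1)
      (Metric.closedBall 0 1 ×ˢ Metric.closedBall 0 R) ∧
    ∀ i, ContinuousOn (fun p : E2 × E2 => psiD ε i p.2 p.1)
      (Metric.closedBall 0 1 ×ˢ Metric.closedBall 0 R) := by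
  set S : Set (E2 × E2) := Metric.closedBall 0 1 ×ˢ Metric.closedBall 0 R
  have hS : ∀ p ∈ S, ‖p.2‖ < 1 ∧ ‖p.1‖ * ‖p.2‖ < 1 := by
    rintro ⟨x, y⟩ ⟨h1, h2⟩
    simp only [Metric.mem_closedBall, dist_zero_right] at h1 h2
    refine ⟨by simpa using h2.trans_lt hR, ?_⟩
    show ‖x‖ * ‖y‖ < 1
    nlinarith [norm_nonneg x, norm_nonneg y]
  have cq : ContinuousOn (fun p : E2 × E2 => kq p.2 p.1) S := by
    unfold kq; fun_prop
  have cp : ContinuousOn (fun p : E2 × E2 => kp ε p.2 p.1) S := by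
    unfold kp; fun_prop
  have cw : ContinuousOn (fun p : E2 × E2 => kw p.2 p.1) S :=
    cq.sqrt.inv₀ fun p hp => (Real.sqrt_pos.2 (kq_pos (hS p hp).2)).ne'
  have cN : ContinuousOn (fun p : E2 × E2 => kN ε p.2 p.1) S :=
    ((cq.log fun p hp => (kq_pos (hS p hp).2).ne').sub
      (cp.log fun p hp => (kp_pos hε (hS p hp).1 _).ne')).add continuousOn_const
  have cpi : ContinuousOn (fun p : E2 × E2 => (kp ε p.2 p.1)⁻¹) S :=
    cp.inv₀ fun p hp => (kp_pos hε (hS p hp).1 _).ne'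
  refine ⟨?_, fun i => ?_⟩
  · unfold psi; fun_prop
  · unfold psiD; fun_prop

/-- Duality: the quadratic form at `v` is bounded below by testing against an average of the
kernels `psi ε y`. -/
lemma bilQ_dual {v : E2 → ℝ} (hv : ContDiff ℝ 1 v) (ν : Measure E2) [IsFiniteMeasure ν] {R : ℝ}
    (hR : R < 1) (hν : ∀ᵐ y ∂ν, y ∈ Metric.closedBall (0 : E2) R) {ε : ℝ} (hε : 0 < ε) (t : ℝ) :
    Integrable (fun y => bilQ v (psi ε y)) ν ∧
    Integrable (fun q : E2 × E2 => bilQ (psi ε q.1) (psi ε q.2)) (ν.prod ν) ∧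
    2 * t * ∫ y, bilQ v (psi ε y) ∂ν ≤
      bilQ v v + t ^ 2 * ∫ q : E2 × E2, bilQ (psi ε q.1) (psi ε q.2) ∂(ν.prod ν) := by
  obtain ⟨c0, c1⟩ := continuousOn_psi ε hε hR
  have hfin : IsFiniteMeasure (volume.restrict B2) :=
    isFiniteMeasure_restrict.2 (measure_ball_lt_top).ne
  have hμ : ∀ᵐ x ∂(volume.restrict B2), x ∈ Metric.closedBall (0 : E2) 1 :=
    (ae_restrict_mem measurableSet_B2).mono fun x hx => Metric.ball_subset_closedBall hx
  set a : Option (Fin 2) → E2 → ℝ := fun o => o.elim v fun i x => √(1 - ‖x‖ ^ 2) * pd i v x with ha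
  set b : Option (Fin 2) → E2 → E2 → ℝ := fun o => o.elim (fun x y => psi ε y x)
    fun i x y => √(1 - ‖x‖ ^ 2) * psiD ε i y x with hb
  have cpd : ∀ i, Continuous (pd i v) := fun i =>
    (hv.continuous_fderiv one_ne_zero).clm_apply continuous_const
  have key := young_average (volume.restrict B2) ν (isCompact_closedBall 0 1)
    (isCompact_closedBall 0 R) hμ hν (a := a) (b := b)
    (by
      rintro (_ | i)
      · exact hv.continuous.continuousOn
      · have := cpd i
        show ContinuousOn (fun x => √(1 - ‖x‖ ^ 2) * pd i v x) _
        fun_prop)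
    (by
      rintro (_ | i)
      · exact c0
      · have := c1 i
        show ContinuousOn (fun p : E2 × E2 => √(1 - ‖p.1‖ ^ 2) * psiD ε i p.2 p.1) _
        fun_prop) t
  have hsq : ∀ x ∈ B2, √(1 - ‖x‖ ^ 2) * √(1 - ‖x‖ ^ 2) = 1 - ‖x‖ ^ 2 := fun x hx =>
    Real.mul_self_sqrt (one_sub_sq_pos (by simpa [B2] using hx)).le
  have hlt : ∀ x ∈ B2, ∀ y ∈ Metric.closedBall (0 : E2) R, ‖y‖ < 1 ∧ ‖x‖ * ‖y‖ < 1 := by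
    intro x hx y hy
    have h1 : ‖x‖ < 1 := by simpa [B2] using hx
    have h2 : ‖y‖ ≤ R := by simpa using hy
    exact ⟨by linarith, by nlinarith [norm_nonneg x, norm_nonneg y]⟩
  have e0 : ∫ x in B2, ∑ i, a i x * a i x = bilQ v v := by
    refine setIntegral_congr_fun measurableSet_B2 fun x hx => ?_
    simp only [Fintype.sum_option, ha, Option.elim_none, Option.elim_some, Fin.sum_univ_two]
    have := hsq x hx
    linear_combination (pd 0 v x * pd 0 v x + pd 1 v x * pd 1 v x) * this
  have e1 : ∀ y ∈ Metric.closedBall (0 : E2) R,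
      ∫ x in B2, ∑ i, a i x * b i x y = bilQ v (psi ε y) := by
    intro y hy
    refine setIntegral_congr_fun measurableSet_B2 fun x hx => ?_
    obtain ⟨h1, h2⟩ := hlt x hx y hy
    simp only [Fintype.sum_option, ha, hb, Option.elim_none, Option.elim_some, Fin.sum_univ_two,
      pd_psi hε h1 h2]
    have := hsq x hx
    linear_combination (pd 0 v x * psiD ε 0 y x + pd 1 v x * psiD ε 1 y x) * this
  have e2 : ∀ y ∈ Metric.closedBall (0 : E2) R, ∀ z ∈ Metric.closedBall (0 : E2) R,
      ∫ x in B2, ∑ i, b i x y * b i x z = bilQ (psi ε y) (psi ε z) := by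
    intro y hy z hz
    refine setIntegral_congr_fun measurableSet_B2 fun x hx => ?_
    obtain ⟨h1, h2⟩ := hlt x hx y hy
    obtain ⟨h3, h4⟩ := hlt x hx z hz
    simp only [Fintype.sum_option, hb, Option.elim_none, Option.elim_some, Fin.sum_univ_two,
      pd_psi hε h1 h2, pd_psi hε h3 h4]
    have := hsq x hx
    linear_combination (psiD ε 0 y x * psiD ε 0 z x + psiD ε 1 y x * psiD ε 1 z x) * this
  have E1 : (fun y => ∫ x in B2, ∑ i, a i x * b i x y) =ᵐ[ν] fun y => bilQ v (psi ε y) :=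
    hν.mono fun y hy => e1 y hy
  have hpair : (fun q : E2 × E2 => ∫ x in B2, ∑ i, b i x q.1 * b i x q.2) =ᵐ[ν.prod ν]
      fun q => bilQ (psi ε q.1) (psi ε q.2) := by
    have a1 : ∀ᵐ p : E2 × E2 ∂(ν.prod ν), p.1 ∈ Metric.closedBall (0 : E2) R :=
      Measure.quasiMeasurePreserving_fst.ae hν
    have a2 : ∀ᵐ p : E2 × E2 ∂(ν.prod ν), p.2 ∈ Metric.closedBall (0 : E2) R :=
      Measure.quasiMeasurePreserving_snd.ae hν
    filter_upwards [a1, a2] with q h1 h2 using e2 _ h1 _ h2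
  obtain ⟨k1, k2, k3⟩ := key
  rw [e0, integral_congr_ae E1, integral_congr_ae hpair] at k3
  exact ⟨k1.congr E1, k2.congr hpair, k3⟩

/-! ### The inequality for nonnegative functions -/

lemma contDiff_sqrt_weight_mul {v : E2 → ℝ} {n : ℕ∞} (hv : ContDiff ℝ n v)
    (hs : tsupport v ⊆ B2) : ContDiff ℝ n fun x => √(1 - ‖x‖ ^ 2) * v x := by
  rw [contDiff_iff_contDiffAt]
  intro x
  by_cases hx : x ∈ tsupport v
  · have hx1 : 0 < 1 - ‖x‖ ^ 2 := one_sub_sq_pos (by simpa [B2] using hs hx)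
    refine ContDiffAt.mul ?_ hv.contDiffAt
    refine ContDiffAt.sqrt ?_ hx1.ne'
    exact contDiffAt_const.sub (contDiff_norm_sq ℝ).contDiffAt
  · have : (fun x => √(1 - ‖x‖ ^ 2) * v x) =ᶠ[nhds x] fun _ => 0 := by
      filter_upwards [notMem_tsupport_iff_eventuallyEq.1 hx] with z hz
      simp [hz]
    exact contDiffAt_const.congr_of_eventuallyEq this

lemma integral_B2_one : ∫ _x in B2, (1 : ℝ) = π := by
  rw [integral_const, smul_eq_mul, mul_one, Measure.real, Measure.restrict_apply_univ]
  exact volume_real_unit_ball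

lemma exists_eps {A : ℝ} (hA : 0 ≤ A) : ∃ ε : ℝ, 0 < ε ∧ ε ≤ 1 / 4 ∧ A * √ε ≤ 1 := by
  have h1 : 0 < min (1 / 2) (1 / (A + 1)) := lt_min (by norm_num) (by positivity)
  refine ⟨min (1 / 2) (1 / (A + 1)) ^ 2, by positivity, ?_, ?_⟩
  · have := min_le_left (1 / 2) (1 / (A + 1))
    nlinarith
  · rw [Real.sqrt_sq h1.le]
    calc A * min (1 / 2) (1 / (A + 1)) ≤ A * (1 / (A + 1)) := by
          gcongr; exact min_le_right _ _
      _ ≤ 1 := by rw [mul_one_div, div_le_one (by positivity)]; linarith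

/-- The inequality for nonnegative functions, in the variable `v = u / √(1-|x|²)`. -/
lemma hmt_nonneg {v : E2 → ℝ} (hv : ContDiff ℝ 1 v) (hv0 : ∀ x, 0 ≤ v x)
    (hc : HasCompactSupport v) (hs : tsupport v ⊆ B2) :
    8 * π * Real.log (∫ x in B2, Real.exp (√(1 - ‖x‖ ^ 2) * v x)) ≤
      1 / 2 * bilQ v v + (8 * π + 16 * π * (25 + Real.log 2) +
        32 * π ^ 2 * (2 + 384 * Real.exp (7 / 2))) := by
  set C₁ : ℝ := 2 + 384 * Real.exp (7 / 2) with hC₁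
  have hC₁0 : 0 ≤ C₁ := by positivity
  set u : E2 → ℝ := fun x => √(1 - ‖x‖ ^ 2) * v x with hu
  have hud : ContDiff ℝ 1 u := contDiff_sqrt_weight_mul (n := 1) hv hs
  have hucs : HasCompactSupport u := hc.mul_left
  have huc : Continuous u := hud.continuous
  have hz : ∀ x, x ∉ tsupport v → u x = 0 := fun x hx => by
    simp [hu, image_eq_zero_of_notMem_tsupport hx]
  obtain ⟨L, hL⟩ := hud.lipschitzWith_of_hasCompactSupport hucs one_ne_zero
  obtain ⟨M₀, hM₀⟩ := hucs.exists_bound_of_continuous huc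
  have hM0 : 0 ≤ M₀ := (norm_nonneg _).trans (hM₀ 0)
  have hM : ∀ x, u x ≤ M₀ := fun x => (le_abs_self _).trans (hM₀ x)
  have hL' : ∀ x y, u y - u x ≤ L * ‖x - y‖ := fun x y => by
    have := hL.dist_le_mul x y
    rw [Real.dist_eq, dist_eq_norm] at this
    have h2 := neg_abs_le (u x - u y)
    linarith
  obtain ⟨R, hR0, hR1, hRs⟩ : ∃ R : ℝ, 0 ≤ R ∧ R < 1 ∧ tsupport v ⊆ Metric.closedBall 0 R := by
    obtain ⟨r, hr, hrs⟩ := exists_lt_subset_ball (isClosed_tsupport v) hs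
    exact ⟨max r 0, le_max_right _ _, max_lt hr one_pos,
      (hrs.trans Metric.ball_subset_closedBall).trans
        (Metric.closedBall_subset_closedBall (le_max_left _ _))⟩
  have hA : 0 ≤ (L + M₀ * (1 - R)⁻¹) * π := by
    have : 0 < 1 - R := by linarith
    positivity
  obtain ⟨ε, hε, hε1, hεA⟩ := exists_eps hA
  have hgle : ∀ y : E2, gam ε y ≤ √ε := fun y => by
    unfold gam
    nlinarith [Real.sqrt_nonneg ε, sq_nonneg ‖y‖]
  obtain ⟨n, hn⟩ := exists_pow_lt_of_lt_one
    (show 0 < √ε * (1 - R ^ 2) by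
      have : 0 < 1 - R ^ 2 := by nlinarith
      have := Real.sqrt_pos.2 hε
      positivity) (show (1 / 2 : ℝ) < 1 by norm_num)
  have hgn : ∀ y ∈ Metric.closedBall (0 : E2) R, (1 / 2 : ℝ) ^ n ≤ gam ε y := fun y hy => by
    have hy : ‖y‖ ≤ R := by simpa using hy
    refine hn.le.trans ?_
    unfold gam
    gcongr
  -- For the Gibbs density the entropy is `∫ ρu - log Z`, so that an entropy bound becomes one for
  -- `log Z`.
  set Z : ℝ := ∫ x in B2, Real.exp (u x) with hZ
  have hexpi : IntegrableOn (fun x => Real.exp (u x)) B2 := integrableOn_B2 (by fun_prop)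
  have hZ0 : 0 < Z := by
    have h1 : ∫ _x in B2, (1 : ℝ) ≤ Z := by
      refine setIntegral_mono_on (integrableOn_B2 continuous_const) hexpi measurableSet_B2
        fun x _ => Real.one_le_exp (mul_nonneg (Real.sqrt_nonneg _) (hv0 x))
    rw [integral_B2_one] at h1
    exact pi_pos.trans_le h1
  set ρ : E2 → ℝ := fun x => Real.exp (u x) / Z with hρ
  have hρc : Continuous ρ := by simp only [hρ]; fun_prop
  have hρ0 : ∀ x, 0 < ρ x := fun x => by simp only [hρ]; positivity
  have hρ1 : ∫ x in B2, ρ x = 1 := by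
    simp only [hρ]
    rw [integral_div, ← hZ, div_self hZ0.ne']
  have hent : ∫ x in B2, ρ x * Real.log (ρ x) = (∫ x in B2, ρ x * u x) - Real.log Z := by
    have e : ∀ x, ρ x * Real.log (ρ x) = ρ x * u x - ρ x * Real.log Z := fun x => by
      simp only [hρ]
      rw [Real.log_div (Real.exp_pos _).ne' hZ0.ne', Real.log_exp]; ring
    simp_rw [e]
    rw [integral_sub (integrableOn_B2 (by fun_prop)) (integrableOn_B2 (by fun_prop)),
      integral_mul_const, hρ1, one_mul]
  have hP := isProbabilityMeasure_densMeasure ρ hρc hρ0 hρ1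
  have hls := log_HLS ρ hρc hρ0 hρ1 n
  have hud := integral_densMeasure ρ hρc hρ0 u
  set ν := densMeasure ρ with hν
  set S : Set E2 := Metric.closedBall 0 R with hS
  have hSm : MeasurableSet S := Metric.isClosed_closedBall.measurableSet
  have hae := ae_restrict_mem (μ := ν) hSm
  obtain ⟨d1, d2, d3⟩ := bilQ_dual hv (ν.restrict S) hR1 hae hε (8 * π)
  have hmass : (ν.restrict S).real Set.univ ≤ 1 := by
    rw [measureReal_restrict_apply_univ]; exact measureReal_le_one
  have hui : Integrable u ν :=
    Integrable.of_bound huc.aestronglyMeasurable M₀ (Eventually.of_forall hM₀)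
  have low : (∫ x in B2, ρ x * u x) - 1 ≤ ∫ y in S, bilQ v (psi ε y) ∂ν := by
    have h1 : ∫ y in S, (u y - 1) ∂ν ≤ ∫ y in S, bilQ v (psi ε y) ∂ν := by
      refine integral_mono_ae (hui.restrict.sub (integrable_const 1)) d1 ?_
      filter_upwards [hae] with y hy
      have hy' : ‖y‖ ≤ R := by simpa [hS] using hy
      have := bilQ_psi_ge hv hv0 (fun x _ => rfl) (fun x hx => hz x fun h => hx (hs h)) hM0 hL' hM
        hR1 hε hε1 hy'
      have h2 : (L + M₀ * (1 - R)⁻¹) * (π * gam ε y) ≤ 1 := by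
        refine le_trans ?_ hεA
        rw [← mul_assoc]
        exact mul_le_mul_of_nonneg_left (hgle y) hA
      linarith
    rw [integral_sub hui.restrict (integrable_const 1)] at h1
    have h3 : ∫ y in S, u y ∂ν = ∫ y, u y ∂ν :=
      setIntegral_eq_integral_of_forall_compl_eq_zero fun y hy => hz y fun h => hy (hRs h)
    rw [h3, hud] at h1
    simp only [integral_const, smul_eq_mul, mul_one] at h1
    linarith
  have hkc : Continuous fun p : E2 × E2 => -Real.log (max ‖p.1 - p.2‖ ((1 / 2 : ℝ) ^ n)) := by
    refine (Continuous.log (by fun_prop) fun p => ?_).neg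
    exact (lt_max_of_lt_right (by positivity)).ne'
  have hBB : ∀ᵐ p : E2 × E2 ∂(ν.prod ν), p.1 ∈ B2 ∧ p.2 ∈ B2 := by
    have a1 : ∀ᵐ p : E2 × E2 ∂(ν.prod ν), p.1 ∈ B2 :=
      Measure.quasiMeasurePreserving_fst.ae (ae_mem_densMeasure ρ)
    have a2 : ∀ᵐ p : E2 × E2 ∂(ν.prod ν), p.2 ∈ B2 :=
      Measure.quasiMeasurePreserving_snd.ae (ae_mem_densMeasure ρ)
    filter_upwards [a1, a2] with p h1 h2 using ⟨h1, h2⟩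
  have hki : Integrable (fun p : E2 × E2 => -Real.log (max ‖p.1 - p.2‖ ((1 / 2 : ℝ) ^ n)))
      (ν.prod ν) := by
    refine integrable_of_ae_mem_compact ((isCompact_closedBall (0 : E2) 1).prod
      (isCompact_closedBall (0 : E2) 1)) (hBB.mono fun p hp => ?_) hkc.continuousOn
    exact ⟨Metric.ball_subset_closedBall hp.1, Metric.ball_subset_closedBall hp.2⟩
  rw [← integral_prod _ hki] at hls
  -- the diameter of the disc is `2`, so adding `log 2` makes the kernel nonnegative
  have hk0 : ∀ᵐ p : E2 × E2 ∂(ν.prod ν),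
      0 ≤ -Real.log (max ‖p.1 - p.2‖ ((1 / 2 : ℝ) ^ n)) + Real.log 2 := by
    filter_upwards [hBB] with p hp
    have h1 : ‖p.1‖ < 1 := by simpa [B2] using hp.1
    have h2 : ‖p.2‖ < 1 := by simpa [B2] using hp.2
    have h3 := norm_sub_le p.1 p.2
    have : Real.log (max ‖p.1 - p.2‖ ((1 / 2 : ℝ) ^ n)) ≤ Real.log 2 := by
      refine Real.log_le_log (lt_max_of_lt_right (by positivity)) (max_le (by linarith) ?_)
      exact (pow_le_one₀ (by norm_num) (by norm_num)).trans one_le_two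
    linarith
  have up : ∫ q : E2 × E2, bilQ (psi ε q.1) (psi ε q.2) ∂((ν.restrict S).prod (ν.restrict S)) ≤
      1 / (2 * π) * (1 / 2 * (∫ x in B2, ρ x * Real.log (ρ x)) + 25 + Real.log 2) + C₁ := by
    have hpr : (ν.restrict S).prod (ν.restrict S) = (ν.prod ν).restrict (S ×ˢ S) :=
      Measure.prod_restrict S S
    rw [hpr] at d2 ⊢
    have hkl : Integrable (fun p : E2 × E2 =>
        -Real.log (max ‖p.1 - p.2‖ ((1 / 2 : ℝ) ^ n)) + Real.log 2) (ν.prod ν) :=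
      hki.add (integrable_const _)
    have h1 : ∫ q in S ×ˢ S, bilQ (psi ε q.1) (psi ε q.2) ∂(ν.prod ν) ≤
        ∫ q in S ×ˢ S, (1 / (2 * π) * (-Real.log (max ‖q.1 - q.2‖ ((1 / 2 : ℝ) ^ n)) +
          Real.log 2) + C₁) ∂(ν.prod ν) := by
      refine integral_mono_ae d2 ((hkl.restrict.const_mul _).add (integrable_const _)) ?_
      filter_upwards [ae_restrict_mem (hSm.prod hSm)] with q hq
      have h1 : ‖q.1‖ < 1 := lt_of_le_of_lt (by simpa [hS] using hq.1) hR1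
      have h2 : ‖q.2‖ < 1 := lt_of_le_of_lt (by simpa [hS] using hq.2) hR1
      have := bilQ_psi_psi_le hε hε1 h2 h1 (δ := (1 / 2) ^ n) (by positivity) (hgn _ hq.1)
      rw [norm_sub_rev] at this
      have h4 : 0 ≤ 1 / (2 * π) * Real.log 2 := by
        have := Real.log_nonneg one_le_two
        positivity
      show _ ≤ 1 / (2 * π) * (-Real.log (max ‖q.1 - q.2‖ ((1 / 2 : ℝ) ^ n)) + Real.log 2) + C₁
      linarith
    refine h1.trans ?_
    rw [integral_add (hkl.restrict.const_mul _) (integrable_const _), integral_const_mul]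
    have h2 : ∫ q in S ×ˢ S, (-Real.log (max ‖q.1 - q.2‖ ((1 / 2 : ℝ) ^ n)) +
        Real.log 2) ∂(ν.prod ν) ≤ 1 / 2 * (∫ x in B2, ρ x * Real.log (ρ x)) + 25 + Real.log 2 := by
      refine (setIntegral_le_integral hkl hk0).trans ?_
      rw [integral_add hki (integrable_const _)]
      simp only [integral_const, smul_eq_mul, probReal_univ, one_mul]
      linarith
    have h3 : ∫ _q in S ×ˢ S, C₁ ∂(ν.prod ν) ≤ C₁ := by
      rw [integral_const, smul_eq_mul, measureReal_restrict_apply_univ]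
      exact mul_le_of_le_one_left hC₁0 measureReal_le_one
    have h4 : 0 ≤ 1 / (2 * π) := by positivity
    have := mul_le_mul_of_nonneg_left h2 h4
    linarith
  rw [hent] at up
  have q1 := mul_le_mul_of_nonneg_left low (show 0 ≤ 2 * (8 * π) by positivity)
  have q2 := mul_le_mul_of_nonneg_left up (show 0 ≤ (8 * π) ^ 2 by positivity)
  have q3 : (8 * π) ^ 2 * (1 / (2 * π) * (1 / 2 * ((∫ x in B2, ρ x * u x) - Real.log Z) + 25 +
      Real.log 2) + C₁) = 32 * π * (1 / 2 * ((∫ x in B2, ρ x * u x) - Real.log Z) + 25 +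
      Real.log 2) + 64 * π ^ 2 * C₁ := by
    field_simp; ring
  rw [q3] at q2
  nlinarith [q1, q2, d3]

/-! ### Ground state representation and conclusion -/

lemma continuous_pd {f : E2 → ℝ} (hf : ContDiff ℝ 1 f) (i : Fin 2) : Continuous (pd i f) :=
  (hf.continuous_fderiv one_ne_zero).clm_apply continuous_const

lemma norm_gradient_sq (u : E2 → ℝ) (x : E2) : ‖gradient u x‖ ^ 2 = ∑ i, pd i u x ^ 2 := by
  rw [EuclideanSpace.norm_sq_eq]
  refine Finset.sum_congr rfl fun i _ => ?_
  have h : pd i u x = gradient u x i := by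
    have := InnerProductSpace.toDual_symm_apply (𝕜 := ℝ) (x := EuclideanSpace.single i (1 : ℝ))
      (y := fderiv ℝ u x)
    unfold pd gradient
    rw [← this, EuclideanSpace.inner_single_right]
    simp
  rw [h, Real.norm_eq_abs, sq_abs]

lemma pd_coord_mul {v : E2 → ℝ} (hv : ContDiff ℝ 1 v) (i : Fin 2) (x : E2) :
    pd i (fun x => x i * v x) x = v x + x i * pd i v x := by
  have hx : HasFDerivAt (fun x : E2 => x i) (EuclideanSpace.proj i : E2 →L[ℝ] ℝ) x :=
    (EuclideanSpace.proj i : E2 →L[ℝ] ℝ).hasFDerivAt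
  have hd := (hv.differentiable one_ne_zero x).hasFDerivAt
  unfold pd
  rw [HasFDerivAt.fderiv (f := fun x : E2 => x i * v x) (hx.mul hd)]
  simp
  ring

/-- `∫ v (x · ∇v) = - ∫ v²` in dimension two. -/
lemma integral_radial {v : E2 → ℝ} (hv : ContDiff ℝ 1 v) (hc : HasCompactSupport v)
    (hs : tsupport v ⊆ B2) : ∫ x in B2, (v x * ∑ i, x i * pd i v x + v x ^ 2) = 0 := by
  have hvc := hv.continuous
  have hpc := continuous_pd hv
  have hint : ∀ g : E2 → ℝ, Continuous g → Integrable fun x => v x * g x := fun g hg =>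
    (hvc.mul hg).integrable_of_hasCompactSupport hc.mul_right
  have hi : ∀ i : Fin 2, 2 * ∫ x, v x * (x i * pd i v x) = -∫ x, v x * v x := by
    intro i
    have e1 : ∀ x, fderiv ℝ (fun x : E2 => x i * v x) x (EuclideanSpace.single i 1) =
      v x + x i * pd i v x := pd_coord_mul hv i
    have h := integral_mul_fderiv_eq_neg_fderiv_mul_of_integrable (μ := (volume : Measure E2))
      (f := fun x : E2 => x i * v x) (g := v) (v := EuclideanSpace.single i 1)
      (by
        simp_rw [e1]
        refine (hint (fun x => v x + x i * pd i v x) (by fun_prop)).congr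
          (Eventually.of_forall fun x => mul_comm _ _))
      (by
        refine (hint (fun x => x i * pd i v x) (by fun_prop)).congr
          (Eventually.of_forall fun x => ?_)
        show v x * (x i * pd i v x) = x i * v x * pd i v x
        ring)
      (by
        refine (hint (fun x => x i * v x) (by fun_prop)).congr
          (Eventually.of_forall fun x => ?_)
        show v x * (x i * v x) = x i * v x * v x
        ring)
      (fun x _ => by
        have := hv.differentiable one_ne_zero x
        fun_prop)
      (fun x _ => hv.differentiable one_ne_zero x)
    simp_rw [e1] at h
    have e2 : ∫ x, x i * v x * fderiv ℝ v x (EuclideanSpace.single i 1) =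
        ∫ x, v x * (x i * pd i v x) := integral_congr_ae (Eventually.of_forall fun x => by
          show x i * v x * pd i v x = v x * (x i * pd i v x)
          ring)
    have e3 : ∫ x, (v x + x i * pd i v x) * v x =
        (∫ x, v x * v x) + ∫ x, v x * (x i * pd i v x) := by
      rw [← integral_add (hint v hvc) (hint (fun x => x i * pd i v x) (by fun_prop))]
      exact integral_congr_ae (Eventually.of_forall fun x => by
        show (v x + x i * pd i v x) * v x = v x * v x + v x * (x i * pd i v x)
        ring)
    rw [e2, e3] at h
    linarith
  rw [setIntegral_eq_integral_of_forall_compl_eq_zero fun x hx => by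
    simp [image_eq_zero_of_notMem_tsupport fun h => hx (hs h)]]
  have e : ∀ x : E2, v x * ∑ i, x i * pd i v x + v x ^ 2 =
      v x * (x 0 * pd 0 v x) + v x * (x 1 * pd 1 v x) + v x * v x := fun x => by
    rw [Fin.sum_univ_two]; ring
  simp_rw [e]
  have j0 := hint (fun x => x 0 * pd 0 v x) (by fun_prop)
  have j1 := hint (fun x => x 1 * pd 1 v x) (by fun_prop)
  have j01 : Integrable fun x : E2 => v x * (x 0 * pd 0 v x) + v x * (x 1 * pd 1 v x) := j0.add j1
  rw [integral_add j01 (hint v hvc), integral_add j0 j1]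
  linarith [hi 0, hi 1]

lemma pd_sqrt_weight_mul {v : E2 → ℝ} (hv : ContDiff ℝ 1 v) (i : Fin 2) {x : E2} (hx : x ∈ B2) :
    pd i (fun x => √(1 - ‖x‖ ^ 2) * v x) x =
      √(1 - ‖x‖ ^ 2) * pd i v x - x i / √(1 - ‖x‖ ^ 2) * v x := by
  have hx1 : 0 < 1 - ‖x‖ ^ 2 := one_sub_sq_pos (by simpa [B2] using hx)
  have h1 : HasFDerivAt (fun x : E2 => 1 - ‖x‖ ^ 2) (-(2 • innerSL ℝ x)) x :=
    (hasStrictFDerivAt_norm_sq x).hasFDerivAt.const_sub 1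
  have h2 := h1.sqrt hx1.ne'
  have hd := (hv.differentiable one_ne_zero x).hasFDerivAt
  unfold pd
  rw [HasFDerivAt.fderiv (f := fun x : E2 => √(1 - ‖x‖ ^ 2) * v x) (h2.mul hd)]
  simp [EuclideanSpace.inner_single_right]
  field_simp
  ring

/-- The ground state representation of the Hardy functional: the substitution
`u = √(1-|x|²) v` removes the singular potential. -/
lemma ground_state {v : E2 → ℝ} (hv : ContDiff ℝ 1 v) (hc : HasCompactSupport v)
    (hs : tsupport v ⊆ B2) {u : E2 → ℝ} (hu : u = fun x => √(1 - ‖x‖ ^ 2) * v x) :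
    (∫ x in B2, ‖gradient u x‖ ^ 2) - (∫ x in B2, u x ^ 2 / (1 - ‖x‖ ^ 2) ^ 2) = bilQ v v := by
  have hud : ContDiff ℝ 1 u := by rw [hu]; exact contDiff_sqrt_weight_mul (n := 1) hv hs
  have hvc := hv.continuous
  have hpc := continuous_pd hv
  have hpu := continuous_pd hud
  set D : E2 → ℝ := fun x => ((1 - ‖x‖ ^ 2) * ∑ i, pd i v x * pd i v x + v x * v x) -
    2 * (v x * ∑ i, x i * pd i v x + v x ^ 2) with hD
  have e1 : ∀ x ∈ B2, u x ^ 2 / (1 - ‖x‖ ^ 2) ^ 2 = (∑ i, pd i u x ^ 2) - D x := by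
    intro x hx
    have hx1 : 0 < 1 - ‖x‖ ^ 2 := one_sub_sq_pos (by simpa [B2] using hx)
    have hsq := Real.sq_sqrt hx1.le
    have hsp := Real.sqrt_pos.2 hx1
    have hn : ‖x‖ ^ 2 = x 0 ^ 2 + x 1 ^ 2 := by
      rw [EuclideanSpace.norm_sq_eq, Fin.sum_univ_two]; simp
    simp only [hD, hu, pd_sqrt_weight_mul hv _ hx, Fin.sum_univ_two]
    set s := √(1 - ‖x‖ ^ 2)
    rw [← hsq]
    have hx0 : x 0 ^ 2 = 1 - s ^ 2 - x 1 ^ 2 := by linarith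
    field_simp
    ring_nf
    rw [hx0]
    ring
  have e2 : ∫ x in B2, u x ^ 2 / (1 - ‖x‖ ^ 2) ^ 2 =
      (∫ x in B2, ∑ i, pd i u x ^ 2) - ∫ x in B2, D x := by
    rw [setIntegral_congr_fun measurableSet_B2 e1, integral_sub (integrableOn_B2 (by fun_prop))
      (integrableOn_B2 (by simp only [hD]; fun_prop))]
  have e3 : ∫ x in B2, D x = bilQ v v := by
    simp only [hD]
    rw [integral_sub (integrableOn_B2 (by fun_prop)) (integrableOn_B2 (by fun_prop)),
      integral_const_mul, integral_radial hv hc hs, mul_zero, sub_zero]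
    rfl
  simp_rw [norm_gradient_sq]
  rw [e2, e3]
  ring

/-- The smooth substitute `√(v²+1) - 1` for `|v|`. -/
def smoothAbs (v : E2 → ℝ) (x : E2) : ℝ := √(v x ^ 2 + 1) - 1

lemma contDiff_smoothAbs {v : E2 → ℝ} (hv : ContDiff ℝ 1 v) : ContDiff ℝ 1 (smoothAbs v) :=
  (((hv.pow 2).add contDiff_const).sqrt fun x => by positivity).sub contDiff_const

lemma smoothAbs_nonneg (v : E2 → ℝ) (x : E2) : 0 ≤ smoothAbs v x := by
  have : 1 ≤ √(v x ^ 2 + 1) := Real.one_le_sqrt.2 (by nlinarith [sq_nonneg (v x)])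
  unfold smoothAbs; linarith

lemma le_smoothAbs (v : E2 → ℝ) (x : E2) : v x ≤ smoothAbs v x + 1 := by
  have : v x ≤ √(v x ^ 2 + 1) := Real.le_sqrt_of_sq_le (by linarith)
  unfold smoothAbs; linarith

lemma smoothAbs_sq_le (v : E2 → ℝ) (x : E2) : smoothAbs v x * smoothAbs v x ≤ v x * v x := by
  have h1 := smoothAbs_nonneg v x
  have h2 := Real.sq_sqrt (show 0 ≤ v x ^ 2 + 1 by positivity)
  unfold smoothAbs at *
  nlinarith

lemma pd_smoothAbs_sq_le {v : E2 → ℝ} (hv : ContDiff ℝ 1 v) (i : Fin 2) (x : E2) :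
    pd i (smoothAbs v) x * pd i (smoothAbs v) x ≤ pd i v x * pd i v x := by
  have hp : 0 < v x ^ 2 + 1 := by positivity
  have hd := (hv.differentiable one_ne_zero x).hasFDerivAt
  have h1 := (((hd.pow 2).add_const 1).sqrt hp.ne').sub_const 1
  have e : pd i (smoothAbs v) x = v x / √(v x ^ 2 + 1) * pd i v x := by
    unfold pd
    rw [HasFDerivAt.fderiv (f := smoothAbs v) h1]
    simp
    field_simp
  have h2 : (v x / √(v x ^ 2 + 1)) ^ 2 ≤ 1 := by
    rw [div_pow, Real.sq_sqrt hp.le, div_le_one hp]; linarith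
  rw [e]
  calc _ = (v x / √(v x ^ 2 + 1)) ^ 2 * (pd i v x * pd i v x) := by ring
    _ ≤ 1 * (pd i v x * pd i v x) := by
        gcongr
        exact mul_self_nonneg _
    _ = _ := one_mul _

lemma bilQ_smoothAbs_le {v : E2 → ℝ} (hv : ContDiff ℝ 1 v) :
    bilQ (smoothAbs v) (smoothAbs v) ≤ bilQ v v := by
  have hw := contDiff_smoothAbs hv
  have := continuous_pd hv
  have := continuous_pd hw
  have := hv.continuous
  have := hw.continuous
  refine setIntegral_mono_on (integrableOn_B2 (by fun_prop)) (integrableOn_B2 (by fun_prop))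
    measurableSet_B2 fun x hx => ?_
  have hx1 : 0 < 1 - ‖x‖ ^ 2 := one_sub_sq_pos (by simpa [B2] using hx)
  exact add_le_add (mul_le_mul_of_nonneg_left
    (Finset.sum_le_sum fun i _ => pd_smoothAbs_sq_le hv i x) hx1.le) (smoothAbs_sq_le v x)

/-- The inequality in the variable `v = u / √(1-|x|²)`, without sign condition. -/
lemma hmt_signed {v : E2 → ℝ} (hv : ContDiff ℝ 1 v) (hc : HasCompactSupport v)
    (hs : tsupport v ⊆ B2) :
    8 * π * Real.log (∫ x in B2, Real.exp (√(1 - ‖x‖ ^ 2) * v x)) ≤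
      1 / 2 * bilQ v v + (16 * π + 16 * π * (25 + Real.log 2) +
        32 * π ^ 2 * (2 + 384 * Real.exp (7 / 2))) := by
  set w := smoothAbs v with hw
  have hwd : ContDiff ℝ 1 w := contDiff_smoothAbs hv
  have h0 : √((0 : ℝ) ^ 2 + 1) - 1 = 0 := by simp
  have hws : tsupport w ⊆ tsupport v :=
    tsupport_comp_subset (g := fun t : ℝ => √(t ^ 2 + 1) - 1) h0 v
  have hwc : HasCompactSupport w := hc.comp_left (g := fun t : ℝ => √(t ^ 2 + 1) - 1) h0
  have key := hmt_nonneg hwd (smoothAbs_nonneg v) hwc (hws.trans hs)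
  have hQ := bilQ_smoothAbs_le hv
  have c1 : Continuous fun x : E2 => Real.exp (√(1 - ‖x‖ ^ 2) * v x) := by
    have := hv.continuous
    fun_prop
  have c2 : Continuous fun x : E2 => Real.exp (√(1 - ‖x‖ ^ 2) * w x) := by
    have := hwd.continuous
    fun_prop
  have i1 := integrableOn_B2 c1
  have i2 := integrableOn_B2 c2
  have hcomp : ∫ x in B2, Real.exp (√(1 - ‖x‖ ^ 2) * v x) ≤
      Real.exp 1 * ∫ x in B2, Real.exp (√(1 - ‖x‖ ^ 2) * w x) := by
    rw [← integral_const_mul]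
    refine integral_mono i1 (i2.const_mul _) fun x => ?_
    show Real.exp (√(1 - ‖x‖ ^ 2) * v x) ≤ Real.exp 1 * Real.exp (√(1 - ‖x‖ ^ 2) * w x)
    rw [← Real.exp_add, Real.exp_le_exp]
    have s0 := Real.sqrt_nonneg (1 - ‖x‖ ^ 2)
    have s1 : √(1 - ‖x‖ ^ 2) ≤ 1 := Real.sqrt_le_one.2 (by nlinarith [sq_nonneg ‖x‖])
    nlinarith [le_smoothAbs v x]
  have hpos : ∀ f : E2 → ℝ, IntegrableOn (fun x => Real.exp (f x)) B2 →
      0 < ∫ x in B2, Real.exp (f x) := fun f hf => by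
    have : NeZero (volume.restrict B2) := ⟨by
      rw [Ne, Measure.restrict_eq_zero]
      exact (Metric.measure_ball_pos volume (0 : E2) one_pos).ne'⟩
    exact integral_exp_pos hf
  have hlog := Real.log_le_log (hpos _ i1) hcomp
  rw [Real.log_mul (Real.exp_pos 1).ne' (hpos _ i2).ne', Real.log_exp] at hlog
  have := mul_le_mul_of_nonneg_left hlog (show 0 ≤ 8 * π by positivity)
  linarith

/-- Weaker form of the Hardy–Moser–Trudinger inequality (Corollary):
`(1/2)∫_B |∇u|² − (1/2)∫_B u²/(1−|x|²)² − 8π log(∫_B e^u) ≥ −C` for nonzero `u ∈ C_c^∞(B)`. -/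
theorem hardy_moser_trudinger_weak_form :
    ∃ C : ℝ, 0 < C ∧ ∀ u : E2 → ℝ, IsTest u → u ≠ 0 →
      (1 / 2) * (∫ x in B2, ‖gradient u x‖ ^ 2)
        - (1 / 2) * (∫ x in B2, (u x) ^ 2 / (1 - ‖x‖ ^ 2) ^ 2)
        - 8 * π * Real.log (∫ x in B2, Real.exp (u x)) ≥ -C := by
  refine ⟨16 * π + 16 * π * (25 + Real.log 2) + 32 * π ^ 2 * (2 + 384 * Real.exp (7 / 2)), ?_, ?_⟩
  · have := Real.log_nonneg one_le_two
    positivity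
  rintro u ⟨hu, hc, hs⟩ -
  set v : E2 → ℝ := fun x => (√(1 - ‖x‖ ^ 2))⁻¹ * u x with hv
  have hvs : tsupport v ⊆ tsupport u := tsupport_mul_subset_right
  have hvc : HasCompactSupport v := hc.mul_left
  have hvd : ContDiff ℝ 1 v := by
    rw [contDiff_iff_contDiffAt]
    intro x
    by_cases hx : x ∈ tsupport u
    · have hx1 : 0 < 1 - ‖x‖ ^ 2 := one_sub_sq_pos (by simpa [B2] using hs hx)
      refine ContDiffAt.mul ?_ (hu.of_le (by exact_mod_cast le_top)).contDiffAt
      refine ContDiffAt.inv (ContDiffAt.sqrt ?_ hx1.ne') (Real.sqrt_pos.2 hx1).ne'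
      exact contDiffAt_const.sub (contDiff_norm_sq ℝ).contDiffAt
    · have : v =ᶠ[nhds x] fun _ => 0 := by
        filter_upwards [notMem_tsupport_iff_eventuallyEq.1 hx] with z hz
        simp [hv, hz]
      exact contDiffAt_const.congr_of_eventuallyEq this
  have huv : u = fun x => √(1 - ‖x‖ ^ 2) * v x := by
    funext x
    by_cases hx : x ∈ B2
    · have hx1 : 0 < 1 - ‖x‖ ^ 2 := one_sub_sq_pos (by simpa [B2] using hx)
      have := (Real.sqrt_pos.2 hx1).ne'
      simp only [hv]
      field_simp
    · have := image_eq_zero_of_notMem_tsupport fun h => hx (hs h)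
      simp [hv, this]
  have h1 := ground_state hvd hvc (hvs.trans hs) huv
  have h2 := hmt_signed hvd hvc (hvs.trans hs)
  have h3 : ∫ x in B2, Real.exp (√(1 - ‖x‖ ^ 2) * v x) = ∫ x in B2, Real.exp (u x) :=
    integral_congr_ae (Eventually.of_forall fun x => congrArg Real.exp (congrFun huv x).symm)
  rw [h3] at h2
  linarith
end
end

section
/- For every p ∈ [1, ∞) there exists a constant C_p > 0 such that for all u ∈ C_c^∞(B), (∫_B |u(x)|^p dx)^{2/p} ≤ C_p · H(u). In particular (p = 2), there is C > 0 with ∫_B u² dx ≤ C · H(u) for all u ∈ C_c^∞(B). -/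
/-!
Put `w = u / (1 - |x|²)` and `g = ∇u + w x`. Integrating `div (u w x)` gives the ground state
representation `H(u) = ∫ |g|² + ∫ u²/(1 - |x|²)` (`H_eq`). In particular `∫ u² ≤ H(u)`.

Higher exponents are reached by repeated doubling (`even_moment_step`). For even `q`, the planar
Sobolev inequality `‖F‖₂ ≤ C ‖∇F‖₁` with `F = u^q` requires a bound on `∫ |u|^(q-1) |∇u|`, hence
on `∫ |u|^(q-1) |g|` and on the singular integral `∫ u^(q-1) w`. Integrating `div (u^q x)` controls
the singular integral by `∫ u^q` and `∫ |u|^(q-1) |g|` (`integral_fderiv_pow_le`). By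
Cauchy–Schwarz, `(∫ |u|^(q-1) |g|)² ≤ H(u) ∫ u^(2q-2)`, and
`H(u) u^(2q-2) ≤ ε u^(2q) + C_ε H(u)^(q/2) u^q` pointwise, so that part of the right-hand side is
absorbed into `∫ u^(2q)`. Thus `∫ u^q ≤ K H(u)^(q/2)` implies `∫ u^(2q) ≤ K' H(u)^q`.

A general `p` lies below some power of two, and the disc has finite area.
-/


open MeasureTheory Real Filter

noncomputable section

/-! ### The quotient `w` and the field `g` -/

/-- The singular quotient `w = u / (1 - |x|²)`. For a test function `u` it is again smooth with
compact support in the disc: where the denominator vanishes, `u` does so on a neighbourhood. -/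
def hardyQuot (u : E2 → ℝ) (x : E2) : ℝ := u x / (1 - ‖x‖ ^ 2)

/-- The field `g = ∇u + w x`. It equals `φ ∇v`, where `φ = (1 - |x|²)^(1/2)` and `u = φ v`. -/
def hardyField (u : E2 → ℝ) (x : E2) : E2 := gradient u x + hardyQuot u x • x

lemma norm_lt_one_of_mem {u : E2 → ℝ} (hu : IsTest u) {x : E2} (hx : x ∈ tsupport u) :
    ‖x‖ < 1 := by
  have := hu.2.2 hx
  simpa [B2] using this

lemma u_zero {u : E2 → ℝ} {x : E2} (hx : x ∉ tsupport u) : u x = 0 :=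
  image_eq_zero_of_notMem_tsupport hx

lemma hardyQuot_zero {u : E2 → ℝ} {x : E2} (hx : x ∉ tsupport u) : hardyQuot u x = 0 := by
  simp [hardyQuot, u_zero hx]

lemma fderiv_u_zero {u : E2 → ℝ} {x : E2} (hx : x ∉ tsupport u) : fderiv ℝ u x = 0 :=
  fderiv_of_notMem_tsupport ℝ hx

lemma gradient_zero {u : E2 → ℝ} {x : E2} (hx : x ∉ tsupport u) : gradient u x = 0 := by
  simp [gradient, fderiv_u_zero hx]

lemma hardyField_zero {u : E2 → ℝ} {x : E2} (hx : x ∉ tsupport u) : hardyField u x = 0 := by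
  simp [hardyField, gradient_zero hx, hardyQuot_zero hx]

lemma integrable_of_zero {u f : E2 → ℝ} (hu : IsTest u) (hf : Continuous f)
    (h0 : ∀ x, x ∉ tsupport u → f x = 0) : Integrable f :=
  hf.integrable_of_hasCompactSupport (HasCompactSupport.intro hu.2.1.isCompact h0)

lemma setIntegral_eq {u f : E2 → ℝ} (hu : IsTest u)
    (h0 : ∀ x, x ∉ tsupport u → f x = 0) : ∫ x in B2, f x = ∫ x, f x :=
  setIntegral_eq_integral_of_forall_compl_eq_zero fun x hx => h0 x fun h => hx (hu.2.2 h)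

lemma hardyQuot_mul {u : E2 → ℝ} (hu : IsTest u) (x : E2) :
    u x = hardyQuot u x * (1 - ‖x‖ ^ 2) := by
  by_cases hx : x ∈ tsupport u
  · have h := norm_lt_one_of_mem hu hx
    have : 1 - ‖x‖ ^ 2 ≠ 0 := by nlinarith [norm_nonneg x]
    rw [hardyQuot, div_mul_cancel₀ _ this]
  · rw [u_zero hx, hardyQuot_zero hx, zero_mul]

lemma contDiff_u {u : E2 → ℝ} (hu : IsTest u) : ContDiff ℝ 1 u :=
  hu.1.of_le (by exact_mod_cast le_top)

lemma contDiff_hardyQuot {u : E2 → ℝ} (hu : IsTest u) : ContDiff ℝ 1 (hardyQuot u) := by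
  rw [contDiff_iff_contDiffAt]
  intro x
  by_cases hx : x ∈ tsupport u
  · have h := norm_lt_one_of_mem hu hx
    have : 1 - ‖x‖ ^ 2 ≠ 0 := by nlinarith [norm_nonneg x]
    exact (contDiff_u hu).contDiffAt.div
      (contDiffAt_const.sub (contDiff_norm_sq ℝ).contDiffAt) this
  · have h0 : u =ᶠ[nhds x] 0 := notMem_tsupport_iff_eventuallyEq.mp hx
    have : hardyQuot u =ᶠ[nhds x] fun _ => (0 : ℝ) := by
      filter_upwards [h0] with y hy
      simp [hardyQuot, hy]
    exact contDiffAt_const.congr_of_eventuallyEq this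

lemma continuous_gradient {u : E2 → ℝ} (hu : IsTest u) : Continuous (gradient u) :=
  (InnerProductSpace.toDual ℝ E2).symm.continuous.comp
    ((contDiff_u hu).continuous_fderiv (by norm_num))

lemma continuous_hardyField {u : E2 → ℝ} (hu : IsTest u) : Continuous (hardyField u) :=
  (continuous_gradient hu).add ((contDiff_hardyQuot hu).continuous.smul continuous_id)

/-! ### The ground state representation -/

/-- The divergence theorem for the field `F x`, whose divergence in the plane is `2 F + x · ∇F`. -/
lemma integral_div_radial {F : E2 → ℝ} (hF : ContDiff ℝ 1 F) (hc : HasCompactSupport F) :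
    ∫ x, (2 * F x + fderiv ℝ F x x) = 0 := by
  have hcF := hF.continuous
  have hdF : Continuous (fderiv ℝ F) := hF.continuous_fderiv (by norm_num)
  have i1 : Integrable F := hcF.integrable_of_hasCompactSupport hc
  have z : ∀ x, x ∉ tsupport F → fderiv ℝ F x = 0 := fun x hx => fderiv_of_notMem_tsupport ℝ hx
  let e : Fin 2 → E2 := fun i => EuclideanSpace.single i 1
  have i2 : ∀ i, Integrable fun x : E2 => x i * fderiv ℝ F x (e i) := fun i =>
    Continuous.integrable_of_hasCompactSupport (by fun_prop)
      (HasCompactSupport.intro hc.isCompact fun x hx => by simp [z x hx])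
  have key : ∀ i, ∫ x : E2, x i * fderiv ℝ F x (e i) = - ∫ x, F x := by
    intro i
    have hd : ∀ x : E2, fderiv ℝ (fun x : E2 => x i) x (e i) = 1 := by
      intro x
      have : HasFDerivAt (fun x : E2 => x i) (EuclideanSpace.proj i : E2 →L[ℝ] ℝ) x :=
        (EuclideanSpace.proj i : E2 →L[ℝ] ℝ).hasFDerivAt
      rw [this.fderiv]
      simp [e]
    have := integral_mul_fderiv_eq_neg_fderiv_mul_of_integrable (μ := volume)
      (f := fun x : E2 => x i) (g := F) (v := e i)
      (by simpa only [hd, one_mul] using i1) (i2 i)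
      (Continuous.integrable_of_hasCompactSupport (by fun_prop) hc.mul_left)
      (fun x _ => (EuclideanSpace.proj i : E2 →L[ℝ] ℝ).differentiableAt)
      (fun x _ => hF.differentiable (by norm_num) x)
    simpa only [hd, one_mul] using this
  have hx : ∀ x : E2, fderiv ℝ F x x
      = x 0 * fderiv ℝ F x (e 0) + x 1 * fderiv ℝ F x (e 1) := by
    intro x
    have : x = x 0 • e 0 + x 1 • e 1 := by
      ext j; fin_cases j <;> simp [e]
    calc fderiv ℝ F x x = fderiv ℝ F x (x 0 • e 0 + x 1 • e 1) := by rw [← this]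
      _ = _ := by simp
  simp_rw [hx]
  rw [integral_add (i1.const_mul 2) ((i2 0).fun_add (i2 1)), integral_add (i2 0) (i2 1), key, key,
    integral_const_mul]
  ring

lemma fderiv_u_radial {u : E2 → ℝ} (hu : IsTest u) (x : E2) :
    fderiv ℝ u x x = fderiv ℝ (hardyQuot u) x x * (1 - ‖x‖ ^ 2) - 2 * ‖x‖ ^ 2 * hardyQuot u x := by
  have h1 : HasFDerivAt (fun y : E2 => 1 - ‖y‖ ^ 2) (-(2 • innerSL ℝ x)) x :=
    ((hasStrictFDerivAt_norm_sq x).hasFDerivAt).const_sub 1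
  have h2 := ((contDiff_hardyQuot hu).differentiable (by norm_num) x).hasFDerivAt.mul h1
  have h3 : u = (hardyQuot u * fun y : E2 => 1 - ‖y‖ ^ 2) := by
    ext y; exact hardyQuot_mul hu y
  rw [← h3] at h2
  rw [h2.fderiv]
  simp
  ring

lemma inner_gradient_self {u : E2 → ℝ} (x y : E2) :
    inner ℝ (gradient u x) y = fderiv ℝ u x y := by
  simp [gradient]

lemma norm_gradient {u : E2 → ℝ} (x : E2) : ‖gradient u x‖ = ‖fderiv ℝ u x‖ := by
  simp [gradient]

/-- The ground state representation `H(u) = ∫ |g|² + ∫ u w`. The two sides differ by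
`∫ div (u w x) = 0`. -/
lemma H_eq {u : E2 → ℝ} (hu : IsTest u) :
    H u = (∫ x, ‖hardyField u x‖ ^ 2) + ∫ x, u x * hardyQuot u x := by
  have cu := (contDiff_u hu).continuous
  have cw := (contDiff_hardyQuot hu).continuous
  have cg := continuous_gradient hu
  have ch := continuous_hardyField hu
  have cd : Continuous fun x => fderiv ℝ u x x :=
    ((contDiff_u hu).continuous_fderiv (by norm_num)).clm_apply continuous_id
  have e1 : ∫ x in B2, ‖gradient u x‖ ^ 2 = ∫ x, ‖gradient u x‖ ^ 2 :=
    setIntegral_eq hu fun x hx => by simp [gradient_zero hx]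
  have e2 : ∫ x in B2, (u x) ^ 2 / (1 - ‖x‖ ^ 2) ^ 2 = ∫ x, hardyQuot u x ^ 2 := by
    simp_rw [← div_pow]
    exact setIntegral_eq hu fun x hx => by simp [u_zero hx]
  have hdiv := integral_div_radial ((contDiff_u hu).mul (contDiff_hardyQuot hu))
    hu.2.1.mul_right
  rw [H, e1, e2, ← integral_sub, ← integral_add, ← sub_eq_zero, ← integral_sub, ← neg_eq_zero,
    ← integral_neg, ← hdiv]
  · congr 1
    ext x
    have hm : fderiv ℝ (fun x => u x * hardyQuot u x) x x
        = u x * fderiv ℝ (hardyQuot u) x x + hardyQuot u x * fderiv ℝ u x x := by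
      have := ((contDiff_u hu).differentiable (by norm_num) x).hasFDerivAt.mul
        ((contDiff_hardyQuot hu).differentiable (by norm_num) x).hasFDerivAt
      rw [show (fun x => u x * hardyQuot u x) = u * hardyQuot u from rfl, this.fderiv]
      simp
    rw [hm, fderiv_u_radial hu]
    have hn : ‖hardyField u x‖ ^ 2 = ‖gradient u x‖ ^ 2 + 2 * (hardyQuot u x * fderiv ℝ u x x)
        + hardyQuot u x ^ 2 * ‖x‖ ^ 2 := by
      rw [hardyField, norm_add_sq_real, inner_smul_right, inner_gradient_self, norm_smul, mul_pow,
        Real.norm_eq_abs, sq_abs]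
    rw [hn, fderiv_u_radial hu, hardyQuot_mul hu x]
    ring
  all_goals refine integrable_of_zero hu (by fun_prop) fun x hx => ?_
  all_goals simp [u_zero hx, hardyQuot_zero hx, hardyField_zero hx, gradient_zero hx]

lemma u_mul_hardyQuot_ge {u : E2 → ℝ} (hu : IsTest u) (x : E2) :
    u x ^ 2 ≤ u x * hardyQuot u x := by
  by_cases hx : x ∈ tsupport u
  · have h := norm_lt_one_of_mem hu hx
    rw [hardyQuot_mul hu x]
    have : 0 ≤ 1 - ‖x‖ ^ 2 := by nlinarith [norm_nonneg x]
    have := mul_nonneg (mul_nonneg this (sq_nonneg ‖x‖)) (sq_nonneg (hardyQuot u x))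
    nlinarith
  · simp [u_zero hx]

/-! ### Sobolev and doubling of the exponent -/

/-- Gagliardo–Nirenberg–Sobolev in the plane, in terms of real integrals. -/
lemma sobolev_plane : ∃ C : ℝ, 0 ≤ C ∧ ∀ F : E2 → ℝ, ContDiff ℝ 1 F → HasCompactSupport F →
    ∫ x, F x ^ 2 ≤ C * (∫ x, ‖fderiv ℝ F x‖) ^ 2 := by
  refine ⟨lintegralPowLePowLIntegralFDerivConst (volume : Measure E2) 2, NNReal.coe_nonneg _, ?_⟩
  intro F hF hc
  have hp : Real.HolderConjugate (Module.finrank ℝ E2 : ℝ) 2 := by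
    rw [finrank_euclideanSpace_fin]
    exact_mod_cast Real.HolderConjugate.two_two
  have h := lintegral_pow_le_pow_lintegral_fderiv (volume : Measure E2) hF hc hp
  have i1 : Integrable fun x => F x ^ 2 :=
    (hF.continuous.pow 2).integrable_of_hasCompactSupport
      (HasCompactSupport.intro hc.isCompact fun x hx => by
        simp [image_eq_zero_of_notMem_tsupport hx])
  have i2 : Integrable (fderiv ℝ F) :=
    (hF.continuous_fderiv (by norm_num)).integrable_of_hasCompactSupport (hc.fderiv ℝ)
  have e1 : ∫⁻ x, ‖F x‖ₑ ^ (2 : ℝ) = ENNReal.ofReal (∫ x, F x ^ 2) := by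
    rw [ofReal_integral_eq_lintegral_ofReal i1 (ae_of_all _ fun x => sq_nonneg _)]
    congr 1
    ext x
    rw [← ofReal_norm, ENNReal.ofReal_rpow_of_nonneg (norm_nonneg _) (by norm_num)]
    simp
  have e2 : ∫⁻ x, ‖fderiv ℝ F x‖ₑ = ENNReal.ofReal (∫ x, ‖fderiv ℝ F x‖) :=
    (ofReal_integral_norm_eq_lintegral_enorm i2).symm
  have n2 : 0 ≤ ∫ x, ‖fderiv ℝ F x‖ := integral_nonneg fun x => norm_nonneg _
  rw [e1, e2, ENNReal.ofReal_rpow_of_nonneg n2 (by norm_num), ← ENNReal.ofReal_coe_nnreal,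
    ← ENNReal.ofReal_mul (NNReal.coe_nonneg _), ENNReal.ofReal_le_ofReal_iff (by positivity)] at h
  exact_mod_cast h

/-- The absorption inequality: either `s ≤ ε t`, and the first term on the right dominates, or
`t ≤ s / ε`, and the second one does. -/
lemma young_pow {s t ε : ℝ} (hs : 0 ≤ s) (ht : 0 ≤ t) (hε : 0 < ε) (n : ℕ) :
    s * t ^ (2 * n + 1) ≤ ε * t ^ (2 * n + 2) + (ε⁻¹) ^ n * (s ^ (n + 1) * t ^ (n + 1)) := by
  rcases le_total s (ε * t) with h | h
  · have h1 : s * t ^ (2 * n + 1) ≤ ε * t * t ^ (2 * n + 1) := by gcongr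
    have h2 : 0 ≤ (ε⁻¹) ^ n * (s ^ (n + 1) * t ^ (n + 1)) := by positivity
    calc _ ≤ ε * t * t ^ (2 * n + 1) := h1
      _ = ε * t ^ (2 * n + 2) := by ring
      _ ≤ _ := by linarith
  · have h1 : t ≤ ε⁻¹ * s := by
      rw [inv_mul_eq_div, le_div_iff₀ hε]; linarith
    have h2 : t ^ n ≤ (ε⁻¹ * s) ^ n := by gcongr
    have h3 : 0 ≤ ε * t ^ (2 * n + 2) := by positivity
    calc s * t ^ (2 * n + 1) = t ^ n * (s * t ^ (n + 1)) := by ring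
      _ ≤ (ε⁻¹ * s) ^ n * (s * t ^ (n + 1)) := by gcongr
      _ = (ε⁻¹) ^ n * (s ^ (n + 1) * t ^ (n + 1)) := by ring
      _ ≤ _ := by linarith

lemma cauchy_schwarz {f g : E2 → ℝ} (hf : Continuous f) (hg : Continuous g)
    (cf : HasCompactSupport f) (cg : HasCompactSupport g) (f0 : ∀ x, 0 ≤ f x)
    (g0 : ∀ x, 0 ≤ g x) :
    (∫ x, f x * g x) ^ 2 ≤ (∫ x, f x ^ 2) * ∫ x, g x ^ 2 := by
  have h := integral_mul_le_Lp_mul_Lq_of_nonneg (μ := (volume : Measure E2))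
    Real.HolderConjugate.two_two (ae_of_all _ f0) (ae_of_all _ g0)
    (hf.memLp_of_hasCompactSupport cf) (hg.memLp_of_hasCompactSupport cg)
  simp only [Real.rpow_two, ← Real.sqrt_eq_rpow] at h
  have h0 : 0 ≤ ∫ x, f x * g x := integral_nonneg fun x => mul_nonneg (f0 x) (g0 x)
  have a0 : 0 ≤ ∫ x, f x ^ 2 := integral_nonneg fun x => sq_nonneg _
  have b0 : 0 ≤ ∫ x, g x ^ 2 := integral_nonneg fun x => sq_nonneg _
  calc _ ≤ (√(∫ x, f x ^ 2) * √(∫ x, g x ^ 2)) ^ 2 := by gcongr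
    _ = _ := by rw [mul_pow, Real.sq_sqrt a0, Real.sq_sqrt b0]

/-- The `L¹` norm of `∇(u^q)`, `q = 2n + 2`, in terms of the regular field `g` and `∫ u^q` only.
Writing `∇u = g - w x` leaves the singular term `q ∫ u^(q-1) w`. The vanishing of
`∫ div (u^q x)` expresses `q ∫ u^(q-1) w |x|²` through `u^q` and `g`, and
`u^(q-1) w (1 - |x|²) = u^q` accounts for the rest. -/
lemma integral_fderiv_pow_le {u : E2 → ℝ} (hu : IsTest u) (n : ℕ) :
    ∫ x, ‖fderiv ℝ (fun y => u y ^ (2 * n + 2)) x‖ ≤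
      4 * (n + 1) * (∫ x, |u x| ^ (2 * n + 1) * ‖hardyField u x‖)
        + 2 * (n + 2) * ∫ x, u x ^ (2 * n + 2) := by
  have cu := (contDiff_u hu).continuous
  have cw := (contDiff_hardyQuot hu).continuous
  have ch := continuous_hardyField hu
  have cd : Continuous fun x => fderiv ℝ u x x :=
    ((contDiff_u hu).continuous_fderiv (by norm_num)).clm_apply continuous_id
  have hfd : ∀ x, fderiv ℝ (fun y => u y ^ (2 * n + 2)) x
      = ((2 * n + 2 : ℝ) * u x ^ (2 * n + 1)) • fderiv ℝ u x := by
    intro x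
    have := ((contDiff_u hu).differentiable (by norm_num) x).hasFDerivAt.pow (2 * n + 2)
    rw [HasFDerivAt.fderiv this]
    simp
  have hF : ContDiff ℝ 1 fun y => u y ^ (2 * n + 2) := (contDiff_u hu).pow _
  have hFc : HasCompactSupport fun y => u y ^ (2 * n + 2) :=
    HasCompactSupport.intro hu.2.1.isCompact fun x hx => by simp [u_zero hx]
  have cF' : Continuous fun x => ‖fderiv ℝ (fun y => u y ^ (2 * n + 2)) x‖ :=
    (hF.continuous_fderiv (by norm_num)).norm
  have hdiv := integral_div_radial hF hFc
  have i1 : Integrable fun x => ‖fderiv ℝ (fun y => u y ^ (2 * n + 2)) x‖ :=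
    integrable_of_zero hu cF' fun x hx => by simp [hfd, fderiv_u_zero hx]
  have i2 : Integrable fun x => |u x| ^ (2 * n + 1) * ‖hardyField u x‖ :=
    integrable_of_zero hu (by fun_prop) fun x hx => by simp [u_zero hx]
  have i3 : Integrable fun x => u x ^ (2 * n + 2) :=
    integrable_of_zero hu (by fun_prop) fun x hx => by simp [u_zero hx]
  have i4 : Integrable fun x => 2 * u x ^ (2 * n + 2)
      + fderiv ℝ (fun y => u y ^ (2 * n + 2)) x x := by
    simp_rw [hfd]
    refine integrable_of_zero hu ?_ fun x hx => by simp [u_zero hx]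
    simp only [smul_apply, smul_eq_mul]
    fun_prop
  -- Subtracting the integrand of mean zero makes the singular terms comparable pointwise.
  have key : ∫ x, ‖fderiv ℝ (fun y => u y ^ (2 * n + 2)) x‖ ≤
      ∫ x, (4 * (n + 1) * (|u x| ^ (2 * n + 1) * ‖hardyField u x‖)
        + 2 * (n + 2) * u x ^ (2 * n + 2)
        - (2 * u x ^ (2 * n + 2) + fderiv ℝ (fun y => u y ^ (2 * n + 2)) x x)) := by
    refine integral_mono i1 (((i2.const_mul _).add (i3.const_mul _)).sub i4) fun x => ?_
    simp only [hfd, norm_smul, smul_apply, smul_eq_mul, norm_mul, norm_pow,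
      Real.norm_eq_abs]
    by_cases hx : x ∈ tsupport u
    · have h1 := (norm_lt_one_of_mem hu hx).le
      have hw0 : 0 ≤ u x * hardyQuot u x := (sq_nonneg _).trans (u_mul_hardyQuot_ge hu x)
      have hn : (|2 * (n : ℝ) + 2|) = 2 * n + 2 := abs_of_nonneg (by positivity)
      have hg : gradient u x = hardyField u x - hardyQuot u x • x := by simp [hardyField]
      have b1 : ‖fderiv ℝ u x‖ ≤ ‖hardyField u x‖ + |hardyQuot u x| := by
        rw [← norm_gradient, hg]
        refine (norm_sub_le _ _).trans ?_
        rw [norm_smul, Real.norm_eq_abs]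
        nlinarith [abs_nonneg (hardyQuot u x)]
      have b2 : fderiv ℝ u x x = inner ℝ (hardyField u x) x - hardyQuot u x * ‖x‖ ^ 2 := by
        rw [← inner_gradient_self, hg, inner_sub_left, inner_smul_left, real_inner_self_eq_norm_sq]
        simp
      have b3 : |inner ℝ (hardyField u x) x| ≤ ‖hardyField u x‖ :=
        (abs_real_inner_le_norm _ _).trans (by nlinarith [norm_nonneg (hardyField u x)])
      have b4 : u x ^ (2 * n + 1) * inner ℝ (hardyField u x) x
          ≤ |u x| ^ (2 * n + 1) * ‖hardyField u x‖ := by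
        refine (le_abs_self _).trans ?_
        rw [abs_mul, abs_pow]
        gcongr
      have b5 : |u x| ^ (2 * n + 1) * |hardyQuot u x| = u x ^ (2 * n + 1) * hardyQuot u x := by
        rw [pow_succ, mul_assoc, ← abs_mul, abs_of_nonneg hw0, Even.pow_abs (by simp)]
        ring
      have b6 : u x ^ (2 * n + 1) * hardyQuot u x * (1 - ‖x‖ ^ 2) = u x ^ (2 * n + 2) := by
        rw [mul_assoc, ← hardyQuot_mul hu x]
        ring
      have b7 : |u x| ^ (2 * n + 1) * ‖fderiv ℝ u x‖ ≤
          |u x| ^ (2 * n + 1) * ‖hardyField u x‖ + u x ^ (2 * n + 1) * hardyQuot u x := by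
        rw [← b5, ← mul_add]
        gcongr
      rw [hn, b2]
      have n0 : (0 : ℝ) ≤ 2 * n + 2 := by positivity
      have c1 := mul_le_mul_of_nonneg_left b7 n0
      have c2 := mul_le_mul_of_nonneg_left b4 n0
      have c3 : (2 * (n : ℝ) + 2) * (u x ^ (2 * n + 1) * hardyQuot u x * (1 - ‖x‖ ^ 2))
        = (2 * n + 2) * u x ^ (2 * n + 2) := by rw [b6]
      linarith
    · simp [u_zero hx]
  rw [integral_sub ((i2.const_mul _).fun_add (i3.const_mul _)) i4, hdiv,
    integral_add (i2.const_mul _) (i3.const_mul _), integral_const_mul, integral_const_mul] at key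
  linarith

/-- Doubling the exponent: with `q = 2n + 2`, a bound `∫ u^q ≤ K H(u)^(q/2)` implies the same
kind of bound for `∫ u^(2q)`. The planar Sobolev inequality is applied to `u^q`; the term
`∫ |u|^(q-1) |g|` is estimated by Cauchy–Schwarz and absorbed with `young_pow`. The bounds are
stated for every `s > 0` above `H u`, so that no division by a vanishing `H u` occurs. -/
lemma even_moment_step (n : ℕ)
    (h : ∃ K : ℝ, 0 ≤ K ∧ ∀ u, IsTest u → ∀ s, 0 < s → H u ≤ s →
      ∫ x, u x ^ (2 * n + 2) ≤ K * s ^ (n + 1)) :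
    ∃ K : ℝ, 0 ≤ K ∧ ∀ u, IsTest u → ∀ s, 0 < s → H u ≤ s →
      ∫ x, u x ^ (4 * n + 4) ≤ K * s ^ (2 * n + 2) := by
  obtain ⟨K, K0, hK⟩ := h
  obtain ⟨C, C0, hC⟩ := sobolev_plane
  set A : ℝ := C * (32 * (n + 1) ^ 2) with hA
  set D : ℝ := C * (8 * (n + 2) ^ 2) with hD
  have A0 : 0 ≤ A := by positivity
  have D0 : 0 ≤ D := by positivity
  set ε : ℝ := (2 * (A + 1))⁻¹ with hε
  have ε0 : 0 < ε := by positivity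
  have hAε : A * ε ≤ 1 / 2 := by
    rw [hε, ← div_eq_mul_inv, div_le_div_iff₀ (by positivity) (by norm_num)]
    linarith
  refine ⟨2 * (A * ((ε⁻¹) ^ n * K) + D * K ^ 2), by positivity, fun u hu s hs hH => ?_⟩
  have cu := (contDiff_u hu).continuous
  have cw := (contDiff_hardyQuot hu).continuous
  have ch := continuous_hardyField hu
  have I := hK u hu s hs hH
  have I0 : 0 ≤ ∫ x, u x ^ (2 * n + 2) :=
    integral_nonneg fun x => Even.pow_nonneg (by simp [parity_simps]) _
  set J := ∫ x, |u x| ^ (2 * n + 1) * ‖hardyField u x‖ with hJ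
  have J0 : 0 ≤ J := integral_nonneg fun x => by positivity
  set X := ∫ x, u x ^ (4 * n + 4) with hX
  have iX : Integrable fun x => u x ^ (4 * n + 4) :=
    integrable_of_zero hu (by fun_prop) fun x hx => by simp [u_zero hx]
  have iI : Integrable fun x => u x ^ (2 * n + 2) :=
    integrable_of_zero hu (by fun_prop) fun x hx => by simp [u_zero hx]
  have iY : Integrable fun x => u x ^ (4 * n + 2) :=
    integrable_of_zero hu (by fun_prop) fun x hx => by simp [u_zero hx]
  have g2 : ∫ x, ‖hardyField u x‖ ^ 2 ≤ s := by
    have := H_eq hu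
    have : 0 ≤ ∫ x, u x * hardyQuot u x :=
      integral_nonneg fun x => (sq_nonneg _).trans (u_mul_hardyQuot_ge hu x)
    linarith
  have Y0 : 0 ≤ ∫ x, u x ^ (4 * n + 2) :=
    integral_nonneg fun x => Even.pow_nonneg (by simp [parity_simps]) _
  have hJ2 : J ^ 2 ≤ s * ∫ x, u x ^ (4 * n + 2) := by
    have := cauchy_schwarz (f := fun x => |u x| ^ (2 * n + 1)) (g := fun x => ‖hardyField u x‖)
      (by fun_prop) (by fun_prop)
      (HasCompactSupport.intro hu.2.1.isCompact fun x hx => by simp [u_zero hx])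
      (HasCompactSupport.intro hu.2.1.isCompact fun x hx => by simp [hardyField_zero hx])
      (fun x => by positivity) (fun x => by positivity)
    have e : ∀ x, (|u x| ^ (2 * n + 1)) ^ 2 = u x ^ (4 * n + 2) := by
      intro x
      rw [← pow_mul, mul_comm, pow_mul, sq_abs, ← pow_mul]
      congr 1; ring
    simp_rw [e] at this
    calc J ^ 2 ≤ _ := this
      _ ≤ (∫ x, u x ^ (4 * n + 2)) * s := by gcongr
      _ = _ := mul_comm _ _
  have hY : s * ∫ x, u x ^ (4 * n + 2)
      ≤ ε * X + (ε⁻¹) ^ n * (s ^ (n + 1) * ∫ x, u x ^ (2 * n + 2)) := by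
    rw [hX, ← integral_const_mul, ← integral_const_mul, ← integral_const_mul, ← integral_const_mul,
      ← integral_add (iX.const_mul _) ((iI.const_mul _).const_mul _)]
    refine integral_mono (iY.const_mul _)
      ((iX.const_mul _).add ((iI.const_mul _).const_mul _)) fun x => ?_
    have := young_pow hs.le (sq_nonneg (u x)) ε0 n
    simp only [← pow_mul] at this
    rwa [show 2 * (2 * n + 1) = 4 * n + 2 by ring, show 2 * (2 * n + 2) = 4 * n + 4 by ring,
      show 2 * (n + 1) = 2 * n + 2 by ring] at this
  have hS := hC (fun y => u y ^ (2 * n + 2)) ((contDiff_u hu).pow _)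
    (HasCompactSupport.intro hu.2.1.isCompact fun x hx => by simp [u_zero hx])
  have eX : ∫ x, (u x ^ (2 * n + 2)) ^ 2 = X := by
    simp_rw [hX, ← pow_mul]
    congr 2; ext x; congr 1; ring
  rw [eX] at hS
  have hG := integral_fderiv_pow_le hu n
  have G0 : 0 ≤ ∫ x, ‖fderiv ℝ (fun y => u y ^ (2 * n + 2)) x‖ :=
    integral_nonneg fun x => norm_nonneg _
  have h1 : X ≤ A * J ^ 2 + D * (∫ x, u x ^ (2 * n + 2)) ^ 2 := by
    calc X ≤ _ := hS
      _ ≤ C * (4 * (n + 1) * J + 2 * (n + 2) * ∫ x, u x ^ (2 * n + 2)) ^ 2 := by gcongr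
      _ ≤ C * (2 * ((4 * (n + 1) * J) ^ 2 + (2 * (n + 2) * ∫ x, u x ^ (2 * n + 2)) ^ 2)) := by
        gcongr
        exact add_sq_le
      _ = _ := by rw [hA, hD]; ring
  have h2 : A * J ^ 2 ≤ 1 / 2 * X + A * ((ε⁻¹) ^ n * K) * s ^ (2 * n + 2) := by
    have X0 : 0 ≤ X := by rw [← eX]; exact integral_nonneg fun x => sq_nonneg _
    calc A * J ^ 2 ≤ A * (ε * X + (ε⁻¹) ^ n * (s ^ (n + 1) * (K * s ^ (n + 1)))) := by
          gcongr
          refine (hJ2.trans hY).trans ?_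
          gcongr
      _ = (A * ε) * X + A * ((ε⁻¹) ^ n * K) * s ^ (2 * n + 2) := by ring
      _ ≤ _ := by gcongr
  have h3 : D * (∫ x, u x ^ (2 * n + 2)) ^ 2 ≤ D * K ^ 2 * s ^ (2 * n + 2) := by
    calc _ ≤ D * (K * s ^ (n + 1)) ^ 2 := by gcongr
      _ = _ := by ring
  linarith

/-- Bounds for the moments of order `2, 4, 8, …`, starting from `∫ u² ≤ ∫ u w ≤ H u`. -/
lemma even_moment (k : ℕ) :
    ∃ K : ℝ, 0 ≤ K ∧ ∀ u, IsTest u → ∀ s, 0 < s → H u ≤ s →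
      ∫ x, u x ^ (2 * 2 ^ k) ≤ K * s ^ (2 ^ k) := by
  induction k with
  | zero =>
    refine ⟨1, zero_le_one, fun u hu s hs hH => ?_⟩
    have h1 : ∫ x, u x ^ 2 ≤ ∫ x, u x * hardyQuot u x := by
      have cu := (contDiff_u hu).continuous
      have cw := (contDiff_hardyQuot hu).continuous
      refine integral_mono ?_ ?_ (u_mul_hardyQuot_ge hu) <;>
      exact integrable_of_zero hu (by fun_prop) fun x hx => by simp [u_zero hx]
    have h2 := H_eq hu
    have h3 : 0 ≤ ∫ x, ‖hardyField u x‖ ^ 2 := integral_nonneg fun x => by positivity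
    simp
    linarith
  | succ k ih =>
    obtain ⟨n, hn⟩ : ∃ n, 2 ^ k = n + 1 := Nat.exists_eq_succ_of_ne_zero (by positivity)
    have e1 : 2 * 2 ^ k = 2 * n + 2 := by omega
    have e2 : 2 * 2 ^ (k + 1) = 4 * n + 4 := by rw [pow_succ]; omega
    have e3 : 2 ^ (k + 1) = 2 * n + 2 := by rw [pow_succ]; omega
    rw [e1, hn] at ih
    rw [e2, e3]
    exact even_moment_step n ih

/-- Refined Hardy inequality / embedding (Remark 1 and inequality (1.2)):
for every `p ∈ [1, ∞)` there is `C_p > 0` with `(∫_B |u|^p)^{2/p} ≤ C_p H(u)` for all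
`u ∈ C_c^∞(B)`; in particular (`p = 2`) there is `C > 0` with `∫_B u² ≤ C H(u)`. -/
theorem Lp_bound_by_hardy :
    (∀ p : ℝ, 1 ≤ p →
      ∃ Cp : ℝ, 0 < Cp ∧ ∀ u : E2 → ℝ, IsTest u →
        (∫ x in B2, |u x| ^ p) ^ (2 / p) ≤ Cp * H u) ∧
    ∃ C : ℝ, 0 < C ∧ ∀ u : E2 → ℝ, IsTest u →
      (∫ x in B2, (u x) ^ 2) ≤ C * H u := by
  have main : ∀ p : ℝ, 1 ≤ p →
      ∃ Cp : ℝ, 0 < Cp ∧ ∀ u : E2 → ℝ, IsTest u →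
        (∫ x in B2, |u x| ^ p) ^ (2 / p) ≤ Cp * H u := by
    intro p hp
    have p0 : 0 < p := by linarith
    obtain ⟨k, hk⟩ : ∃ k : ℕ, p ≤ 2 ^ k :=
      (pow_unbounded_of_one_lt p (by norm_num : (1 : ℝ) < 2)).imp fun _ h => h.le
    obtain ⟨K, K0, hK⟩ := even_moment k
    set V : ℝ := (volume : Measure E2).real B2 with hV
    have hVf : (volume : Measure E2) B2 ≠ ⊤ := measure_ball_lt_top.ne
    have V0 : 0 ≤ V := measureReal_nonneg
    refine ⟨(V + K + 1) ^ (2 / p), by positivity, fun u hu => ?_⟩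
    set C := (V + K + 1) ^ (2 / p) with hC
    have C0 : 0 < C := by positivity
    have H0 : 0 ≤ H u := by
      rw [H_eq hu]
      exact add_nonneg (integral_nonneg fun x => by positivity)
        (integral_nonneg fun x => (sq_nonneg _).trans (u_mul_hardyQuot_ge hu x))
    -- Comparing with every `s > H u` avoids dividing by `H u`, which vanishes for `u = 0`.
    rw [mul_comm, ← div_le_iff₀ C0]
    refine le_of_forall_gt_imp_ge_of_dense fun s hs => ?_
    rw [div_le_iff₀ C0]
    have s0 : 0 < s := H0.trans_lt hs
    have cu := (contDiff_u hu).continuous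
    have hM := hK u hu s s0 hs.le
    have iN : Integrable fun x => u x ^ (2 * 2 ^ k) :=
      integrable_of_zero hu (by fun_prop) fun x hx => by simp [u_zero hx]
    -- With `y = |u| / √s`, this is `y ^ p ≤ 1 + y ^ (2 * 2 ^ k)`.
    have pt : ∀ x, |u x| ^ p ≤ s ^ (p / 2) * (1 + (s ^ (2 ^ k))⁻¹ * u x ^ (2 * 2 ^ k)) := by
      intro x
      have q0 : 0 < √s := Real.sqrt_pos.mpr s0
      have e1 : |u x| = √s * (|u x| / √s) := by field_simp
      have e2 : (√s) ^ p = s ^ (p / 2) := by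
        rw [Real.sqrt_eq_rpow, ← Real.rpow_mul s0.le]; congr 1; ring
      have e3 : (s ^ (2 ^ k))⁻¹ * u x ^ (2 * 2 ^ k) = (|u x| / √s) ^ (2 * 2 ^ k) := by
        rw [div_pow, pow_mul (√s), Real.sq_sqrt s0.le, pow_mul |u x|, sq_abs, ← pow_mul,
          div_eq_inv_mul]
      have y0 : 0 ≤ |u x| / √s := by positivity
      rw [e3, e1, Real.mul_rpow q0.le y0, e2, ← e1]
      gcongr
      rcases le_total (|u x| / √s) 1 with hy | hy
      · have := Real.rpow_le_one y0 hy p0.le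
        have : 0 ≤ (|u x| / √s) ^ (2 * 2 ^ k) := by positivity
        linarith
      · have : (|u x| / √s) ^ p ≤ (|u x| / √s) ^ ((2 * 2 ^ k : ℕ) : ℝ) := by
          apply Real.rpow_le_rpow_of_exponent_le hy
          push_cast
          linarith
        rw [Real.rpow_natCast] at this
        linarith
    have ip : ∫ x in B2, |u x| ^ p ≤ s ^ (p / 2) * (V + K) := by
      have z : ∫ x in B2, u x ^ (2 * 2 ^ k) = ∫ x, u x ^ (2 * 2 ^ k) :=
        setIntegral_eq hu fun x hx => by simp [u_zero hx]
      have i1 : IntegrableOn (fun _ : E2 => (1 : ℝ)) B2 := integrableOn_const hVf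
      calc ∫ x in B2, |u x| ^ p
          ≤ ∫ x in B2, s ^ (p / 2) * (1 + (s ^ (2 ^ k))⁻¹ * u x ^ (2 * 2 ^ k)) := by
            refine integral_mono_of_nonneg (ae_of_all _ fun x => by positivity)
              ((i1.add (iN.integrableOn.const_mul _)).const_mul _) (ae_of_all _ pt)
        _ = s ^ (p / 2) * (V + (s ^ (2 ^ k))⁻¹ * ∫ x, u x ^ (2 * 2 ^ k)) := by
            rw [integral_const_mul, integral_add i1 (iN.integrableOn.const_mul _),
              integral_const_mul, z]
            simp [hV]
        _ ≤ s ^ (p / 2) * (V + (s ^ (2 ^ k))⁻¹ * (K * s ^ (2 ^ k))) := by gcongr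
        _ = _ := by
          have : s ^ (2 ^ k) ≠ 0 := by positivity
          field_simp
    have ip0 : 0 ≤ ∫ x in B2, |u x| ^ p := integral_nonneg fun x => by positivity
    calc (∫ x in B2, |u x| ^ p) ^ (2 / p)
        ≤ (s ^ (p / 2) * (V + K + 1)) ^ (2 / p) := by
          refine Real.rpow_le_rpow ip0 (ip.trans ?_) (by positivity)
          exact mul_le_mul_of_nonneg_left (by linarith) (by positivity)
      _ = s * C := by
          rw [Real.mul_rpow (by positivity) (by positivity), ← Real.rpow_mul s0.le,
            show p / 2 * (2 / p) = 1 by field_simp, Real.rpow_one]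
  refine ⟨main, ?_⟩
  obtain ⟨C, C0, hC⟩ := main 2 (by norm_num)
  refine ⟨C, C0, fun u hu => ?_⟩
  simpa using hC u hu
end
end
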